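/- arXiv:1906.09778 — 3 statements merged into one kernel-verified Lean document; each statement's English description precedes it below -/
import Mathlib

section
/- Existence and uniqueness for the Dirichlet problem: let Ω ⊂ ℝⁿ be a bounded open set satisfying a uniform exterior cone condition, let g be continuous on ∂Ω, let f be continuous and bounded in Ω, and let M_a be a weighted partial trace operator of class 𝒜. Then the Dirichlet problem M_a(D²u) = f in Ω, u = g on ∂Ω, has a unique viscosity solution u ∈ C(Ω̄). -/
open Set Metric MeasureTheory Filter

noncomputable section

/-- Euclidean `n`-space `ℝⁿ`. -/
abbrev En (n : ℕ) : Type := EuclideanSpace ℝ (Fin n)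

/-- The eigenvalues of a (symmetric) matrix, arranged in nondecreasing order. -/
noncomputable def sortedEig {n : ℕ} (X : Matrix (Fin n) (Fin n) ℝ) : Fin n → ℝ :=
  if hX : X.IsHermitian then fun i => hX.eigenvalues (Tuple.sort hX.eigenvalues i) else 0

/-- The weighted partial trace operator `M_a(X) = Σ a_i λ_i(X)`. -/
noncomputable def Ma {n : ℕ} (a : Fin n → ℝ) (X : Matrix (Fin n) (Fin n) ℝ) : ℝ :=
  ∑ i, a i * sortedEig X i

/-- The last index of `Fin n`. -/
def lastIdx (n : ℕ) [NeZero n] : Fin n :=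
  ⟨n - 1, Nat.sub_lt (Nat.pos_of_ne_zero (NeZero.ne n)) Nat.one_pos⟩

/-- The class 𝒜̄ : all weights nonnegative, some weight positive. -/
def ClassAbar {n : ℕ} (a : Fin n → ℝ) : Prop := (∀ i, 0 ≤ a i) ∧ ∃ i, 0 < a i

/-- The class 𝒜 : nonnegative weights with `a 1 > 0` and `a n > 0`. -/
def ClassA {n : ℕ} [NeZero n] (a : Fin n → ℝ) : Prop :=
  (∀ i, 0 ≤ a i) ∧ 0 < a 0 ∧ 0 < a (lastIdx n)

/-- The class 𝒜₁ : nonnegative weights with `a 1 > 0`. -/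
def ClassA1 {n : ℕ} [NeZero n] (a : Fin n → ℝ) : Prop := (∀ i, 0 ≤ a i) ∧ 0 < a 0

/-- The class 𝒜ₙ : nonnegative weights with `a n > 0`. -/
def ClassAn {n : ℕ} [NeZero n] (a : Fin n → ℝ) : Prop :=
  (∀ i, 0 ≤ a i) ∧ 0 < a (lastIdx n)

/-- `a* = min (a 1) (a n)`. -/
noncomputable def aStar {n : ℕ} [NeZero n] (a : Fin n → ℝ) : ℝ := min (a 0) (a (lastIdx n))

/-- `â_j = (a 1 + ⋯ + a n) - a j`. -/
noncomputable def hatA {n : ℕ} (a : Fin n → ℝ) (j : Fin n) : ℝ := (∑ i, a i) - a j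

/-- The Hessian matrix of `φ` at `x`. -/
noncomputable def hess {n : ℕ} (φ : En n → ℝ) (x : En n) : Matrix (Fin n) (Fin n) ℝ :=
  fun i j => iteratedFDeriv ℝ 2 φ x ![EuclideanSpace.single i 1, EuclideanSpace.single j 1]

/-- The Hessian matrix of `φ` at `x`, with derivatives taken within `Ω`. -/
noncomputable def hessOn {n : ℕ} (Ω : Set (En n)) (φ : En n → ℝ) (x : En n) :
    Matrix (Fin n) (Fin n) ℝ :=
  fun i j =>
    iteratedFDerivWithin ℝ 2 φ Ω x ![EuclideanSpace.single i 1, EuclideanSpace.single j 1]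

/-- `u` is a viscosity subsolution of `M_a(D²u) = f` in `Ω`. -/
def IsViscSubsol {n : ℕ} (a : Fin n → ℝ) (Ω : Set (En n)) (f u : En n → ℝ) : Prop :=
  ∀ x₀ ∈ Ω, ∀ φ : En n → ℝ, ContDiff ℝ 2 φ →
    IsLocalMaxOn (fun x => u x - φ x) Ω x₀ → f x₀ ≤ Ma a (hess φ x₀)

/-- `u` is a viscosity supersolution of `M_a(D²u) = f` in `Ω`. -/
def IsViscSupersol {n : ℕ} (a : Fin n → ℝ) (Ω : Set (En n)) (f u : En n → ℝ) : Prop :=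
  ∀ x₀ ∈ Ω, ∀ φ : En n → ℝ, ContDiff ℝ 2 φ →
    IsLocalMinOn (fun x => u x - φ x) Ω x₀ → Ma a (hess φ x₀) ≤ f x₀

/-- `u` is a (continuous) viscosity solution of `M_a(D²u) = f` in `Ω`. -/
def IsViscSolution {n : ℕ} (a : Fin n → ℝ) (Ω : Set (En n)) (f u : En n → ℝ) : Prop :=
  ContinuousOn u Ω ∧ IsViscSubsol a Ω f u ∧ IsViscSupersol a Ω f u

/-- The `L^p` norm of `f` on `D`. -/
noncomputable def lpNormOn {n : ℕ} (p : ℝ) (D : Set (En n)) (f : En n → ℝ) : ℝ :=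
  (∫ x in D, |f x| ^ p) ^ (1 / p)

/-- The sup norm of `f` on `D`. -/
noncomputable def supAbsOn {n : ℕ} (D : Set (En n)) (f : En n → ℝ) : ℝ :=
  sSup ((fun x => |f x|) '' D)

/-- The Hölder seminorm `[h]_{β,D}`. -/
noncomputable def holderSemi {n : ℕ} (β : ℝ) (D : Set (En n)) (h : En n → ℝ) : ℝ :=
  sSup {r | ∃ x ∈ D, ∃ y ∈ D, x ≠ y ∧ r = |h x - h y| / ‖x - y‖ ^ β}

/-- The Hölder norm `‖g‖_{C^β(D)} = sup_D |g| + [g]_{β,D}`. -/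
noncomputable def cBetaNorm {n : ℕ} (β : ℝ) (D : Set (En n)) (g : En n → ℝ) : ℝ :=
  supAbsOn D g + holderSemi β D g

/-- `g` is `β`-Hölder continuous on `D`. -/
def HolderOn {n : ℕ} (β : ℝ) (D : Set (En n)) (g : En n → ℝ) : Prop :=
  ∃ K : ℝ, ∀ x ∈ D, ∀ y ∈ D, |g x - g y| ≤ K * ‖x - y‖ ^ β

/-- The `C^{1,β}(D)` norm: `sup|g| + sup|Dg| + [Dg]_{β,D}`. -/
noncomputable def c1BetaNorm {n : ℕ} (β : ℝ) (D : Set (En n)) (g : En n → ℝ) : ℝ :=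
  supAbsOn D g + sSup ((fun x => ‖fderiv ℝ g x‖) '' D) +
    sSup {r | ∃ x ∈ D, ∃ y ∈ D, x ≠ y ∧ r = ‖fderiv ℝ g x - fderiv ℝ g y‖ / ‖x - y‖ ^ β}

/-- `g ∈ C^{1,β}(D)`: differentiable with `β`-Hölder derivative on `D`. -/
def C1HolderOn {n : ℕ} (β : ℝ) (D : Set (En n)) (g : En n → ℝ) : Prop :=
  ContDiff ℝ 1 g ∧ ∃ K : ℝ, ∀ x ∈ D, ∀ y ∈ D,
    ‖fderiv ℝ g x - fderiv ℝ g y‖ ≤ K * ‖x - y‖ ^ β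

/-- Uniform exterior sphere condition with radius `R`: every boundary point lies on the
boundary of a closed ball of radius `R` containing `Ω̄`. -/
def ExtSphere {n : ℕ} (Ω : Set (En n)) (R : ℝ) : Prop :=
  ∀ y ∈ frontier Ω, ∃ z : En n, dist y z = R ∧ closure Ω ⊆ closedBall z R

/-- The cone `Σ_θ = {x : xₙ ≥ |x| cos θ}`. -/
def coneSet (n : ℕ) [NeZero n] (θ : ℝ) : Set (En n) := {x | ‖x‖ * Real.cos θ ≤ x (lastIdx n)}

/-- Uniform exterior cone condition. -/
def ExtCone {n : ℕ} [NeZero n] (Ω : Set (En n)) : Prop :=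
  ∃ θ₀ ∈ Set.Ioo (0 : ℝ) Real.pi, ∃ r₀ > (0 : ℝ), ∀ y ∈ frontier Ω,
    ∃ O : En n ≃ₗᵢ[ℝ] En n,
      closure Ω ∩ ball y r₀ ⊆ (fun x => y + O x) '' coneSet n θ₀

/-- Uniform Lipschitz boundary with Lipschitz constant `L`: near each boundary point, in
suitable rotated coordinates, `Ω` is the region above the graph of an `L`-Lipschitz
function. -/
def LipschitzBoundary {n : ℕ} [NeZero n] (Ω : Set (En n)) (L : ℝ) : Prop :=
  ∃ r₀ > (0 : ℝ), ∀ y ∈ frontier Ω, ∃ O : En n ≃ₗᵢ[ℝ] En n, ∃ ψ : En n → ℝ,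
    LipschitzWith (Real.toNNReal L) ψ ∧
    ∀ x ∈ ball (0 : En n) r₀,
      (y + O x ∈ Ω ↔ ψ (x - EuclideanSpace.single (lastIdx n) (x (lastIdx n))) < x (lastIdx n))

/-- The open cube of edge `ℓ` centered at the origin. -/
def cube (n : ℕ) (ℓ : ℝ) : Set (En n) := {x | ∀ i, |x i| < ℓ / 2}

/-- The upper concave envelope of `u` in `Ω`: the smallest concave function `≥ u` in `Ω`. -/
noncomputable def upperEnvelope {n : ℕ} (Ω : Set (En n)) (u : En n → ℝ) : En n → ℝ :=
  fun x => sInf {t | ∃ φ : En n → ℝ, ConcaveOn ℝ Ω φ ∧ (∀ z ∈ Ω, u z ≤ φ z) ∧ t = φ x}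

/-- The lower convex envelope of `u` in `Ω`: the largest convex function `≤ u` in `Ω`. -/
noncomputable def lowerEnvelope {n : ℕ} (Ω : Set (En n)) (u : En n → ℝ) : En n → ℝ :=
  fun x => sSup {t | ∃ φ : En n → ℝ, ConvexOn ℝ Ω φ ∧ (∀ z ∈ Ω, φ z ≤ u z) ∧ t = φ x}

end

/-! ### Linear algebra -/

/-- The quadratic form of a matrix. -/
def qf {n : ℕ} (X : Matrix (Fin n) (Fin n) ℝ) (v : En n) : ℝ := ∑ i, ∑ j, X i j * v i * v j

theorem qf_eq_inner {n : ℕ} (X : Matrix (Fin n) (Fin n) ℝ) (v : En n) :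
    qf X v = inner ℝ v (Matrix.toEuclideanLin X v) := by
  simp only [qf, PiLp.inner_apply, Matrix.toLpLin_apply, Matrix.mulVec, dotProduct]
  refine Finset.sum_congr rfl fun i _ => ?_
  simp only [RCLike.inner_apply, conj_trivial, Finset.sum_mul]
  refine Finset.sum_congr rfl fun j _ => ?_
  ring

theorem sortedEig_mono {n : ℕ} (X : Matrix (Fin n) (Fin n) ℝ) : Monotone (sortedEig X) := by
  unfold sortedEig
  split_ifs with h
  · exact Tuple.monotone_sort h.eigenvalues
  · exact monotone_const

theorem exists_basis {n : ℕ} {X : Matrix (Fin n) (Fin n) ℝ} (hX : X.IsHermitian) :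
    ∃ b : OrthonormalBasis (Fin n) ℝ (En n),
      ∀ v, qf X v = ∑ i, sortedEig X i * (inner ℝ (b i) v) ^ 2 := by
  refine ⟨hX.eigenvectorBasis.reindex (Tuple.sort hX.eigenvalues).symm, fun v => ?_⟩
  set b := hX.eigenvectorBasis.reindex (Tuple.sort hX.eigenvalues).symm with hb
  have hT : ∀ i, Matrix.toEuclideanLin X (b i) = sortedEig X i • b i := by
    intro i
    have := hX.mulVec_eigenvectorBasis (Tuple.sort hX.eigenvalues i)
    have hbi : b i = hX.eigenvectorBasis (Tuple.sort hX.eigenvalues i) := by simp [hb]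
    rw [hbi, Matrix.toLpLin_apply, this]
    have hs : sortedEig X i = hX.eigenvalues (Tuple.sort hX.eigenvalues i) := by
      unfold sortedEig
      rw [dif_pos hX]
    rw [hs]
    rfl
  have hsym := Matrix.isSymmetric_toEuclideanLin_iff.mpr hX
  rw [qf_eq_inner, ← b.sum_inner_mul_inner]
  refine Finset.sum_congr rfl fun i _ => ?_
  rw [← hsym (b i) v, hT i, inner_smul_left, real_inner_comm]
  simp
  ring

theorem normsq_basis {n : ℕ} (b : OrthonormalBasis (Fin n) ℝ (En n)) (v : En n) :
    ‖v‖ ^ 2 = ∑ i, (inner ℝ (b i) v) ^ 2 := by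
  have := b.sum_sq_norm_inner_right v
  simpa using this.symm

theorem sortedEig_le {n : ℕ} {X Y : Matrix (Fin n) (Fin n) ℝ} (hX : X.IsHermitian)
    (hY : Y.IsHermitian) (c : ℝ) (h : ∀ v, qf X v ≤ qf Y v + c * ‖v‖ ^ 2) (i : Fin n) :
    sortedEig X i ≤ sortedEig Y i + c := by
  obtain ⟨bX, hbX⟩ := exists_basis hX
  obtain ⟨bY, hbY⟩ := exists_basis hY
  let T : En n →ₗ[ℝ] ({j : Fin n // j ≠ i} → ℝ) :=
    LinearMap.pi fun j => if j.1 < i then (innerSL ℝ (bX j.1)).toLinearMap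
      else (innerSL ℝ (bY j.1)).toLinearMap
  have hker : LinearMap.ker T ≠ ⊥ := by
    apply LinearMap.ker_ne_bot_of_finrank_lt
    have : 0 < n := i.pos
    simp
    omega
  obtain ⟨v, hv, hv0⟩ := (Submodule.ne_bot_iff _).1 hker
  have hvj : ∀ j, j ≠ i → (if j < i then (inner ℝ (bX j) v : ℝ) else inner ℝ (bY j) v) = 0 := by
    intro j hj
    have := congrFun (LinearMap.mem_ker.1 hv) ⟨j, hj⟩
    simp only [T, LinearMap.pi_apply] at this
    split_ifs at this ⊢ <;> simpa using this
  have h1 : sortedEig X i * ‖v‖ ^ 2 ≤ qf X v := by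
    rw [hbX, normsq_basis bX, Finset.mul_sum]
    refine Finset.sum_le_sum fun j _ => ?_
    by_cases hj : j < i
    · have := hvj j hj.ne
      rw [if_pos hj] at this
      simp [this]
    · exact mul_le_mul_of_nonneg_right (sortedEig_mono X (not_lt.1 hj)) (sq_nonneg _)
  have h2 : qf Y v ≤ sortedEig Y i * ‖v‖ ^ 2 := by
    rw [hbY, normsq_basis bY, Finset.mul_sum]
    refine Finset.sum_le_sum fun j _ => ?_
    by_cases hj : i < j
    · have := hvj j hj.ne'
      rw [if_neg hj.le.not_gt] at this
      simp [this]
    · exact mul_le_mul_of_nonneg_right (sortedEig_mono Y (not_lt.1 hj)) (sq_nonneg _)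
  have h3 := h v
  have h4 : 0 < ‖v‖ ^ 2 := by positivity
  by_contra hcon
  push Not at hcon
  nlinarith [mul_lt_mul_of_pos_right hcon h4]

theorem Ma_le {n : ℕ} {a : Fin n → ℝ} (ha : ∀ i, 0 ≤ a i)
    {X Y : Matrix (Fin n) (Fin n) ℝ} (hX : X.IsHermitian)
    (hY : Y.IsHermitian) (c : ℝ) (h : ∀ v, qf X v ≤ qf Y v + c * ‖v‖ ^ 2) :
    Ma a X ≤ Ma a Y + c * ∑ i, a i := by
  unfold Ma
  rw [Finset.mul_sum, ← Finset.sum_add_distrib]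
  refine Finset.sum_le_sum fun i _ => ?_
  have := mul_le_mul_of_nonneg_left (sortedEig_le hX hY c h i) (ha i)
  linarith

theorem Ma_le_of_bound {n : ℕ} [NeZero n] {a : Fin n → ℝ} (ha : ClassA a)
    {X : Matrix (Fin n) (Fin n) ℝ} (hX : X.IsHermitian) (c b : ℝ)
    (h : ∀ v, qf X v ≤ c * ‖v‖ ^ 2) (e : En n) (he : qf X e ≤ (c - b) * ‖e‖ ^ 2) (he0 : e ≠ 0) :
    Ma a X ≤ c * (∑ i, a i) - b * a 0 := by
  have h0 : ∀ i, sortedEig X i ≤ c := by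
    intro i
    obtain ⟨bX, hbX⟩ := exists_basis hX
    have := h (bX i)
    rw [hbX] at this
    simp [bX.inner_eq_ite] at this
    exact this
  have h1 : sortedEig X 0 ≤ c - b := by
    obtain ⟨bX, hbX⟩ := exists_basis hX
    have h1 : sortedEig X 0 * ‖e‖ ^ 2 ≤ qf X e := by
      rw [hbX, normsq_basis bX, Finset.mul_sum]
      refine Finset.sum_le_sum fun j _ => ?_
      exact mul_le_mul_of_nonneg_right (sortedEig_mono X (Fin.zero_le j)) (sq_nonneg _)
    have h4 : 0 < ‖e‖ ^ 2 := by positivity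
    exact le_of_mul_le_mul_right (h1.trans he) h4
  unfold Ma
  have : ∀ i, a i * sortedEig X i ≤ a i * c - (if i = 0 then b * a 0 else 0) := by
    intro i
    split_ifs with hi
    · subst hi
      nlinarith [ha.2.1]
    · have := mul_le_mul_of_nonneg_left (h0 i) (ha.1 i)
      linarith
  refine (Finset.sum_le_sum fun i _ => this i).trans ?_
  rw [Finset.sum_sub_distrib, ← Finset.sum_mul]
  simp
  linarith

theorem le_lastIdx {n : ℕ} [NeZero n] (i : Fin n) : i ≤ lastIdx n := by
  have := i.2
  simp only [lastIdx, Fin.le_def]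
  omega

theorem le_Ma_of_bound {n : ℕ} [NeZero n] {a : Fin n → ℝ} (ha : ClassA a)
    {X : Matrix (Fin n) (Fin n) ℝ} (hX : X.IsHermitian) (c b : ℝ)
    (h : ∀ v, -c * ‖v‖ ^ 2 ≤ qf X v) (e : En n) (he : (b - c) * ‖e‖ ^ 2 ≤ qf X e) (he0 : e ≠ 0) :
    b * a (lastIdx n) - c * (∑ i, a i) ≤ Ma a X := by
  have h0 : ∀ i, -c ≤ sortedEig X i := by
    intro i
    obtain ⟨bX, hbX⟩ := exists_basis hX
    have := h (bX i)
    rw [hbX] at this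
    simp [bX.inner_eq_ite] at this
    linarith
  have h1 : b - c ≤ sortedEig X (lastIdx n) := by
    obtain ⟨bX, hbX⟩ := exists_basis hX
    have h1 : qf X e ≤ sortedEig X (lastIdx n) * ‖e‖ ^ 2 := by
      rw [hbX, normsq_basis bX, Finset.mul_sum]
      refine Finset.sum_le_sum fun j _ => ?_
      exact mul_le_mul_of_nonneg_right (sortedEig_mono X (le_lastIdx j)) (sq_nonneg _)
    have h4 : 0 < ‖e‖ ^ 2 := by positivity
    exact le_of_mul_le_mul_right (he.trans h1) h4
  unfold Ma
  have : ∀ i, a i * (-c) + (if i = lastIdx n then b * a (lastIdx n) else 0) ≤ a i * sortedEig X i := by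
    intro i
    split_ifs with hi
    · subst hi
      nlinarith [ha.2.2]
    · have := mul_le_mul_of_nonneg_left (h0 i) (ha.1 i)
      linarith
  refine le_trans ?_ (Finset.sum_le_sum fun i _ => this i)
  rw [Finset.sum_add_distrib, ← Finset.sum_mul]
  simp
  linarith

theorem sum_pos_of_classA {n : ℕ} [NeZero n] {a : Fin n → ℝ} (ha : ClassA a) : 0 < ∑ i, a i :=
  Finset.sum_pos' (fun i _ => ha.1 i) ⟨0, Finset.mem_univ _, ha.2.1⟩

/-! ### Hessians -/

theorem qf_hess {n : ℕ} (φ : En n → ℝ) (x v : En n) :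
    qf (hess φ x) v = fderiv ℝ (fderiv ℝ φ) x v v := by
  have hv : v = ∑ i, v i • EuclideanSpace.single i (1 : ℝ) := by
    ext j
    simp [Finset.sum_apply, Pi.single_apply]
  conv_rhs => rw [hv]
  simp only [map_sum, map_smul, _root_.sum_apply, _root_.smul_apply,
    smul_eq_mul, qf, hess, iteratedFDeriv_two_apply]
  rw [Finset.sum_comm]
  refine Finset.sum_congr rfl fun i _ => ?_
  rw [Finset.mul_sum]
  refine Finset.sum_congr rfl fun j _ => ?_
  simp
  ring

theorem hess_herm {n : ℕ} {φ : En n → ℝ} (hφ : ContDiff ℝ 2 φ) (x : En n) :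
    (hess φ x).IsHermitian := by
  have h := (hφ.contDiffAt (x := x)).isSymmSndFDerivAt (by simp)
  refine Matrix.IsHermitian.ext fun i j => ?_
  simp only [hess, iteratedFDeriv_two_apply, star_trivial]
  exact h _ _

theorem fderiv_diff {n : ℕ} {φ : En n → ℝ} (hφ : ContDiff ℝ 2 φ) :
    Differentiable ℝ (fderiv ℝ φ) :=
  (hφ.fderiv_right (m := 1) (by norm_num)).differentiable (by norm_num)

theorem hasDerivAt_line {n : ℕ} {φ : En n → ℝ} (hφ : ContDiff ℝ 2 φ) (x v : En n) (t : ℝ) :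
    HasDerivAt (fun t : ℝ => φ (x + t • v)) (fderiv ℝ φ (x + t • v) v) t := by
  have h1 : HasDerivAt (fun t : ℝ => x + t • v) v t := by
    simpa using ((hasDerivAt_id t).smul_const v).const_add x
  exact ((hφ.differentiable (by norm_num)) (x + t • v)).hasFDerivAt.comp_hasDerivAt t h1

theorem hasDerivAt_line2 {n : ℕ} {φ : En n → ℝ} (hφ : ContDiff ℝ 2 φ) (x v : En n) :
    HasDerivAt (fun t : ℝ => fderiv ℝ φ (x + t • v) v) (qf (hess φ x) v) 0 := by
  have h1 : HasDerivAt (fun t : ℝ => x + t • v) v 0 := by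
    simpa using ((hasDerivAt_id (0 : ℝ)).smul_const v).const_add x
  have h2 : HasFDerivAt (fderiv ℝ φ) (fderiv ℝ (fderiv ℝ φ) x) (x + (0 : ℝ) • v) := by
    simpa using (fderiv_diff hφ x).hasFDerivAt
  have h3 := h2.comp_hasDerivAt (0 : ℝ) h1
  have h4 := h3.clm_apply (hasDerivAt_const (0 : ℝ) v)
  rw [qf_hess]
  simpa using h4

theorem qf_hess_of_line {n : ℕ} {φ : En n → ℝ} (hφ : ContDiff ℝ 2 φ) (x v : En n) (l : ℝ → ℝ)
    (c : ℝ) (h1 : ∀ t : ℝ, HasDerivAt (fun t : ℝ => φ (x + t • v)) (l t) t)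
    (h2 : HasDerivAt l c 0) : qf (hess φ x) v = c := by
  have h3 : l = fun t : ℝ => fderiv ℝ φ (x + t • v) v := by
    funext t
    exact (h1 t).unique (hasDerivAt_line hφ x v t)
  rw [h3] at h2
  exact (hasDerivAt_line2 hφ x v).unique h2

theorem qf_hess_nonpos {n : ℕ} {φ : En n → ℝ} (hφ : ContDiff ℝ 2 φ) {x : En n}
    (hx : IsLocalMax φ x) (v : En n) : qf (hess φ x) v ≤ 0 := by
  by_contra hpos
  push Not at hpos
  set l : ℝ → ℝ := fun t => φ (x + t • v) with hl
  have hmax : IsLocalMax l 0 := by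
    have hc : ContinuousAt (fun t : ℝ => x + t • v) 0 := by fun_prop
    have : Tendsto (fun t : ℝ => x + t • v) (nhds 0) (nhds x) := by
      simpa [ContinuousAt] using hc
    have h := this.eventually hx
    filter_upwards [h] with t ht
    simpa [hl] using ht
  have hd : deriv l = fun t => fderiv ℝ φ (x + t • v) v := by
    funext t
    exact (hasDerivAt_line hφ x v t).deriv
  have hdd : deriv (deriv l) 0 = qf (hess φ x) v := by
    rw [hd]
    exact (hasDerivAt_line2 hφ x v).deriv
  have hmin : IsLocalMin l 0 := isLocalMin_of_deriv_deriv_pos (by rw [hdd]; exact hpos)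
    hmax.deriv_eq_zero (hasDerivAt_line hφ x v 0).continuousAt
  have heq : l =ᶠ[nhds 0] fun _ => l 0 := by
    filter_upwards [hmax, hmin] with t h1 h2
    exact le_antisymm h1 h2
  have h0 : deriv (deriv l) 0 = 0 := by
    have := heq.deriv
    rw [this.deriv_eq]
    simp
  linarith

theorem qf_hess_sub {n : ℕ} {φ ψ : En n → ℝ} (hφ : ContDiff ℝ 2 φ) (hψ : ContDiff ℝ 2 ψ)
    (x v : En n) : qf (hess (fun z => φ z - ψ z) x) v = qf (hess φ x) v - qf (hess ψ x) v := by
  refine qf_hess_of_line (hφ.sub hψ) x v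
    (fun t => fderiv ℝ φ (x + t • v) v - fderiv ℝ ψ (x + t • v) v) _ (fun t => ?_) ?_
  · exact (hasDerivAt_line hφ x v t).sub (hasDerivAt_line hψ x v t)
  · exact (hasDerivAt_line2 hφ x v).sub (hasDerivAt_line2 hψ x v)

theorem qf_hess_add {n : ℕ} {φ ψ : En n → ℝ} (hφ : ContDiff ℝ 2 φ) (hψ : ContDiff ℝ 2 ψ)
    (x v : En n) : qf (hess (fun z => φ z + ψ z) x) v = qf (hess φ x) v + qf (hess ψ x) v := by
  refine qf_hess_of_line (hφ.add hψ) x v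
    (fun t => fderiv ℝ φ (x + t • v) v + fderiv ℝ ψ (x + t • v) v) _ (fun t => ?_) ?_
  · exact (hasDerivAt_line hφ x v t).add (hasDerivAt_line hψ x v t)
  · exact (hasDerivAt_line2 hφ x v).add (hasDerivAt_line2 hψ x v)

theorem Ma_hess_le_of_localMax {n : ℕ} {a : Fin n → ℝ} (ha : ∀ i, 0 ≤ a i) {φ ψ : En n → ℝ}
    (hφ : ContDiff ℝ 2 φ) (hψ : ContDiff ℝ 2 ψ) {x : En n}
    (h : IsLocalMax (fun z => φ z - ψ z) x) : Ma a (hess φ x) ≤ Ma a (hess ψ x) := by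
  have := Ma_le ha (hess_herm hφ x) (hess_herm hψ x) 0 (fun v => by
    have : qf (hess (fun z => φ z - ψ z) x) v ≤ 0 := qf_hess_nonpos (hφ.sub hψ) h v
    have h2 := qf_hess_sub hφ hψ x v
    linarith)
  simpa using this

theorem Ma_hess_continuous {n : ℕ} {a : Fin n → ℝ} (ha : ∀ i, 0 ≤ a i) {φ : En n → ℝ}
    (hφ : ContDiff ℝ 2 φ) : Continuous fun x => Ma a (hess φ x) := by
  have hc : Continuous (iteratedFDeriv ℝ 2 φ) := hφ.continuous_iteratedFDeriv (by norm_num)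
  have key : ∀ x y, Ma a (hess φ x) ≤ Ma a (hess φ y) +
      ‖iteratedFDeriv ℝ 2 φ x - iteratedFDeriv ℝ 2 φ y‖ * ∑ i, a i := by
    intro x y
    refine Ma_le ha (hess_herm hφ x) (hess_herm hφ y) _ fun v => ?_
    have h2 : ∀ z, qf (hess φ z) v = iteratedFDeriv ℝ 2 φ z ![v, v] := by
      intro z
      rw [qf_hess, iteratedFDeriv_two_apply]
      simp
    rw [h2, h2]
    have h1 := (le_abs_self _).trans (ContinuousMultilinearMap.le_opNorm
      (iteratedFDeriv ℝ 2 φ x - iteratedFDeriv ℝ 2 φ y) ![v, v])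
    simp [Fin.prod_univ_two] at h1
    nlinarith
  rw [continuous_iff_continuousAt]
  intro x
  have hlim : Tendsto (fun y => ‖iteratedFDeriv ℝ 2 φ y - iteratedFDeriv ℝ 2 φ x‖ * ∑ i, a i)
      (nhds x) (nhds 0) := by
    have : Continuous fun y => ‖iteratedFDeriv ℝ 2 φ y - iteratedFDeriv ℝ 2 φ x‖ * ∑ i, a i := by
      fun_prop
    simpa using this.tendsto x
  refine tendsto_iff_dist_tendsto_zero.2 (squeeze_zero (fun _ => dist_nonneg) (fun y => ?_) hlim)
  rw [Real.dist_eq, abs_le]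
  constructor
  · have := key x y
    rw [norm_sub_rev] at this
    linarith
  · linarith [key y x]

theorem normsq_line {n : ℕ} (x v : En n) (t : ℝ) :
    ‖x + t • v‖ ^ 2 = ‖x‖ ^ 2 + 2 * t * inner ℝ x v + t ^ 2 * ‖v‖ ^ 2 := by
  rw [norm_add_sq_real, inner_smul_right, norm_smul, mul_pow]
  simp
  ring

theorem contDiff_sqn {n : ℕ} (k : ℝ) (x₀ : En n) : ContDiff ℝ 2 fun z : En n => k * ‖z - x₀‖ ^ 2 :=
  contDiff_const.mul ((contDiff_id.sub contDiff_const).norm_sq ℝ)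

theorem qf_hess_sqn {n : ℕ} (k : ℝ) (x₀ x v : En n) :
    qf (hess (fun z : En n => k * ‖z - x₀‖ ^ 2) x) v = 2 * k * ‖v‖ ^ 2 := by
  refine qf_hess_of_line (contDiff_sqn k x₀) x v
    (fun t => k * (2 * inner ℝ (x - x₀) v + 2 * t * ‖v‖ ^ 2)) _ (fun t => ?_) ?_
  · have : (fun t : ℝ => k * ‖x + t • v - x₀‖ ^ 2) = fun t : ℝ =>
        k * (‖x - x₀‖ ^ 2 + 2 * t * inner ℝ (x - x₀) v + t ^ 2 * ‖v‖ ^ 2) := by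
      funext t
      rw [← normsq_line]
      congr 3
      abel
    rw [this]
    have h := ((((hasDerivAt_id t).const_mul 2).mul_const (inner ℝ (x - x₀) v)).const_add
      (‖x - x₀‖ ^ 2)).add (((hasDerivAt_id t).pow 2).mul_const (‖v‖ ^ 2)) |>.const_mul k
    refine HasDerivAt.congr_deriv h ?_
    simp
  · have h := ((((hasDerivAt_id (0 : ℝ)).const_mul 2).mul_const (‖v‖ ^ 2)).const_add
      (2 * inner ℝ (x - x₀) v)).const_mul k
    refine HasDerivAt.congr_deriv h ?_
    simp
    ring

/-- A quadratic polynomial centered at `x₀`. -/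
noncomputable def quadP {n : ℕ} (c k : ℝ) (l x₀ : En n) (B : En n →L[ℝ] En n) (z : En n) : ℝ :=
  c + inner ℝ l (z - x₀) + (1 / 2) * inner ℝ (B (z - x₀)) (z - x₀) + k * ‖z - x₀‖ ^ 2

theorem contDiff_quadP {n : ℕ} (c k : ℝ) (l x₀ : En n) (B : En n →L[ℝ] En n) :
    ContDiff ℝ 2 (quadP c k l x₀ B) := by
  unfold quadP
  have h1 : ContDiff ℝ 2 fun z : En n => z - x₀ := contDiff_id.sub contDiff_const
  exact (((contDiff_const.add (contDiff_const.inner ℝ h1)).add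
    (contDiff_const.mul ((B.contDiff.comp h1).inner ℝ h1)))).add (contDiff_sqn k x₀)

theorem qf_hess_quadP {n : ℕ} (c k : ℝ) (l x₀ : En n) (B : En n →L[ℝ] En n) (v : En n) :
    qf (hess (quadP c k l x₀ B) x₀) v = inner ℝ (B v) v + 2 * k * ‖v‖ ^ 2 := by
  refine qf_hess_of_line (contDiff_quadP c k l x₀ B) x₀ v
    (fun t => inner ℝ l v + t * (inner ℝ (B v) v + 2 * k * ‖v‖ ^ 2)) _ (fun t => ?_) ?_
  · have : (fun t : ℝ => quadP c k l x₀ B (x₀ + t • v)) = fun t : ℝ =>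
        c + t * inner ℝ l v + t ^ 2 * ((1 / 2) * inner ℝ (B v) v + k * ‖v‖ ^ 2) := by
      funext t
      simp [quadP, inner_smul_left, inner_smul_right, norm_smul, mul_pow]
      ring
    rw [this]
    have h := (((hasDerivAt_id t).mul_const (inner ℝ l v)).const_add c).add
      (((hasDerivAt_id t).pow 2).mul_const ((1 / 2) * inner ℝ (B v) v + k * ‖v‖ ^ 2))
    refine HasDerivAt.congr_deriv h ?_
    simp
    ring
  · have h := ((hasDerivAt_id (0 : ℝ)).mul_const
      (inner ℝ (B v) v + 2 * k * ‖v‖ ^ 2)).const_add (inner ℝ l v)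
    refine HasDerivAt.congr_deriv h ?_
    simp

theorem contDiff_gauss {n : ℕ} (c d β : ℝ) (x₀ : En n) :
    ContDiff ℝ 2 fun z : En n => c + d * Real.exp (-β * ‖z - x₀‖ ^ 2) :=
  contDiff_const.add (contDiff_const.mul (contDiff_sqn (-β) x₀).exp)

theorem qf_hess_gauss {n : ℕ} (c d β : ℝ) (x₀ x v : En n) :
    qf (hess (fun z : En n => c + d * Real.exp (-β * ‖z - x₀‖ ^ 2)) x) v =
      d * Real.exp (-β * ‖x - x₀‖ ^ 2) * (4 * β ^ 2 * (inner ℝ (x - x₀) v) ^ 2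
        - 2 * β * ‖v‖ ^ 2) := by
  have h0 : ∀ t : ℝ, HasDerivAt (fun t : ℝ => -β * ‖x + t • v - x₀‖ ^ 2)
      (-β * (2 * inner ℝ (x - x₀) v + 2 * t * ‖v‖ ^ 2)) t := by
    intro t
    have : (fun t : ℝ => -β * ‖x + t • v - x₀‖ ^ 2) = fun t : ℝ =>
        -β * (‖x - x₀‖ ^ 2 + 2 * t * inner ℝ (x - x₀) v + t ^ 2 * ‖v‖ ^ 2) := by
      funext t
      rw [← normsq_line]
      congr 3
      abel
    rw [this]
    have h := ((((hasDerivAt_id t).const_mul 2).mul_const (inner ℝ (x - x₀) v)).const_add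
      (‖x - x₀‖ ^ 2)).add (((hasDerivAt_id t).pow 2).mul_const (‖v‖ ^ 2)) |>.const_mul (-β)
    refine HasDerivAt.congr_deriv h ?_
    simp
  refine qf_hess_of_line (contDiff_gauss c d β x₀) x v
    (fun t => d * (Real.exp (-β * ‖x + t • v - x₀‖ ^ 2) *
      (-β * (2 * inner ℝ (x - x₀) v + 2 * t * ‖v‖ ^ 2)))) _ (fun t => ?_) ?_
  · exact ((h0 t).exp.const_mul d).const_add c
  · have h2 := ((((hasDerivAt_id (0 : ℝ)).const_mul 2).mul_const (‖v‖ ^ 2)).const_add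
      (2 * inner ℝ (x - x₀) v)).const_mul (-β)
    have h := ((h0 0).exp.mul h2).const_mul d
    refine HasDerivAt.congr_deriv h ?_
    simp
    ring

/-! ### Alexandrov's theorem -/

theorem telescoping_bound (φ : ℝ → ℝ) (a b : ℝ)
    (h : ∀ s t, 0 ≤ s → s ≤ t → t ≤ 1 → |φ t - φ s| ≤ a * (t - s) + b * (t - s) ^ 2) :
    |φ 1 - φ 0| ≤ a := by
  have key : ∀ N : ℕ, |φ 1 - φ 0| ≤ a + b * (1 / ((N : ℝ) + 1)) := by
    intro N
    have hN : (0 : ℝ) < (N : ℝ) + 1 := by positivity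
    have ind : ∀ k : ℕ, k ≤ N + 1 → |φ (k / ((N : ℝ) + 1)) - φ 0| ≤
        k * (a * (1 / ((N : ℝ) + 1)) + b * (1 / ((N : ℝ) + 1)) ^ 2) := by
      intro k
      induction k with
      | zero => intro _; simp
      | succ k ih =>
        intro hk
        have h1 := ih (by omega)
        have hk' : (k : ℝ) + 1 ≤ (N : ℝ) + 1 := by exact_mod_cast hk
        have h2 := h (k / ((N : ℝ) + 1)) (((k + 1 : ℕ) : ℝ) / ((N : ℝ) + 1)) (by positivity)
          (by push_cast; gcongr; linarith) (by push_cast; rw [div_le_one hN]; exact hk')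
        have h3 : ((k + 1 : ℕ) : ℝ) / ((N : ℝ) + 1) - k / ((N : ℝ) + 1) = 1 / ((N : ℝ) + 1) := by
          push_cast; field_simp; ring
        rw [h3] at h2
        have h4 := abs_sub_le (φ (((k + 1 : ℕ) : ℝ) / ((N : ℝ) + 1))) (φ (k / ((N : ℝ) + 1))) (φ 0)
        push_cast at *
        linarith
    have h5 := ind (N + 1) le_rfl
    push_cast at h5
    rw [div_self hN.ne'] at h5
    refine h5.trans (le_of_eq ?_)
    field_simp
  have hlim : Tendsto (fun N : ℕ => a + b * (1 / ((N : ℝ) + 1))) atTop (nhds (a + b * 0)) :=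
    (tendsto_one_div_add_atTop_nhds_zero_nat.const_mul b).const_add a
  have := ge_of_tendsto' hlim key
  simpa using this

section Alex

variable {E : Type*} [NormedAddCommGroup E] [InnerProductSpace ℝ E] [FiniteDimensional ℝ E]

theorem subgrad_lip {G : E → ℝ} {q : E → E} {C : ℝ}
    (hq : ∀ x z, G x + inner ℝ (q x) (z - x) ≤ G z) (hC : ∀ x, ‖q x‖ ≤ C) (x z : E) :
    |G x - G z| ≤ C * ‖x - z‖ := by
  rw [abs_le]
  have h1 := hq x z
  have h2 := hq z x
  have h3 := (abs_le.1 (abs_real_inner_le_norm (q x) (z - x))).1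
  have h4 := (abs_le.1 (abs_real_inner_le_norm (q z) (x - z))).1
  have h5 := mul_le_mul_of_nonneg_right (hC x) (norm_nonneg (z - x))
  have h6 := mul_le_mul_of_nonneg_right (hC z) (norm_nonneg (x - z))
  rw [norm_sub_rev z x] at *
  constructor <;> linarith

theorem subgrad_convex {G : E → ℝ} {q : E → E}
    (hq : ∀ x z, G x + inner ℝ (q x) (z - x) ≤ G z) (x z : E) (t : ℝ) (h0 : 0 ≤ t) (h1 : t ≤ 1) :
    G (x + t • (z - x)) ≤ (1 - t) * G x + t * G z := by
  set p := x + t • (z - x) with hp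
  have e1 := hq p x
  have e2 := hq p z
  have i1 : x - p = -(t • (z - x)) := by rw [hp]; abel
  have i2 : z - p = (1 - t) • (z - x) := by rw [hp, sub_smul, one_smul]; abel
  rw [i1, inner_neg_right, inner_smul_right] at e1
  rw [i2, inner_smul_right] at e2
  nlinarith [mul_le_mul_of_nonneg_left e1 (sub_nonneg.2 h1), mul_le_mul_of_nonneg_left e2 h0]

theorem exists_resolvent {G : E → ℝ} {q : E → E} {C : ℝ}
    (hq : ∀ x z, G x + inner ℝ (q x) (z - x) ≤ G z) (hC : ∀ x, ‖q x‖ ≤ C) (y : E) :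
    ∃ j : E, ∀ z, G j + inner ℝ (y - j) (z - j) ≤ G z := by
  have hcont : Continuous G := by
    refine (LipschitzWith.of_dist_le_mul (K := C.toNNReal) fun x z => ?_).continuous
    rw [Real.dist_eq, dist_eq_norm]
    refine (subgrad_lip hq hC x z).trans ?_
    gcongr
    exact Real.le_coe_toNNReal C
  have hC0 : 0 ≤ C := (norm_nonneg _).trans (hC 0)
  have hF : Continuous fun z => G z + (1 / 2) * ‖z - y‖ ^ 2 := by fun_prop
  have hlow : ∀ z, (G y - C ^ 2 - 0) + ‖z - y‖ * (1 / 4 * ‖z - y‖) ≤ G z + (1 / 2) * ‖z - y‖ ^ 2 := by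
    intro z
    have := (abs_le.1 (subgrad_lip hq hC z y)).1
    nlinarith [sq_nonneg (‖z - y‖ - 2 * C)]
  have hcoer : Tendsto (fun z => G z + (1 / 2) * ‖z - y‖ ^ 2) (cocompact E) atTop := by
    refine tendsto_atTop_mono hlow ?_
    refine tendsto_atTop_add_const_left _ _ ?_
    have h1 : Tendsto (fun z => ‖z - y‖) (cocompact E) atTop := by
      have h2 : ∀ z : E, ‖z‖ + -‖y‖ ≤ ‖z - y‖ := fun z => by
        have := norm_sub_norm_le z y
        linarith
      exact tendsto_atTop_mono h2 (tendsto_atTop_add_const_right _ _ (tendsto_norm_cocompact_atTop))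
    exact h1.atTop_mul_atTop₀ (h1.const_mul_atTop (by norm_num))
  obtain ⟨j, hj⟩ := hF.exists_forall_le hcoer
  refine ⟨j, fun z => ?_⟩
  have key : ∀ t : ℝ, 0 < t → t ≤ 1 →
      G j + inner ℝ (y - j) (z - j) ≤ G z + t * ((1 / 2) * ‖z - j‖ ^ 2) := by
    intro t ht0 ht1
    have h1 := hj (j + t • (z - j))
    have h2 := subgrad_convex hq j z t ht0.le ht1
    have h3 : ‖j + t • (z - j) - y‖ ^ 2 =
        ‖j - y‖ ^ 2 - 2 * t * inner ℝ (y - j) (z - j) + t ^ 2 * ‖z - j‖ ^ 2 := by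
      have : j + t • (z - j) - y = t • (z - j) - (y - j) := by abel
      rw [this, norm_sub_sq_real, norm_smul, inner_smul_left, mul_pow, real_inner_comm,
        norm_sub_rev j y]
      simp
      ring
    rw [h3] at h1
    have h4 : t * (G j + inner ℝ (y - j) (z - j)) ≤ t * (G z + t * ((1 / 2) * ‖z - j‖ ^ 2)) := by
      nlinarith
    exact le_of_mul_le_mul_left h4 ht0
  have hlim : Tendsto (fun N : ℕ => G z + (1 / ((N : ℝ) + 1)) * ((1 / 2) * ‖z - j‖ ^ 2)) atTop
      (nhds (G z + 0 * ((1 / 2) * ‖z - j‖ ^ 2))) :=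
    (tendsto_one_div_add_atTop_nhds_zero_nat.mul_const _).const_add _
  have := ge_of_tendsto' hlim (fun N => key _ (by positivity) (by
    rw [div_le_one (by positivity)]
    have : (0 : ℝ) ≤ N := by positivity
    linarith))
  simpa using this

theorem resolvent_firm {G : E → ℝ} {y y' j j' : E}
    (h : ∀ z, G j + inner ℝ (y - j) (z - j) ≤ G z)
    (h' : ∀ z, G j' + inner ℝ (y' - j') (z - j') ≤ G z) :
    ‖j - j'‖ ^ 2 ≤ inner ℝ (j - j') (y - y') := by
  have e1 := h j'
  have e2 := h' j
  have e3 : (inner ℝ (y - j) (j' - j) : ℝ) = - inner ℝ (j - j') (y - j) := by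
    rw [real_inner_comm, ← neg_sub j j', inner_neg_left]
  have e4 : (inner ℝ (y' - j') (j - j') : ℝ) = inner ℝ (j - j') (y' - j') := real_inner_comm _ _
  have e5 : (inner ℝ (j - j') (y - y') : ℝ) =
      inner ℝ (j - j') (y - j) - inner ℝ (j - j') (y' - j') + inner ℝ (j - j') (j - j') := by
    rw [← inner_sub_right, ← inner_add_right]
    congr 1
    abel
  rw [e5, real_inner_self_eq_norm_sq]
  linarith

/-- First order expansion of the subgradient at a good point. -/
theorem subgrad_expansion {J : E → E} {q : E → E}
    (hfirm : ∀ y y', ‖J y - J y'‖ ^ 2 ≤ inner ℝ (J y - J y') (y - y'))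
    (hJq : ∀ x, J (x + q x) = x) (x₀ : E) (D T : E →L[ℝ] E)
    (hD : HasFDerivAt J D (x₀ + q x₀)) (hT : ∀ h, T (D h) = h) (σ : ℝ) (hσ : 0 < σ) :
    ∃ ρ > 0, ∀ x, ‖x - x₀‖ < ρ → ‖q x - q x₀ - (T - 1) (x - x₀)‖ ≤ σ * ‖x - x₀‖ := by
  set y₀ := x₀ + q x₀ with hy₀
  set K := ‖T‖ + 1 with hK
  have hK0 : 0 < K := by positivity
  have hTK : ∀ h, ‖T h‖ ≤ K * ‖h‖ := fun h =>
    (T.le_opNorm h).trans (mul_le_mul_of_nonneg_right (by linarith) (norm_nonneg h))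
  obtain ⟨τ, hτ0, hτ1, hτ2⟩ : ∃ τ > 0, K * τ ≤ 1 / 2 ∧ 2 * K ^ 2 * τ ≤ σ := by
    refine ⟨min (1 / (2 * K)) (σ / (2 * K ^ 2)), by positivity, ?_, ?_⟩
    · calc K * min (1 / (2 * K)) (σ / (2 * K ^ 2)) ≤ K * (1 / (2 * K)) := by
            gcongr; exact min_le_left _ _
        _ = 1 / 2 := by field_simp
    · calc 2 * K ^ 2 * min (1 / (2 * K)) (σ / (2 * K ^ 2)) ≤ 2 * K ^ 2 * (σ / (2 * K ^ 2)) := by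
            gcongr; exact min_le_right _ _
        _ = σ := by field_simp
  have hexp := (hasFDerivAt_iff_isLittleO.1 hD).def hτ0
  obtain ⟨s, hs0, hs⟩ := Metric.eventually_nhds_iff_ball.1 hexp
  -- work with radius `s / 2`
  set r := s / 2 with hr
  have hr0 : 0 < r := by positivity
  have hloc : ∀ y, ‖y - y₀‖ ≤ r → ‖J y - J y₀ - D (y - y₀)‖ ≤ τ * ‖y - y₀‖ := fun y hy =>
    hs y (by rw [mem_ball, dist_eq_norm]; linarith)
  have hDlow : ∀ h, ‖h‖ ≤ K * ‖D h‖ := fun h => by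
    have := hTK (D h)
    rwa [hT h] at this
  have hJlow : ∀ y, ‖y - y₀‖ ≤ r → ‖y - y₀‖ ≤ 2 * K * ‖J y - J y₀‖ := by
    intro y hy
    have h1 := hloc y hy
    have h2 := hDlow (y - y₀)
    have h3 : ‖D (y - y₀)‖ ≤ ‖J y - J y₀‖ + τ * ‖y - y₀‖ := by
      have := norm_sub_norm_le (D (y - y₀)) (J y - J y₀)
      rw [norm_sub_rev (D (y - y₀)) (J y - J y₀)] at this
      linarith
    have h4 := mul_le_mul_of_nonneg_left h3 hK0.le
    nlinarith [norm_nonneg (y - y₀)]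
  have hfar : ∀ y, ‖J y - J y₀‖ < r / (4 * K ^ 2) → ‖y - y₀‖ ≤ r := by
    intro y hy
    by_contra hcon
    push Not at hcon
    have hd : 0 < ‖y - y₀‖ := hr0.trans hcon
    set h := (r / ‖y - y₀‖) • (y - y₀) with hh
    have hhn : ‖h‖ = r := by
      rw [hh, norm_smul, Real.norm_of_nonneg (by positivity)]
      field_simp
    have h1 := hJlow (y₀ + h) (by simp [hhn])
    have h2 := hfirm (y₀ + h) y₀
    have h3 := hfirm y (y₀ + h)
    simp only [add_sub_cancel_left, hhn] at h1 h2
    have h4 : y - (y₀ + h) = (‖y - y₀‖ / r - 1) • h := by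
      rw [hh, smul_smul, sub_mul, sub_smul]
      have e1 : ‖y - y₀‖ / r * (r / ‖y - y₀‖) = 1 := by field_simp
      rw [e1, one_smul, one_mul]
      abel
    have h5 : 0 < ‖y - y₀‖ / r - 1 := by
      rw [sub_pos, one_lt_div hr0]
      exact hcon
    rw [h4, inner_smul_right] at h3
    have h6 : 0 ≤ inner ℝ (J y - J (y₀ + h)) h := by
      by_contra hneg
      push Not at hneg
      nlinarith [mul_neg_of_pos_of_neg h5 hneg, sq_nonneg ‖J y - J (y₀ + h)‖]
    have h7 : (inner ℝ (J y - J y₀) h : ℝ) =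
        inner ℝ (J y - J (y₀ + h)) h + inner ℝ (J (y₀ + h) - J y₀) h := by
      rw [← inner_add_left]
      congr 1
      abel
    have h8 := real_inner_le_norm (J y - J y₀) h
    rw [hhn] at h8
    have h9 : r ^ 2 / (4 * K ^ 2) ≤ ‖J (y₀ + h) - J y₀‖ ^ 2 := by
      rw [div_le_iff₀ (by positivity)]
      have := pow_le_pow_left₀ hr0.le h1 2
      nlinarith
    have h10 : r / (4 * K ^ 2) * r ≤ ‖J y - J y₀‖ * r := by
      have : r / (4 * K ^ 2) * r = r ^ 2 / (4 * K ^ 2) := by ring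
      linarith
    have := le_of_mul_le_mul_right h10 hr0
    linarith
  refine ⟨r / (4 * K ^ 2), by positivity, fun x hx => ?_⟩
  set y := x + q x with hy
  have hJy : J y = x := hJq x
  have hJy0 : J y₀ = x₀ := hJq x₀
  have hyr : ‖y - y₀‖ ≤ r := hfar y (by rw [hJy, hJy0]; exact hx)
  have h1 := hloc y hyr
  have h2 := hJlow y hyr
  rw [hJy, hJy0] at h1 h2
  have h3 := hTK (x - x₀ - D (y - y₀))
  rw [map_sub, hT] at h3
  have h4 : q x - q x₀ - (T - 1) (x - x₀) = -(T (x - x₀) - (y - y₀)) := by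
    simp only [_root_.sub_apply, one_apply_eq_self, hy, hy₀]
    abel
  rw [h4, norm_neg]
  calc _ ≤ K * ‖x - x₀ - D (y - y₀)‖ := h3
    _ ≤ K * (τ * ‖y - y₀‖) := by gcongr
    _ ≤ K * (τ * (2 * K * ‖x - x₀‖)) := by gcongr
    _ = (2 * K ^ 2 * τ) * ‖x - x₀‖ := by ring
    _ ≤ σ * ‖x - x₀‖ := by gcongr

theorem second_order_of_first {G : E → ℝ} {q : E → E}
    (hq : ∀ x z, G x + inner ℝ (q x) (z - x) ≤ G z) (x₀ : E) (B : E →L[ℝ] E) (σ ρ : ℝ)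
    (hσ : 0 < σ)
    (h1 : ∀ x, ‖x - x₀‖ < ρ → ‖q x - q x₀ - B (x - x₀)‖ ≤ σ * ‖x - x₀‖) (h : E) (hh : ‖h‖ < ρ) :
    |G (x₀ + h) - G x₀ - inner ℝ (q x₀) h - (1 / 2) * inner ℝ (B h) h| ≤ σ * ‖h‖ ^ 2 := by
  have hqt : ∀ t : ℝ, 0 ≤ t → t ≤ 1 →
      |inner ℝ (q (x₀ + t • h)) h - inner ℝ (q x₀) h - t * inner ℝ (B h) h| ≤ σ * ‖h‖ ^ 2 := by
    intro t ht0 ht1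
    have hn : ‖x₀ + t • h - x₀‖ ≤ ‖h‖ := by
      rw [add_sub_cancel_left, norm_smul, Real.norm_of_nonneg ht0]
      exact mul_le_of_le_one_left (norm_nonneg _) ht1
    have h2 := h1 (x₀ + t • h) (hn.trans_lt hh)
    have h3 : (inner ℝ (q (x₀ + t • h)) h - inner ℝ (q x₀) h - t * inner ℝ (B h) h : ℝ) =
        inner ℝ (q (x₀ + t • h) - q x₀ - B (x₀ + t • h - x₀)) h := by
      rw [add_sub_cancel_left, inner_sub_left, inner_sub_left, map_smul, inner_smul_left]
      simp
    rw [h3]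
    calc _ ≤ ‖q (x₀ + t • h) - q x₀ - B (x₀ + t • h - x₀)‖ * ‖h‖ := abs_real_inner_le_norm _ _
      _ ≤ (σ * ‖h‖) * ‖h‖ := by
        gcongr
        exact h2.trans (by gcongr)
      _ = _ := by ring
  have := telescoping_bound
    (fun t => G (x₀ + t • h) - t * inner ℝ (q x₀) h - t ^ 2 * ((1 / 2) * inner ℝ (B h) h))
    (σ * ‖h‖ ^ 2) (|inner ℝ (B h) h|) (by
      intro s t hs hst ht
      have a1 := abs_le.1 (hqt s hs (hst.trans ht))
      have a2 := abs_le.1 (hqt t (hs.trans hst) ht)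
      have e1 := hq (x₀ + s • h) (x₀ + t • h)
      have e2 := hq (x₀ + t • h) (x₀ + s • h)
      have i1 : x₀ + t • h - (x₀ + s • h) = (t - s) • h := by rw [sub_smul]; abel
      have i2 : x₀ + s • h - (x₀ + t • h) = (-(t - s)) • h := by rw [neg_smul, sub_smul]; abel
      rw [i1, inner_smul_right] at e1
      rw [i2, inner_smul_right] at e2
      have hts : 0 ≤ t - s := sub_nonneg.2 hst
      have m1 := mul_le_mul_of_nonneg_left a1.1 hts
      have m2 := mul_le_mul_of_nonneg_left a2.2 hts
      have n1 := mul_le_mul_of_nonneg_left (le_abs_self (inner ℝ (B h) h)) (sq_nonneg (t - s))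
      have n2 := mul_le_mul_of_nonneg_left (neg_abs_le (inner ℝ (B h) h)) (sq_nonneg (t - s))
      have n3 := mul_nonneg (sq_nonneg (t - s)) (abs_nonneg (inner ℝ (B h) h))
      rw [abs_le]
      constructor <;> nlinarith)
  convert this using 2
  simp
  ring

variable [MeasurableSpace E] [BorelSpace E]

theorem lip_image_null {f : E → E} {s : Set E}
    {K : NNReal} (hf : LipschitzOnWith K f s)
    (hs : Measure.hausdorffMeasure (Module.finrank ℝ E : ℝ) s = 0) :
    Measure.hausdorffMeasure (Module.finrank ℝ E : ℝ) (f '' s) = 0 := by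
  have := hf.hausdorffMeasure_image_le (d := (Module.finrank ℝ E : ℝ)) (by positivity)
  rw [hs, mul_zero] at this
  exact nonpos_iff_eq_zero.1 this

theorem alexandrov {G : E → ℝ} {q : E → E} {C : ℝ}
    (hq : ∀ x z, G x + inner ℝ (q x) (z - x) ≤ G z) (hC : ∀ x, ‖q x‖ ≤ C) :
    Measure.hausdorffMeasure (Module.finrank ℝ E : ℝ) {x : E | ¬ ∃ B : E →L[ℝ] E, ∀ σ > 0,
      ∃ ρ > 0, ∀ h : E, ‖h‖ < ρ →
        |G (x + h) - G x - inner ℝ (q x) h - (1 / 2) * inner ℝ (B h) h| ≤ σ * ‖h‖ ^ 2} = 0 := by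
  choose J hJ using exists_resolvent hq hC
  have hfirm : ∀ y y', ‖J y - J y'‖ ^ 2 ≤ inner ℝ (J y - J y') (y - y') := fun y y' =>
    resolvent_firm (hJ y) (hJ y')
  have hJq : ∀ x, J (x + q x) = x := by
    intro x
    have := resolvent_firm (y := x + q x) (y' := x + q x) (j' := x) (hJ (x + q x))
      (by simpa using hq x)
    simp only [sub_self, inner_zero_right] at this
    have h0 : ‖J (x + q x) - x‖ = 0 := by nlinarith [norm_nonneg (J (x + q x) - x)]
    exact sub_eq_zero.1 (norm_eq_zero.1 h0)
  have hLip : LipschitzWith 1 J := by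
    refine LipschitzWith.of_dist_le_mul fun y y' => ?_
    rw [dist_eq_norm, dist_eq_norm]
    have h1 := (hfirm y y').trans (real_inner_le_norm _ _)
    simp only [NNReal.coe_one, one_mul]
    by_contra hcon
    push Not at hcon
    nlinarith [norm_nonneg (y - y')]
  set μ : Measure E := Measure.hausdorffMeasure (Module.finrank ℝ E : ℝ) with hμ
  have hN1 : μ (J '' {y | ¬ DifferentiableAt ℝ J y}) = 0 :=
    lip_image_null (hLip.lipschitzOnWith) (hLip.ae_differentiableAt (μ := μ))
  have hN2 : μ (J '' {y | DifferentiableAt ℝ J y ∧ (fderiv ℝ J y).det = 0}) = 0 :=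
    addHaar_image_eq_zero_of_det_fderivWithin_eq_zero μ
      (fun y hy => hy.1.hasFDerivAt.hasFDerivWithinAt) (fun y hy => hy.2)
  refine measure_mono_null ?_ (measure_union_null hN1 hN2)
  intro x hx
  by_contra hnot
  apply hx
  have hdiff : DifferentiableAt ℝ J (x + q x) := by
    by_contra h
    exact hnot (Or.inl ⟨_, h, hJq x⟩)
  have hdet : (fderiv ℝ J (x + q x)).det ≠ 0 := by
    intro h
    exact hnot (Or.inr ⟨_, ⟨hdiff, h⟩, hJq x⟩)
  set D := fderiv ℝ J (x + q x) with hD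
  let T : E →L[ℝ] E := ((ContinuousLinearMap.toContinuousLinearEquivOfDetNeZero D hdet).symm : E →L[ℝ] E)
  have hT : ∀ h, T (D h) = h := by
    intro h
    exact (ContinuousLinearMap.toContinuousLinearEquivOfDetNeZero D hdet).symm_apply_apply h
  refine ⟨T - 1, fun σ hσ => ?_⟩
  obtain ⟨ρ, hρ, h1⟩ := subgrad_expansion hfirm hJq x D T hdiff.hasFDerivAt hT σ hσ
  exact ⟨ρ, hρ, fun h hh => second_order_of_first hq x (T - 1) σ ρ hσ h1 h hh⟩

end Alex

/-! ### Jensen's lemma and sup-convolutions -/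

section Jensen

variable {E : Type*} [NormedAddCommGroup E] [InnerProductSpace ℝ E] [FiniteDimensional ℝ E]

theorem eq_zero_of_inner_le {d : E} {c : ℝ} (hc : 0 < c)
    (h : ∀ k : E, inner ℝ d k ≤ c * ‖k‖ ^ 2) : d = 0 := by
  have h1 := h ((1 / (2 * c)) • d)
  rw [inner_smul_right, real_inner_self_eq_norm_sq, norm_smul, mul_pow,
    Real.norm_of_nonneg (by positivity)] at h1
  have h2 : c * ((1 / (2 * c)) ^ 2 * ‖d‖ ^ 2) = (1 / (4 * c)) * ‖d‖ ^ 2 := by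
    field_simp; ring
  have h3 : 1 / (2 * c) * ‖d‖ ^ 2 = 2 * ((1 / (4 * c)) * ‖d‖ ^ 2) := by
    field_simp; ring
  rw [h2, h3] at h1
  have h4 : 0 < 1 / (4 * c) := by positivity
  have h5 : ‖d‖ = 0 := by
    by_contra hne
    have : 0 < ‖d‖ ^ 2 := by positivity
    nlinarith [mul_pos h4 this]
  exact norm_eq_zero.1 h5

theorem normsq_add_real (x h : E) : ‖x + h‖ ^ 2 = ‖x‖ ^ 2 + 2 * inner ℝ x h + ‖h‖ ^ 2 :=
  norm_add_sq_real x h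

variable [MeasurableSpace E] [BorelSpace E]

theorem jensen_exists {H : E → ℝ} {q : E → E} {C c : ℝ} (hc : 0 < c)
    (hq : ∀ x z, H x + inner ℝ (q x) (z - x) ≤ H z) (hC : ∀ x, ‖q x‖ ≤ C)
    {N : Set E} (hN : Measure.hausdorffMeasure (Module.finrank ℝ E : ℝ) N = 0)
    (x₁ : E) {β : ℝ} (hβ : 0 < β) :
    ∃ x, x ∉ N ∧ H x₁ - c * ‖x₁‖ ^ 2 - β ≤ H x - c * ‖x‖ ^ 2 ∧
      ∀ z, H z - c * ‖z‖ ^ 2 ≤ H x - c * ‖x‖ ^ 2 + inner ℝ (q x - (2 * c) • x) (z - x) := by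
  have hC0 : 0 ≤ C := (norm_nonneg _).trans (hC 0)
  have hcont : Continuous H := by
    refine (LipschitzWith.of_dist_le_mul (K := C.toNNReal) fun x z => ?_).continuous
    rw [Real.dist_eq, dist_eq_norm]
    refine (subgrad_lip hq hC x z).trans ?_
    gcongr
    exact Real.le_coe_toNNReal C
  have hmax : ∀ p : E, ∃ x, ∀ z, H z - c * ‖z‖ ^ 2 ≤ H x - c * ‖x‖ ^ 2 + inner ℝ p (z - x) := by
    intro p
    have hF : Continuous fun z => c * ‖z‖ ^ 2 - H z + inner ℝ p z := by fun_prop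
    have hlow : ∀ z, (- H 0 - (C + ‖p‖) ^ 2 / (2 * c)) + ‖z‖ * (c / 2 * ‖z‖) ≤
        c * ‖z‖ ^ 2 - H z + inner ℝ p z := by
      intro z
      have h1 := (abs_le.1 (subgrad_lip hq hC z 0)).2
      have h2 := (abs_le.1 (abs_real_inner_le_norm p z)).1
      rw [sub_zero] at h1
      have h3 : (C + ‖p‖) * ‖z‖ ≤ (C + ‖p‖) ^ 2 / (2 * c) + c / 2 * ‖z‖ ^ 2 := by
        have : (C + ‖p‖) ^ 2 / (2 * c) + c / 2 * ‖z‖ ^ 2 - (C + ‖p‖) * ‖z‖ =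
          (C + ‖p‖ - c * ‖z‖) ^ 2 / (2 * c) := by field_simp; ring
        have : 0 ≤ (C + ‖p‖ - c * ‖z‖) ^ 2 / (2 * c) := by positivity
        linarith
      nlinarith
    have hcoer : Tendsto (fun z => c * ‖z‖ ^ 2 - H z + inner ℝ p z) (cocompact E) atTop := by
      refine tendsto_atTop_mono hlow ?_
      refine tendsto_atTop_add_const_left _ _ ?_
      have h1 : Tendsto (fun z : E => ‖z‖) (cocompact E) atTop := tendsto_norm_cocompact_atTop
      exact h1.atTop_mul_atTop₀ (h1.const_mul_atTop (by positivity))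
    obtain ⟨x, hx⟩ := hF.exists_forall_le hcoer
    refine ⟨x, fun z => ?_⟩
    have := hx z
    rw [inner_sub_right]
    linarith
  have hsemi : ∀ x z, H x - c * ‖x‖ ^ 2 + inner ℝ (q x - (2 * c) • x) (z - x) - c * ‖z - x‖ ^ 2 ≤
      H z - c * ‖z‖ ^ 2 := by
    intro x z
    have h1 := hq x z
    have h2 := normsq_add_real x (z - x)
    rw [add_sub_cancel] at h2
    rw [inner_sub_left, inner_smul_left, h2]
    simp only [conj_trivial]
    linarith
  have hpq : ∀ p x, (∀ z, H z - c * ‖z‖ ^ 2 ≤ H x - c * ‖x‖ ^ 2 + inner ℝ p (z - x)) →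
      q x - (2 * c) • x = p := by
    intro p x h
    refine sub_eq_zero.1 (eq_zero_of_inner_le hc fun k => ?_)
    have h1 := h (x + k)
    have h2 := hsemi x (x + k)
    rw [add_sub_cancel_left] at h1 h2
    rw [inner_sub_left]
    linarith
  choose X hX using hmax
  have hXp : ∀ p, q (X p) - (2 * c) • X p = p := fun p => hpq p (X p) (hX p)
  set R := (C + 1) / (2 * c) with hR
  have hR0 : 0 ≤ R := by positivity
  have hXR : ∀ p, ‖p‖ ≤ 1 → ‖X p‖ ≤ R := by
    intro p hp
    have h1 : (2 * c) • X p = q (X p) - p := by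
      rw [eq_sub_iff_add_eq, add_comm, ← eq_sub_iff_add_eq, hXp p]
    have h2 : ‖(2 * c) • X p‖ ≤ C + 1 := by
      rw [h1]
      exact (norm_sub_le _ _).trans (add_le_add (hC _) hp)
    rw [norm_smul, Real.norm_of_nonneg (by positivity)] at h2
    rw [hR, le_div_iff₀ (by positivity)]
    linarith
  set δ := min 1 (β / (R + ‖x₁‖ + 1)) with hδ
  have hδ0 : 0 < δ := by positivity
  have hlow : ∀ p, ‖p‖ < δ → H x₁ - c * ‖x₁‖ ^ 2 - β ≤ H (X p) - c * ‖X p‖ ^ 2 := by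
    intro p hp
    have h1 := hX p x₁
    have h2 := real_inner_le_norm p (x₁ - X p)
    have h3 : ‖x₁ - X p‖ ≤ R + ‖x₁‖ + 1 := by
      have := norm_sub_le x₁ (X p)
      have := hXR p (hp.le.trans (min_le_left _ _))
      linarith
    have h4 : ‖p‖ * ‖x₁ - X p‖ ≤ β / (R + ‖x₁‖ + 1) * (R + ‖x₁‖ + 1) := by
      gcongr
      exact hp.le.trans (min_le_right _ _)
    rw [div_mul_cancel₀ _ (by positivity)] at h4
    linarith
  have hLip : LipschitzOnWith (4 * c).toNNReal (fun x => q x - (2 * c) • x)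
      (X '' ball 0 δ ∩ N) := by
    refine LipschitzOnWith.of_dist_le_mul ?_
    rintro _ ⟨⟨p, -, rfl⟩, -⟩ _ ⟨⟨p', -, rfl⟩, -⟩
    simp only [hXp]
    rw [dist_eq_norm, dist_eq_norm, Real.coe_toNNReal _ (by positivity)]
    set x := X p with hx
    set x' := X p' with hx'
    have h1 := hX p' x
    have h2 := hX p (x + (1 / (4 * c)) • (p' - p))
    have h3 := hsemi x' (x + (1 / (4 * c)) • (p' - p))
    rw [hXp p'] at h3
    have h4 : x + (1 / (4 * c)) • (p' - p) - x' = (x - x') + (1 / (4 * c)) • (p' - p) := by abel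
    rw [h4, inner_add_right] at h3
    rw [← hx, add_sub_cancel_left] at h2
    rw [← hx'] at h1
    have h5 : (inner ℝ p' ((1 / (4 * c)) • (p' - p)) - inner ℝ p ((1 / (4 * c)) • (p' - p)) : ℝ) =
        (1 / (4 * c)) * ‖p' - p‖ ^ 2 := by
      rw [← inner_sub_left, inner_smul_right, real_inner_self_eq_norm_sq]
    have h6 : ‖(x - x') + (1 / (4 * c)) • (p' - p)‖ ≤ ‖x - x'‖ + (1 / (4 * c)) * ‖p' - p‖ := by
      refine (norm_add_le _ _).trans ?_
      rw [norm_smul, Real.norm_of_nonneg (by positivity)]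
    have h7 := pow_le_pow_left₀ (norm_nonneg _) h6 2
    set P := ‖p' - p‖ with hP
    have h8 : (1 / (4 * c)) * P ^ 2 ≤ c * (‖x - x'‖ + (1 / (4 * c)) * P) ^ 2 := by
      have := mul_le_mul_of_nonneg_left h7 hc.le
      linarith
    have h9 : 4 * c * ‖x - x'‖ ≥ 0 := by positivity
    rw [norm_sub_rev p p', ← hP]
    set D := 4 * c * ‖x - x'‖ with hD
    have h10 : ‖x - x'‖ = D / (4 * c) := by rw [hD]; field_simp
    rw [h10] at h8
    have h11 : c * (D / (4 * c) + (1 / (4 * c)) * P) ^ 2 = (1 / (16 * c)) * (D + P) ^ 2 := by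
      field_simp; ring
    have h12 : (1 / (4 * c)) * P ^ 2 = (1 / (16 * c)) * (2 * P) ^ 2 := by field_simp; ring
    rw [h11, h12] at h8
    have h13 := le_of_mul_le_mul_left h8 (by positivity)
    have h14 := abs_le_of_sq_le_sq h13 (by positivity)
    linarith [le_abs_self (2 * P)]
  by_contra hcon
  push Not at hcon
  have hsub : ball (0 : E) δ ⊆ (fun x => q x - (2 * c) • x) '' (X '' ball 0 δ ∩ N) := by
    intro p hp
    have hp' : ‖p‖ < δ := by simpa using hp
    refine ⟨X p, ⟨⟨p, hp, rfl⟩, ?_⟩, hXp p⟩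
    by_contra hnot
    obtain ⟨z, hz⟩ := hcon (X p) hnot (hlow p hp')
    rw [hXp p] at hz
    exact absurd (hX p z) (not_le.2 hz)
  have hnull := measure_mono_null hsub (lip_image_null hLip (measure_mono_null inter_subset_right hN))
  exact (measure_ball_pos (Measure.hausdorffMeasure (Module.finrank ℝ E : ℝ)) (0 : E) hδ0).ne' hnull

theorem jensen_pair {K : Set E} (hK : IsCompact K) {u v : E → ℝ}
    (hu : UpperSemicontinuousOn u K) (hv : UpperSemicontinuousOn v K)
    {x₁ : E} (hx₁ : x₁ ∈ K) {β ε : ℝ} (hβ : 0 < β) (hε : 0 < ε) :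
    ∃ x s t : E, s ∈ K ∧ t ∈ K ∧
      u x₁ + v x₁ - β ≤ (u s - ‖x - s‖ ^ 2 / (2 * ε)) + (v t - ‖x - t‖ ^ 2 / (2 * ε)) ∧
      ∃ (l m : E) (A B : E →L[ℝ] E),
        (∀ σ > 0, ∃ ρ > 0, ∀ h : E, ‖h‖ < ρ → s + h ∈ K →
          u (s + h) ≤ u s + inner ℝ l h + (1 / 2) * inner ℝ (A h) h +
            (σ - 1 / (2 * ε)) * ‖h‖ ^ 2) ∧
        (∀ σ > 0, ∃ ρ > 0, ∀ h : E, ‖h‖ < ρ → t + h ∈ K →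
          v (t + h) ≤ v t + inner ℝ m h + (1 / 2) * inner ℝ (B h) h +
            (σ - 1 / (2 * ε)) * ‖h‖ ^ 2) ∧
        ∀ h, inner ℝ (A h) h + inner ℝ (B h) h ≤ (2 / ε) * ‖h‖ ^ 2 := by
  -- the sup-convolution
  have hsup : ∀ u : E → ℝ, UpperSemicontinuousOn u K → ∃ s : E → E, (∀ x, s x ∈ K) ∧
      ∀ x, ∀ z ∈ K, u z - ‖x - z‖ ^ 2 / (2 * ε) ≤ u (s x) - ‖x - s x‖ ^ 2 / (2 * ε) := by
    intro u hu
    have : ∀ x : E, ∃ s ∈ K, ∀ z ∈ K,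
        u z - ‖x - z‖ ^ 2 / (2 * ε) ≤ u s - ‖x - s‖ ^ 2 / (2 * ε) := by
      intro x
      have h1 : UpperSemicontinuousOn (fun z => - (‖x - z‖ ^ 2 / (2 * ε))) K := by
        have : Continuous fun z => - (‖x - z‖ ^ 2 / (2 * ε)) := by fun_prop
        exact this.upperSemicontinuous.upperSemicontinuousOn _
      obtain ⟨s, hs, hmax⟩ := (hu.add h1).exists_isMaxOn ⟨x₁, hx₁⟩ hK
      refine ⟨s, hs, fun z hz => ?_⟩
      have := hmax hz
      simp only [mem_ofPred_eq] at this
      linarith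
    choose s h1 h2 using this
    exact ⟨s, h1, h2⟩
  obtain ⟨s, hsK, hs⟩ := hsup u hu
  obtain ⟨t, htK, ht⟩ := hsup v hv
  obtain ⟨C, hC⟩ := hK.isBounded.exists_norm_le
  have hid : ∀ x y : E, ‖x - y‖ ^ 2 / (2 * ε) =
      ‖x‖ ^ 2 / (2 * ε) - inner ℝ (ε⁻¹ • y) x + ‖y‖ ^ 2 / (2 * ε) := by
    intro x y
    rw [norm_sub_sq_real, inner_smul_left, real_inner_comm]
    simp only [conj_trivial]
    field_simp
  have hsubg : ∀ (u : E → ℝ) (s : E → E), (∀ x, s x ∈ K) →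
      (∀ x, ∀ z ∈ K, u z - ‖x - z‖ ^ 2 / (2 * ε) ≤ u (s x) - ‖x - s x‖ ^ 2 / (2 * ε)) →
      ∀ x z, (u (s x) - ‖x - s x‖ ^ 2 / (2 * ε) + ‖x‖ ^ 2 / (2 * ε)) +
        inner ℝ (ε⁻¹ • s x) (z - x) ≤ u (s z) - ‖z - s z‖ ^ 2 / (2 * ε) + ‖z‖ ^ 2 / (2 * ε) := by
    intro u s hsK hs x z
    have h1 := hs z (s x) (hsK x)
    rw [hid z (s x)] at h1
    rw [hid x (s x), inner_sub_right]
    linarith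
  have hqb : ∀ s : E → E, (∀ x, s x ∈ K) → ∀ x, ‖ε⁻¹ • s x‖ ≤ ε⁻¹ * C := by
    intro s hsK x
    rw [norm_smul, Real.norm_of_nonneg (by positivity)]
    gcongr
    exact hC _ (hsK x)
  have gu := hsubg u s hsK hs
  have gv := hsubg v t htK ht
  set U : E → ℝ := fun x => u (s x) - ‖x - s x‖ ^ 2 / (2 * ε) + ‖x‖ ^ 2 / (2 * ε) with hU
  set V : E → ℝ := fun x => v (t x) - ‖x - t x‖ ^ 2 / (2 * ε) + ‖x‖ ^ 2 / (2 * ε) with hV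
  have aU := alexandrov (G := U) (q := fun x => ε⁻¹ • s x) gu (hqb s hsK)
  have aV := alexandrov (G := V) (q := fun x => ε⁻¹ • t x) gv (hqb t htK)
  obtain ⟨x, hxN, hxlow, hxmax⟩ := jensen_exists (H := fun x => U x + V x)
    (q := fun x => ε⁻¹ • s x + ε⁻¹ • t x) (C := ε⁻¹ * C + ε⁻¹ * C) (c := 1 / ε) (by positivity)
    (fun x z => by
      rw [inner_add_left]
      have := gu x z
      have := gv x z
      simp only [hU, hV]
      linarith)
    (fun x => (norm_add_le _ _).trans (add_le_add (hqb s hsK x) (hqb t htK x)))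
    (measure_union_null aU aV) x₁ hβ
  simp only [mem_union, mem_ofPred_eq, not_or, not_not] at hxN
  obtain ⟨⟨A, hA⟩, ⟨B, hB⟩⟩ := hxN
  have htouch : ∀ (u : E → ℝ) (s : E → E) (A : E →L[ℝ] E), (∀ x, s x ∈ K) →
      (∀ x, ∀ z ∈ K, u z - ‖x - z‖ ^ 2 / (2 * ε) ≤ u (s x) - ‖x - s x‖ ^ 2 / (2 * ε)) →
      (∀ σ > 0, ∃ ρ > 0, ∀ h : E, ‖h‖ < ρ →
        |(u (s (x + h)) - ‖(x + h) - s (x + h)‖ ^ 2 / (2 * ε) + ‖x + h‖ ^ 2 / (2 * ε)) -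
          (u (s x) - ‖x - s x‖ ^ 2 / (2 * ε) + ‖x‖ ^ 2 / (2 * ε)) -
          inner ℝ (ε⁻¹ • s x) h - (1 / 2) * inner ℝ (A h) h| ≤ σ * ‖h‖ ^ 2) →
      (∀ σ > 0, ∃ ρ > 0, ∀ h : E, ‖h‖ < ρ → s x + h ∈ K →
          u (s x + h) ≤ u (s x) + inner ℝ (ε⁻¹ • (s x - x)) h + (1 / 2) * inner ℝ (A h) h +
            (σ - 1 / (2 * ε)) * ‖h‖ ^ 2) := by
    intro u s A hsK hs hA σ hσ
    obtain ⟨ρ, hρ, h1⟩ := hA σ hσ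
    refine ⟨ρ, hρ, fun h hh hm => ?_⟩
    have h2 := (abs_le.1 (h1 h hh)).2
    have h3 := hs (x + h) (s x + h) hm
    rw [add_sub_add_right_eq_sub] at h3
    have h4 : ‖x + h‖ ^ 2 / (2 * ε) = ‖x‖ ^ 2 / (2 * ε) + inner ℝ (ε⁻¹ • x) h +
        1 / (2 * ε) * ‖h‖ ^ 2 := by
      rw [normsq_add_real, inner_smul_left]
      simp only [conj_trivial]
      field_simp
    rw [smul_sub, inner_sub_left]
    linarith
  refine ⟨x, s x, t x, hsK x, htK x, ?_, ε⁻¹ • (s x - x), ε⁻¹ • (t x - x), A, B,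
    htouch u s A hsK hs hA, htouch v t B htK ht hB, ?_⟩
  · have e1 := hs x₁ x₁ hx₁
    have e2 := ht x₁ x₁ hx₁
    simp only [sub_self, norm_zero, hU, hV] at e1 e2 hxlow
    have e3 : ∀ y : E, 1 / ε * ‖y‖ ^ 2 = ‖y‖ ^ 2 / (2 * ε) + ‖y‖ ^ 2 / (2 * ε) := by
      intro y; field_simp; norm_num
    rw [e3, e3] at hxlow
    norm_num at e1 e2
    linarith
  · intro h
    have hsmall : ∀ σ > 0, inner ℝ (A h) h + inner ℝ (B h) h ≤ (2 / ε + 4 * σ) * ‖h‖ ^ 2 := by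
      intro σ hσ
      obtain ⟨ρ, hρ, h1⟩ := hA σ hσ
      obtain ⟨ρ', hρ', h2⟩ := hB σ hσ
      set τ := min ρ ρ' / (2 * (‖h‖ + 1)) with hτ
      have hτ0 : 0 < τ := by positivity
      have hn : ‖τ • h‖ < min ρ ρ' := by
        rw [norm_smul, Real.norm_of_nonneg hτ0.le, hτ, div_mul_eq_mul_div, div_lt_iff₀ (by positivity)]
        have : 0 < min ρ ρ' := by positivity
        nlinarith [norm_nonneg h]
      have a1 := (abs_le.1 (h1 (τ • h) (hn.trans_le (min_le_left _ _)))).1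
      have a2 := (abs_le.1 (h2 (τ • h) (hn.trans_le (min_le_right _ _)))).1
      have a3 := hxmax (x + τ • h)
      rw [add_sub_cancel_left, normsq_add_real, inner_sub_left, inner_add_left,
        inner_smul_left (x := x)] at a3
      simp only [conj_trivial, map_smul, inner_smul_left, inner_smul_right, norm_smul, mul_pow,
        Real.norm_eq_abs, sq_abs] at a1 a2 a3
      have e4 : 1 / ε * (‖x‖ ^ 2 + 2 * (τ * inner ℝ x h) + τ ^ 2 * ‖h‖ ^ 2) =
        1 / ε * ‖x‖ ^ 2 + 2 * (1 / ε) * (τ * inner ℝ x h) + 1 / ε * (τ ^ 2 * ‖h‖ ^ 2) := by ring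
      rw [e4] at a3
      have a4 : τ ^ 2 * (inner ℝ (A h) h + inner ℝ (B h) h) ≤
          τ ^ 2 * ((2 / ε + 4 * σ) * ‖h‖ ^ 2) := by
        have : 2 / ε = 2 * (1 / ε) := by ring
        rw [this]
        nlinarith
      exact le_of_mul_le_mul_left a4 (by positivity)
    have hlim : Tendsto (fun N : ℕ => (2 / ε + 4 * (1 / ((N : ℝ) + 1))) * ‖h‖ ^ 2) atTop
        (nhds ((2 / ε + 4 * 0) * ‖h‖ ^ 2)) :=
      ((tendsto_one_div_add_atTop_nhds_zero_nat.const_mul 4).const_add _).mul_const _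
    have := ge_of_tendsto' hlim (fun N => hsmall _ (by positivity))
    simpa using this

end Jensen

/-! ### The comparison principle -/

theorem comparison_step {n : ℕ} [NeZero n] {a : Fin n → ℝ} (ha : ClassA a) {Ω : Set (En n)}
    {f u v : En n → ℝ} (hsub : IsViscSubsol a Ω f u)
    (hsup : IsViscSupersol a Ω f (fun x => - v x)) {η c ε : ℝ} (hη : 0 < η) {s t : En n}
    (hs : s ∈ Ω) (ht : t ∈ Ω) (l m : En n) (A B : En n →L[ℝ] En n)
    (h1 : ∀ σ > 0, ∃ ρ > 0, ∀ h : En n, ‖h‖ < ρ → s + h ∈ closure Ω →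
          (u (s + h) + (η / 2 * ‖s + h‖ ^ 2 - c)) ≤ (u s + (η / 2 * ‖s‖ ^ 2 - c)) + inner ℝ l h +
            (1 / 2) * inner ℝ (A h) h + (σ - 1 / (2 * ε)) * ‖h‖ ^ 2)
    (h2 : ∀ σ > 0, ∃ ρ > 0, ∀ h : En n, ‖h‖ < ρ → t + h ∈ closure Ω →
          v (t + h) ≤ v t + inner ℝ m h + (1 / 2) * inner ℝ (B h) h +
            (σ - 1 / (2 * ε)) * ‖h‖ ^ 2)
    (h3 : ∀ h, inner ℝ (A h) h + inner ℝ (B h) h ≤ (2 / ε) * ‖h‖ ^ 2) :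
    f s + η / 2 * ∑ i, a i ≤ f t := by
  obtain ⟨ρ₁, hρ₁, h1⟩ := h1 (η / 8) (by positivity)
  obtain ⟨ρ₂, hρ₂, h2⟩ := h2 (η / 8) (by positivity)
  have hφ := (contDiff_quadP 0 (η / 8 - 1 / (2 * ε)) l s A).sub (contDiff_sqn (η / 2) 0)
  have hψ := contDiff_quadP 0 (-(η / 8 - 1 / (2 * ε))) (-m) t (-B)
  have e1 := hsub s hs _ hφ (by
    have : ∀ᶠ z in nhdsWithin s Ω, ‖z - s‖ < ρ₁ := by
      refine mem_nhdsWithin_of_mem_nhds ?_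
      filter_upwards [ball_mem_nhds s hρ₁] with z hz
      rwa [mem_ball, dist_eq_norm] at hz
    filter_upwards [this, self_mem_nhdsWithin] with z hz hzΩ
    have := h1 (z - s) hz (by rw [add_sub_cancel]; exact subset_closure hzΩ)
    rw [add_sub_cancel] at this
    simp only [quadP, sub_self, sub_zero, map_zero, inner_zero_right, norm_zero, zero_pow two_ne_zero, mul_zero]
    linarith)
  have e2 := hsup t ht _ hψ (by
    have : ∀ᶠ z in nhdsWithin t Ω, ‖z - t‖ < ρ₂ := by
      refine mem_nhdsWithin_of_mem_nhds ?_
      filter_upwards [ball_mem_nhds t hρ₂] with z hz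
      rwa [mem_ball, dist_eq_norm] at hz
    filter_upwards [this, self_mem_nhdsWithin] with z hz hzΩ
    have := h2 (z - t) hz (by rw [add_sub_cancel]; exact subset_closure hzΩ)
    rw [add_sub_cancel] at this
    simp only [quadP, sub_self, map_zero, inner_zero_right, norm_zero, neg_apply, inner_neg_left, zero_pow two_ne_zero, mul_zero, neg_zero]
    linarith)
  have e3 := Ma_le ha.1 (hess_herm hφ s) (hess_herm hψ t) (-(η / 2)) (fun w => by
    have q1 := qf_hess_sub (contDiff_quadP 0 (η / 8 - 1 / (2 * ε)) l s A)
      (contDiff_sqn (η / 2) 0) s w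
    rw [qf_hess_quadP, qf_hess_sqn] at q1
    have q2 := qf_hess_quadP 0 (-(η / 8 - 1 / (2 * ε))) (-m) t (-B) w
    rw [neg_apply, inner_neg_left] at q2
    refine (le_of_eq q1).trans ?_
    rw [q2]
    have h4 := h3 w
    have h5 : 2 / ε = 4 * (1 / (2 * ε)) := by ring
    rw [h5] at h4
    linarith)
  linarith [e1.trans e3]

theorem comparison {n : ℕ} [NeZero n] {a : Fin n → ℝ} (ha : ClassA a) {Ω : Set (En n)}
    (hΩo : IsOpen Ω) (hΩb : Bornology.IsBounded Ω) {f : En n → ℝ} (hf : ContinuousOn f Ω)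
    {u v : En n → ℝ} (hu : UpperSemicontinuousOn u (closure Ω))
    (hv : UpperSemicontinuousOn v (closure Ω))
    (hsub : IsViscSubsol a Ω f u) (hsup : IsViscSupersol a Ω f (fun x => - v x))
    (hbd : ∀ x ∈ frontier Ω, u x + v x ≤ 0) : ∀ x ∈ closure Ω, u x + v x ≤ 0 := by
  intro x₁ hx₁
  by_contra hpos
  push Not at hpos
  have hK : IsCompact (closure Ω) := hΩb.isCompact_closure
  obtain ⟨R, hR⟩ := hK.isBounded.exists_norm_le
  set η := (u x₁ + v x₁) / (R ^ 2 + 1) with hη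
  have hη0 : 0 < η := by positivity
  have hηm : η * (R ^ 2 + 1) = u x₁ + v x₁ := by rw [hη]; field_simp
  set c := η / 2 * R ^ 2 with hc
  set u1 : En n → ℝ := fun z => u z + (η / 2 * ‖z‖ ^ 2 - c) with hu1
  have hu1c : UpperSemicontinuousOn u1 (closure Ω) := by
    have : Continuous fun z : En n => η / 2 * ‖z‖ ^ 2 - c := by fun_prop
    exact hu.add (this.upperSemicontinuous.upperSemicontinuousOn _)
  set m := u1 x₁ + v x₁ with hm
  have hm0 : 0 < m := by
    have h1 : 0 ≤ η / 2 * ‖x₁‖ ^ 2 := by positivity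
    simp only [hm, hu1, hc]
    nlinarith [mul_nonneg hη0.le (sq_nonneg R)]
  have hu1le : ∀ z ∈ closure Ω, u1 z ≤ u z := by
    intro z hz
    have h1 : ‖z‖ ^ 2 ≤ R ^ 2 := pow_le_pow_left₀ (norm_nonneg _) (hR z hz) 2
    simp only [hu1, hc]
    nlinarith [mul_le_mul_of_nonneg_left h1 hη0.le]
  obtain ⟨C₁, hC₁⟩ := hu1c.bddAbove_of_isCompact hK
  obtain ⟨C₂, hC₂⟩ := hv.bddAbove_of_isCompact hK
  have hC₁' : ∀ z ∈ closure Ω, u1 z ≤ C₁ := fun z hz => hC₁ (mem_image_of_mem _ hz)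
  have hC₂' : ∀ z ∈ closure Ω, v z ≤ C₂ := fun z hz => hC₂ (mem_image_of_mem _ hz)
  have hmain : ∀ k : ℕ, ∃ x s t : En n, s ∈ closure Ω ∧ t ∈ closure Ω ∧
      m / 2 ≤ (u1 s - ‖x - s‖ ^ 2 / (2 * (1 / ((k : ℝ) + 1)))) +
        (v t - ‖x - t‖ ^ 2 / (2 * (1 / ((k : ℝ) + 1)))) ∧
      (s ∈ Ω → t ∈ Ω → f s + η / 2 * ∑ i, a i ≤ f t) := by
    intro k
    obtain ⟨x, s, t, hs, ht, h1, l, m', A, B, h2, h3, h4⟩ :=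
      jensen_pair hK hu1c hv hx₁ (β := m / 2) (ε := 1 / ((k : ℝ) + 1)) (by positivity) (by positivity)
    exact ⟨x, s, t, hs, ht, by linarith, fun hs' ht' =>
      comparison_step ha hsub hsup hη0 hs' ht' l m' A B h2 h3 h4⟩
  choose x s t hs ht h1 h2 using hmain
  have hdist : ∀ k : ℕ, ‖x k - s k‖ ^ 2 + ‖x k - t k‖ ^ 2 ≤
      2 * (C₁ + C₂) * (1 / ((k : ℝ) + 1)) := by
    intro k
    have e1 := h1 k
    have e2 := hC₁' _ (hs k)
    have e3 := hC₂' _ (ht k)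
    have hk : 0 < (1 / ((k : ℝ) + 1)) := by positivity
    set ε := 1 / ((k : ℝ) + 1) with hε
    have e4 : ‖x k - s k‖ ^ 2 / (2 * ε) + ‖x k - t k‖ ^ 2 / (2 * ε) ≤ C₁ + C₂ := by linarith
    rw [← add_div, div_le_iff₀ (by positivity)] at e4
    linarith
  have hlim0 : Tendsto (fun k : ℕ => 2 * (C₁ + C₂) * (1 / ((k : ℝ) + 1))) atTop (nhds 0) := by
    simpa using (tendsto_one_div_add_atTop_nhds_zero_nat (𝕜 := ℝ)).const_mul (2 * (C₁ + C₂))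
  have hsq : ∀ y : ℕ → En n, (∀ k, ‖y k‖ ^ 2 ≤ 2 * (C₁ + C₂) * (1 / ((k : ℝ) + 1))) →
      Tendsto y atTop (nhds 0) := by
    intro y hy
    have h3 : Tendsto (fun k => ‖y k‖ ^ 2) atTop (nhds 0) :=
      squeeze_zero (fun k => sq_nonneg _) hy hlim0
    have h4 := (Real.continuous_sqrt.tendsto 0).comp h3
    rw [Real.sqrt_zero] at h4
    refine tendsto_zero_iff_norm_tendsto_zero.2 (h4.congr fun k => ?_)
    simp [Real.sqrt_sq]
  have hxs : Tendsto (fun k => x k - s k) atTop (nhds 0) := hsq _ fun k => by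
    linarith [hdist k, sq_nonneg ‖x k - t k‖]
  have hxt : Tendsto (fun k => x k - t k) atTop (nhds 0) := hsq _ fun k => by
    linarith [hdist k, sq_nonneg ‖x k - s k‖]
  obtain ⟨y, hy, φ, hφ, hlim⟩ := hK.tendsto_subseq hs
  have hlimt : Tendsto (fun k => t (φ k)) atTop (nhds y) := by
    have e1 := (hxs.comp hφ.tendsto_atTop)
    have e2 := (hxt.comp hφ.tendsto_atTop)
    have e3 := (hlim.add e1).sub e2
    simp only [add_zero, sub_zero] at e3
    refine e3.congr fun k => ?_
    simp only [Function.comp]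
    abel
  have hlims' : Tendsto (fun k => s (φ k)) atTop (nhdsWithin y (closure Ω)) :=
    tendsto_nhdsWithin_iff.2 ⟨hlim, Eventually.of_forall fun k => hs _⟩
  have hlimt' : Tendsto (fun k => t (φ k)) atTop (nhdsWithin y (closure Ω)) :=
    tendsto_nhdsWithin_iff.2 ⟨hlimt, Eventually.of_forall fun k => ht _⟩
  have hpos' : 0 < u1 y + v y := by
    by_contra hle
    push Not at hle
    have a1 := hlims'.eventually (hu1c y hy (u1 y + m / 8) (by simp only; linarith))
    have a2 := hlimt'.eventually (hv y hy (v y + m / 8) (by simp only; linarith))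
    obtain ⟨k, b1, b2⟩ := (a1.and a2).exists
    have b3 := h1 (φ k)
    have b4 : 0 ≤ ‖x (φ k) - s (φ k)‖ ^ 2 / (2 * (1 / ((φ k : ℝ) + 1))) := by positivity
    have b5 : 0 ≤ ‖x (φ k) - t (φ k)‖ ^ 2 / (2 * (1 / ((φ k : ℝ) + 1))) := by positivity
    linarith
  have hyΩ : y ∈ Ω := by
    by_contra hn
    have hfr : y ∈ frontier Ω := by
      rw [hΩo.frontier_eq]
      exact ⟨hy, hn⟩
    linarith [hbd y hfr, hu1le y hy]
  have hfc := (hf.continuousAt (hΩo.mem_nhds hyΩ)).tendsto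
  have c1 := (hfc.comp hlim).add_const (η / 2 * ∑ i, a i)
  have c2 := hfc.comp hlimt
  have d1 := hlim.eventually (hΩo.mem_nhds hyΩ)
  have d2 := hlimt.eventually (hΩo.mem_nhds hyΩ)
  have := le_of_tendsto_of_tendsto c1 c2 (by
    filter_upwards [d1, d2] with k k1 k2
    exact h2 (φ k) k1 k2)
  have hA := sum_pos_of_classA ha
  have : 0 < η / 2 * ∑ i, a i := by positivity
  linarith

/-! ### Barriers -/

theorem cone_dist {n : ℕ} [NeZero n] {θ t : ℝ} {ξ : En n} (ht : 0 ≤ t) (hξ : ξ ∈ coneSet n θ) :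
    t * Real.sin θ * (t * Real.sin θ) ≤ ‖ξ + t • EuclideanSpace.single (lastIdx n) (1 : ℝ)‖ ^ 2 := by
  have h1 : ‖ξ‖ * Real.cos θ ≤ ξ (lastIdx n) := hξ
  have h2 : (inner ℝ ξ (EuclideanSpace.single (lastIdx n) (1 : ℝ)) : ℝ) = ξ (lastIdx n) := by
    simp [EuclideanSpace.inner_single_right]
  rw [normsq_line, h2]
  have h3 : ‖EuclideanSpace.single (lastIdx n) (1 : ℝ)‖ = 1 := by simp
  rw [h3]
  have h4 := mul_le_mul_of_nonneg_left h1 ht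
  have h5 := Real.sin_sq_add_cos_sq θ
  have h6 : t * Real.sin θ * (t * Real.sin θ) = t ^ 2 - (t * Real.cos θ) ^ 2 := by
    have : Real.sin θ ^ 2 = 1 - Real.cos θ ^ 2 := by linarith
    linear_combination t ^ 2 * this
  rw [h6]
  nlinarith [sq_nonneg (‖ξ‖ + t * Real.cos θ)]

set_option maxHeartbeats 1000000 in
theorem barrier {n : ℕ} [NeZero n] {a : Fin n → ℝ} (ha : ClassA a) {Ω : Set (En n)}
    (hcone : ExtCone Ω) {y : En n} (hy : y ∈ frontier Ω) {L : ℝ} (hL : 0 < L) (M : ℝ) :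
    ∃ γ < L, ∀ r₁ > 0, ∃ r > 0, r ≤ r₁ ∧ ∃ T : En n → ℝ, ContDiff ℝ 2 T ∧ T y ≤ γ ∧
      ∀ x ∈ closure Ω ∩ ball y r, 0 ≤ T x ∧ (r / 2 ≤ dist x y → L ≤ T x) ∧
        Ma a (hess T x) < -M ∧ M < Ma a (hess (fun z => - T z) x) := by
  obtain ⟨θ₀, hθ₀, r₀, hr₀, hc⟩ := hcone
  obtain ⟨O, hO⟩ := hc y hy
  set κ := Real.sin θ₀ with hκ
  have hκ0 : 0 < κ := Real.sin_pos_of_mem_Ioo hθ₀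
  have hκ1 : κ ≤ 1 := Real.sin_le_one _
  have hκ2 : κ ^ 2 ≤ 1 := pow_le_one₀ hκ0.le hκ1
  set A := ∑ i, a i with hA
  have hA0 : 0 < A := sum_pos_of_classA ha
  set as := min (a 0) (a (lastIdx n)) with has
  have has0 : 0 < as := lt_min ha.2.1 ha.2.2
  set α := (A + 1) / (2 * κ ^ 2 * as) with hα
  have hα0 : 0 < α := by positivity
  have hαA : 2 * α * κ ^ 2 * as = A + 1 := by rw [hα]; field_simp
  set E0 := Real.exp (-(α * κ ^ 2)) with hE0
  set E9 := Real.exp (-(9 * α)) with hE9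
  have hE1 : E9 < Real.exp (-α) := Real.exp_lt_exp.2 (by linarith)
  have hE09 : 0 < E0 - E9 := by
    have : Real.exp (-α) ≤ E0 := Real.exp_le_exp.2 (by nlinarith)
    linarith
  set p := L / (E0 - E9) with hp
  have hp0 : 0 < p := by positivity
  have hpL : p * (E0 - E9) = L := by rw [hp]; field_simp
  set Q := 2 * α * p * Real.exp (-(81 * α)) with hQ
  have hQ0 : 0 < Q := by positivity
  refine ⟨p * (E0 - Real.exp (-α)), by nlinarith, fun r₁ hr₁ => ?_⟩
  set t := min (min r₀ r₁ / 8) (min 1 (Q / (2 * (|M| + 1)))) with ht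
  have ht0 : 0 < t := by positivity
  have htr0 : 8 * t ≤ r₀ := by
    have : t ≤ min r₀ r₁ / 8 := min_le_left _ _
    linarith [min_le_left r₀ r₁]
  have htr1 : 8 * t ≤ r₁ := by
    have : t ≤ min r₀ r₁ / 8 := min_le_left _ _
    linarith [min_le_right r₀ r₁]
  have ht1 : t ≤ 1 := (min_le_right _ _).trans (min_le_left _ _)
  have htM : M * t ^ 2 < Q := by
    have h1 : t ≤ Q / (2 * (|M| + 1)) := (min_le_right _ _).trans (min_le_right _ _)
    rw [le_div_iff₀ (by positivity)] at h1
    have h2 : M * t ^ 2 ≤ |M| * t := by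
      have : t ^ 2 ≤ t := by nlinarith
      calc M * t ^ 2 ≤ |M| * t ^ 2 := by gcongr; exact le_abs_self M
        _ ≤ |M| * t := by gcongr
    nlinarith [abs_nonneg M]
  set e : En n := EuclideanSpace.single (lastIdx n) (1 : ℝ) with he
  set z₀ := y - O (t • e) with hz₀
  set β := α / t ^ 2 with hβ
  have hβ0 : 0 < β := by positivity
  have hβt : β * t ^ 2 = α := by rw [hβ]; field_simp
  have hyz : ‖y - z₀‖ = t := by
    rw [hz₀, sub_sub_cancel, O.norm_map, norm_smul, Real.norm_of_nonneg ht0.le, he]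
    simp
  refine ⟨8 * t, by positivity, htr1, fun z => p * E0 + (-p) * Real.exp (-β * ‖z - z₀‖ ^ 2),
    contDiff_gauss _ _ _ _, ?_, ?_⟩
  · simp only [hyz]
    have h1 : -β * t ^ 2 = -α := by rw [neg_mul, hβt]
    rw [h1]
    linarith
  rintro x ⟨hxΩ, hxb⟩
  rw [mem_ball, dist_eq_norm] at hxb
  set ζ := x - z₀ with hζ
  have hζlow : (t * κ) ^ 2 ≤ ‖ζ‖ ^ 2 := by
    obtain ⟨ξ, hξ, hx⟩ := hO ⟨hxΩ, by rw [mem_ball, dist_eq_norm]; linarith⟩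
    have h1 : ζ = O (ξ + t • e) := by
      rw [hζ, ← hx, hz₀, map_add]
      simp only
      abel
    rw [h1, O.norm_map, pow_two (t * κ)]
    exact cone_dist ht0.le hξ
  have hζup : ‖ζ‖ ≤ 9 * t := by
    have : ζ = (x - y) + (y - z₀) := by rw [hζ]; abel
    rw [this]
    refine (norm_add_le _ _).trans ?_
    rw [hyz]
    linarith
  have hb1 : α * κ ^ 2 ≤ β * ‖ζ‖ ^ 2 := by
    have := mul_le_mul_of_nonneg_left hζlow hβ0.le
    have h2 : β * (t * κ) ^ 2 = α * κ ^ 2 := by rw [← hβt]; ring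
    linarith
  have hb2 : β * ‖ζ‖ ^ 2 ≤ 81 * α := by
    have := mul_le_mul_of_nonneg_left (pow_le_pow_left₀ (norm_nonneg _) hζup 2) hβ0.le
    have h2 : β * (9 * t) ^ 2 = 81 * α := by rw [← hβt]; ring
    linarith
  have hζ0 : ζ ≠ 0 := by
    intro h
    rw [h, norm_zero, zero_pow two_ne_zero] at hζlow
    have : 0 < (t * κ) ^ 2 := by positivity
    linarith
  set X := Real.exp (-β * ‖ζ‖ ^ 2) with hX
  have hX0 : 0 < X := Real.exp_pos _
  have hXE : X ≤ E0 := Real.exp_le_exp.2 (by linarith)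
  have hX81 : Real.exp (-(81 * α)) ≤ X := Real.exp_le_exp.2 (by linarith)
  have hPM : M < 2 * β * (p * X) := by
    have h1 : Q ≤ 2 * α * (p * X) := by
      rw [hQ, mul_assoc (2 * α)]
      gcongr
    have h2 : M * t ^ 2 < (2 * β * (p * X)) * t ^ 2 := by
      have : (2 * β * (p * X)) * t ^ 2 = 2 * α * (p * X) := by rw [← hβt]; ring
      linarith
    exact lt_of_mul_lt_mul_right h2 (by positivity)
  have hinner : ∀ v : En n, 0 ≤ 4 * β ^ 2 * (inner ℝ ζ v) ^ 2 := fun v => by positivity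
  have hP0 : 0 < p * X := by positivity
  have hgood : ∀ b, as ≤ b → 2 * β * (p * X) * (A + 1) ≤ 4 * β ^ 2 * ‖ζ‖ ^ 2 * (p * X) * b := by
    intro b hb
    have h1 : A + 1 ≤ 2 * (β * ‖ζ‖ ^ 2) * b := by
      calc A + 1 = 2 * (α * κ ^ 2) * as := by rw [← hαA]; ring
        _ ≤ 2 * (β * ‖ζ‖ ^ 2) * b := by gcongr
    calc 2 * β * (p * X) * (A + 1) ≤ 2 * β * (p * X) * (2 * (β * ‖ζ‖ ^ 2) * b) := by gcongr
      _ = _ := by ring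
  refine ⟨?_, ?_, ?_, ?_⟩
  · have := mul_le_mul_of_nonneg_left hXE hp0.le
    linarith
  · intro hd
    rw [dist_eq_norm] at hd
    have h1 : 3 * t ≤ ‖ζ‖ := by
      have : x - y = ζ - (y - z₀) := by rw [hζ]; abel
      have h2 := norm_sub_le ζ (y - z₀)
      rw [← this, hyz] at h2
      linarith
    have h2 : X ≤ E9 := by
      refine Real.exp_le_exp.2 ?_
      have := mul_le_mul_of_nonneg_left (pow_le_pow_left₀ (by positivity) h1 2) hβ0.le
      have h3 : β * (3 * t) ^ 2 = 9 * α := by rw [← hβt]; ring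
      linarith
    have := mul_le_mul_of_nonneg_left h2 hp0.le
    linarith
  · have := Ma_le_of_bound ha (hess_herm (contDiff_gauss (p * E0) (-p) β z₀) x) (2 * β * (p * X))
      (4 * β ^ 2 * ‖ζ‖ ^ 2 * (p * X)) (fun v => by
        rw [qf_hess_gauss, ← hζ, ← hX]
        have := mul_nonneg hP0.le (hinner v)
        linarith) ζ (by
        rw [qf_hess_gauss, ← hζ, ← hX, real_inner_self_eq_norm_sq]
        apply le_of_eq
        ring) hζ0
    have h2 := hgood (a 0) (min_le_left _ _)
    linarith
  · have hneg : (fun z : En n => -(p * E0 + (-p) * Real.exp (-β * ‖z - z₀‖ ^ 2))) =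
        fun z => (-(p * E0)) + p * Real.exp (-β * ‖z - z₀‖ ^ 2) := by
      funext z; ring
    rw [hneg]
    have := le_Ma_of_bound ha (hess_herm (contDiff_gauss (-(p * E0)) p β z₀) x) (2 * β * (p * X))
      (4 * β ^ 2 * ‖ζ‖ ^ 2 * (p * X)) (fun v => by
        rw [qf_hess_gauss, ← hζ, ← hX]
        have := mul_nonneg hP0.le (hinner v)
        linarith) ζ (by
        rw [qf_hess_gauss, ← hζ, ← hX, real_inner_self_eq_norm_sq]
        apply le_of_eq
        ring) hζ0
    have h2 := hgood (a (lastIdx n)) (min_le_right _ _)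
    linarith

/-! ### Perron's method -/

theorem exists_env {X : Type*} [TopologicalSpace X] {K : Set X} {u : X → ℝ} {C : ℝ}
    (hC : ∀ x ∈ K, |u x| ≤ C) :
    ∃ U : X → ℝ, UpperSemicontinuousOn U K ∧ (∀ x ∈ K, u x ≤ U x) ∧ (∀ x ∈ K, U x ≤ C) ∧
      ∀ x ∈ K, ∀ h : X → ℝ, ContinuousAt h x → (∀ᶠ z in nhdsWithin x K, u z ≤ h z) →
        U x ≤ h x := by
  set S : X → Set ℝ := fun x => {b | ∀ᶠ z in nhdsWithin x K, u z ≤ b} with hS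
  have hlow : ∀ x ∈ K, ∀ b ∈ S x, u x ≤ b := fun x hx b hb =>
    Eventually.self_of_nhdsWithin (p := fun z => u z ≤ b) hb hx
  have hbdd : ∀ x ∈ K, BddBelow (S x) := fun x hx => ⟨u x, fun b hb => hlow x hx b hb⟩
  have hCS : ∀ x ∈ K, C ∈ S x := by
    intro x hx
    have : ∀ᶠ z in nhdsWithin x K, u z ≤ C := by
      filter_upwards [self_mem_nhdsWithin] with z hz
      exact (le_abs_self _).trans (hC z hz)
    exact this
  refine ⟨fun x => sInf (S x), ?_, ?_, ?_, ?_⟩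
  · intro x hx b hb
    obtain ⟨b', hb', hlt⟩ := exists_lt_of_csInf_lt ⟨C, hCS x hx⟩ hb
    have h1 : ∀ᶠ z in nhdsWithin x K, ∀ᶠ z' in nhdsWithin z K, u z' ≤ b' :=
      eventually_eventually_nhdsWithin.2 hb'
    filter_upwards [h1, self_mem_nhdsWithin] with z hz hzK
    exact (csInf_le (hbdd z hzK) hz).trans_lt hlt
  · intro x hx
    exact le_csInf ⟨C, hCS x hx⟩ (hlow x hx)
  · intro x hx
    exact csInf_le (hbdd x hx) (hCS x hx)
  · intro x hx h hcont hle
    refine le_of_forall_pos_le_add fun θ hθ => ?_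
    refine csInf_le (hbdd x hx) ?_
    have h1 : ∀ᶠ z in nhdsWithin x K, h z < h x + θ :=
      nhdsWithin_le_nhds (hcont.eventually (gt_mem_nhds (by linarith)))
    have : ∀ᶠ z in nhdsWithin x K, u z ≤ h x + θ := by
      filter_upwards [h1, hle] with z a1 a2
      linarith
    exact this

/-- Perron's family. -/
def SubF {n : ℕ} (a : Fin n → ℝ) (Ω : Set (En n)) (f g w : En n → ℝ) : Prop :=
  UpperSemicontinuousOn w (closure Ω) ∧ IsViscSubsol a Ω f w ∧ ∀ x ∈ frontier Ω, w x ≤ g x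

theorem hess_const_add {n : ℕ} (c : ℝ) (φ : En n → ℝ) : hess (fun z => c + φ z) = hess φ := by
  have : fderiv ℝ (fun z => c + φ z) = fderiv ℝ φ := by
    funext z
    exact fderiv_const_add c
  funext x i j
  simp only [hess, iteratedFDeriv_two_apply, this]

theorem Ma_hess_add_sqn_le {n : ℕ} {a : Fin n → ℝ} (ha : ∀ i, 0 ≤ a i) {φ : En n → ℝ}
    (hφ : ContDiff ℝ 2 φ) (k : ℝ) (x₀ x : En n) :
    Ma a (hess (fun z => φ z + k * ‖z - x₀‖ ^ 2) x) ≤ Ma a (hess φ x) + 2 * k * ∑ i, a i :=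
  Ma_le ha (hess_herm (hφ.add (contDiff_sqn k x₀)) x) (hess_herm hφ x) _ fun v =>
    (qf_hess_add hφ (contDiff_sqn k x₀) x v).le.trans (by rw [qf_hess_sqn])

theorem le_Ma_hess_add_sqn {n : ℕ} {a : Fin n → ℝ} (ha : ∀ i, 0 ≤ a i) {φ : En n → ℝ}
    (hφ : ContDiff ℝ 2 φ) (k : ℝ) (x₀ x : En n) :
    Ma a (hess φ x) + 2 * k * ∑ i, a i ≤ Ma a (hess (fun z => φ z + k * ‖z - x₀‖ ^ 2) x) := by
  have := Ma_le ha (hess_herm hφ x) (hess_herm (hφ.add (contDiff_sqn k x₀)) x) (-(2 * k)) fun v => by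
    have e := qf_hess_add hφ (contDiff_sqn k x₀) x v
    rw [qf_hess_sqn] at e
    rw [e]
    linarith
  linarith

theorem Ma_hess_const {n : ℕ} (a : Fin n → ℝ) (x : En n) :
    Ma a (hess (fun _ : En n => (0 : ℝ)) x) = 0 := by
  have h : hess (fun _ : En n => (0 : ℝ)) x = 0 := by
    funext i j
    simp [hess]
  have hq : ∀ v : En n, qf (0 : Matrix (Fin n) (Fin n) ℝ) v = 0 := fun v => by simp [qf]
  rw [h]
  unfold Ma
  refine Finset.sum_eq_zero fun i _ => ?_
  have h0 : sortedEig (0 : Matrix (Fin n) (Fin n) ℝ) i = 0 := by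
    obtain ⟨b, hb⟩ := exists_basis (Matrix.isHermitian_zero (n := Fin n) (α := ℝ))
    have h1 := hb (b i)
    rw [hq, Finset.sum_eq_single i] at h1
    · simpa using h1.symm
    · intro j _ hji
      rw [b.orthonormal.2 hji]
      simp
    · simp
  rw [h0, mul_zero]

/-- No interior maximum relative to a strict classical supersolution. -/
theorem sub_le_strict {n : ℕ} {a : Fin n → ℝ} {Ω : Set (En n)}
    (hΩb : Bornology.IsBounded Ω) {f w H : En n → ℝ} (hw : UpperSemicontinuousOn w (closure Ω))
    (hsub : IsViscSubsol a Ω f w) (hH : ContDiff ℝ 2 H) {y : En n} {r : ℝ}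
    (hlt : ∀ x ∈ Ω ∩ ball y r, Ma a (hess H x) < f x)
    (hbd : ∀ x ∈ closure Ω ∩ closedBall y r, (x ∉ Ω ∨ dist x y = r) → w x ≤ H x) :
    ∀ x ∈ closure Ω ∩ closedBall y r, w x ≤ H x := by
  intro x₁ hx₁
  have hK : IsCompact (closure Ω ∩ closedBall y r) :=
    hΩb.isCompact_closure.inter_right isClosed_closedBall
  have h1 : UpperSemicontinuousOn (fun z => w z + - H z) (closure Ω ∩ closedBall y r) := by
    have : Continuous fun z => - H z := hH.continuous.neg
    exact (hw.mono inter_subset_left).add (this.upperSemicontinuous.upperSemicontinuousOn _)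
  obtain ⟨x, hx, hmax⟩ := h1.exists_isMaxOn ⟨x₁, hx₁⟩ hK
  by_cases hc : x ∉ Ω ∨ dist x y = r
  · have e1 := hbd x hx hc
    have e2 : w x₁ + - H x₁ ≤ w x + - H x := hmax hx₁
    linarith
  · push Not at hc
    have hxb : x ∈ ball y r := lt_of_le_of_ne hx.2 hc.2
    have hloc : IsLocalMaxOn (fun z => w z - H z) Ω x := by
      filter_upwards [mem_nhdsWithin_of_mem_nhds (isOpen_ball.mem_nhds hxb), self_mem_nhdsWithin]
        with z hz1 hz2
      have e2 : w z + - H z ≤ w x + - H x := hmax ⟨subset_closure hz2, ball_subset_closedBall hz1⟩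
      linarith
    exact absurd (hsub x hc.1 H hH hloc) (not_le.2 (hlt x ⟨hc.1, hxb⟩))

theorem pasting {n : ℕ} {a : Fin n → ℝ} (ha : ∀ i, 0 ≤ a i) {Ω : Set (En n)} (hΩo : IsOpen Ω)
    {f g W ψ : En n → ℝ} (hW : SubF a Ω f g W)
    (hmax : ∀ w, SubF a Ω f g w → ∀ x ∈ closure Ω, w x ≤ W x) (hψ : ContDiff ℝ 2 ψ)
    {y : En n} {r : ℝ} (hr : 0 < r) (h1 : ∀ x ∈ Ω ∩ ball y r, f x ≤ Ma a (hess ψ x))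
    (h2 : ∀ x ∈ frontier Ω ∩ ball y r, ψ x ≤ g x)
    (h3 : ∀ x ∈ closure Ω ∩ ball y r, r / 2 ≤ dist x y → ψ x ≤ W x) :
    ∀ x ∈ closure Ω ∩ ball y r, ψ x ≤ W x := by
  classical
  set w : En n → ℝ := fun z => if z ∈ ball y r then max (W z) (ψ z) else W z with hw
  have hWw : ∀ z, W z ≤ w z := by
    intro z
    simp only [hw]
    split_ifs
    · exact le_max_left _ _
    · exact le_rfl
  have hψw : ∀ z ∈ ball y r, ψ z ≤ w z := by
    intro z hz
    simp only [hw, if_pos hz]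
    exact le_max_right _ _
  have hwF : SubF a Ω f g w := by
    refine ⟨?_, ?_, ?_⟩
    · intro x hx b hb
      by_cases hd : x ∈ ball y r
      · simp only [hw, if_pos hd, max_lt_iff] at hb
        have e1 := hW.1 x hx b hb.1
        have e2 : ∀ᶠ z in nhdsWithin x (closure Ω), ψ z < b :=
          nhdsWithin_le_nhds (hψ.continuous.continuousAt.eventually (gt_mem_nhds hb.2))
        filter_upwards [e1, e2, mem_nhdsWithin_of_mem_nhds (isOpen_ball.mem_nhds hd)] with z z1 z2 z3
        simp only [hw, if_pos z3, max_lt_iff]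
        exact ⟨z1, z2⟩
      · have hb' : W x < b := by simpa only [hw, if_neg hd] using hb
        have e1 := hW.1 x hx b hb'
        have hdx : r / 2 < dist x y := by
          rw [mem_ball, not_lt] at hd
          linarith
        have e2 : ∀ᶠ z in nhdsWithin x (closure Ω), r / 2 < dist z y :=
          nhdsWithin_le_nhds ((continuous_id.dist continuous_const).continuousAt.eventually
            (lt_mem_nhds hdx))
        filter_upwards [e1, e2, self_mem_nhdsWithin] with z z1 z2 z3
        simp only [hw]
        split_ifs with hz
        · exact max_lt z1 ((h3 z ⟨z3, hz⟩ z2.le).trans_lt z1)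
        · exact z1
    · intro x hx φ hφ hloc
      by_cases hd : w x = W x
      · refine hW.2.1 x hx φ hφ ?_
        filter_upwards [hloc] with z hz
        have := hWw z
        rw [hd] at hz
        linarith
      · have hxb : x ∈ ball y r := by
          by_contra hn
          exact hd (by simp only [hw, if_neg hn])
        have hwx : w x = ψ x := by
          simp only [hw, if_pos hxb] at hd ⊢
          rcases max_choice (W x) (ψ x) with h | h
          · exact absurd h hd
          · exact h
        refine (h1 x ⟨hx, hxb⟩).trans (Ma_hess_le_of_localMax ha hψ hφ ?_)
        have hloc' : ∀ᶠ z in nhds x, w z - φ z ≤ w x - φ x := by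
          have := hloc
          rwa [IsLocalMaxOn, IsMaxFilter, hΩo.nhdsWithin_eq hx] at this
        filter_upwards [hloc', isOpen_ball.mem_nhds hxb] with z z1 z2
        have := hψw z z2
        rw [hwx] at z1
        linarith
    · intro x hx
      simp only [hw]
      split_ifs with hz
      · exact max_le (hW.2.2 x hx) (h2 x ⟨hx, hz⟩)
      · exact hW.2.2 x hx
  intro x hx
  exact (hψw x hx.2).trans (hmax w hwF x hx.1)

theorem exists_nhd_ball {n : ℕ} {x : En n} {K : Set (En n)} {p : En n → Prop}
    (h : ∀ᶠ z in nhdsWithin x K, p z) : ∃ r > 0, ∀ z ∈ K ∩ ball x r, p z := by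
  obtain ⟨r, hr, h1⟩ := Metric.mem_nhdsWithin_iff.1 h
  exact ⟨r, hr, fun z hz => h1 ⟨hz.2, hz.1⟩⟩

set_option maxHeartbeats 1000000 in
theorem perron {n : ℕ} [NeZero n] {a : Fin n → ℝ} (ha : ClassA a)
    {Ω : Set (En n)} (hΩo : IsOpen Ω) (hΩb : Bornology.IsBounded Ω) (hcone : ExtCone Ω)
    {g : En n → ℝ} (hg : ContinuousOn g (frontier Ω))
    {f : En n → ℝ} (hf : ContinuousOn f Ω) {Kf : ℝ} (hfb : ∀ x ∈ Ω, |f x| ≤ Kf) :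
    ∃ W : En n → ℝ, SubF a Ω f g W ∧
      (∀ w, SubF a Ω f g w → ∀ x ∈ closure Ω, w x ≤ W x) ∧
      ∃ C, ∀ x ∈ closure Ω, |W x| ≤ C := by
  set A := ∑ i, a i with hA
  have hA0 : 0 < A := sum_pos_of_classA ha
  have hK : IsCompact (closure Ω) := hΩb.isCompact_closure
  obtain ⟨R', hR'⟩ := hK.isBounded.exists_norm_le
  set R := |R'| with hRdef
  have hR : ∀ x ∈ closure Ω, ‖x‖ ≤ R := fun x hx => (hR' x hx).trans (le_abs_self _)
  have hR0 : 0 ≤ R := abs_nonneg _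
  have hfrK : IsCompact (frontier Ω) := hK.of_isClosed_subset isClosed_frontier frontier_subset_closure
  obtain ⟨Cg', hCg'⟩ := hfrK.exists_bound_of_continuousOn hg
  set Cg := |Cg'| with hCgdef
  have hCg : ∀ x ∈ frontier Ω, |g x| ≤ Cg := fun x hx => (hCg' x hx).trans (le_abs_self _)
  have hCg0 : 0 ≤ Cg := abs_nonneg _
  set D := (|Kf| + 1) / (2 * A) with hD
  have hD0 : 0 < D := by positivity
  have hDA : 2 * D * A = |Kf| + 1 := by rw [hD]; field_simp
  have hfK : ∀ x ∈ Ω, -(|Kf| + 1) < f x ∧ f x < |Kf| + 1 := by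
    intro x hx
    have h1 := abs_le.1 (hfb x hx)
    have h2 := le_abs_self Kf
    constructor <;> linarith
  have hxR : ∀ x ∈ closure Ω, D * ‖x - 0‖ ^ 2 ≤ D * R ^ 2 := by
    intro x hx
    rw [sub_zero]
    have := hR x hx
    gcongr
  set B := Cg + D * R ^ 2 with hB
  have hB0 : 0 ≤ B := by positivity
  have hfront : ∀ x, x ∈ closure Ω → x ∉ Ω → x ∈ frontier Ω := by
    intro x h1 h2
    rw [hΩo.frontier_eq]
    exact ⟨h1, h2⟩
  -- the family is bounded above
  have hup : ∀ w, SubF a Ω f g w → ∀ x ∈ closure Ω, w x ≤ B := by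
    intro w hw x hx
    have hHc : ContDiff ℝ 2 fun z : En n => B + (0 + (-D) * ‖z - 0‖ ^ 2) :=
      contDiff_const.add (contDiff_const.add (contDiff_sqn (-D) 0))
    have := sub_le_strict hΩb hw.1 hw.2.1 hHc (y := 0) (r := R + 1) (by
      rintro z ⟨hz, -⟩
      rw [hess_const_add]
      have h1 := Ma_hess_add_sqn_le ha.1 (contDiff_const (c := (0 : ℝ))) (-D) (0 : En n) z
      rw [Ma_hess_const] at h1
      have := (hfK z hz).1
      linarith) (by
      rintro z ⟨hz, -⟩ hor
      rcases hor with h1 | h1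
      · have h2 := hw.2.2 z (hfront z hz h1)
        have h3 := (abs_le.1 (hCg z (hfront z hz h1))).2
        have h4 := hxR z hz
        linarith
      · rw [dist_zero_right] at h1
        have := hR z hz
        linarith) x ⟨hx, by
          rw [mem_closedBall, dist_zero_right]
          have := hR x hx
          linarith⟩
    have h5 : 0 ≤ D * ‖x - 0‖ ^ 2 := by positivity
    linarith
  -- the family is nonempty
  have hw0 : SubF a Ω f g (fun z => -B + (0 + D * ‖z - 0‖ ^ 2)) := by
    have hc : ContDiff ℝ 2 fun z : En n => -B + (0 + D * ‖z - 0‖ ^ 2) :=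
      contDiff_const.add (contDiff_const.add (contDiff_sqn D 0))
    refine ⟨hc.continuous.upperSemicontinuous.upperSemicontinuousOn _, ?_, ?_⟩
    · intro x hx φ hφ hloc
      rw [IsLocalMaxOn, hΩo.nhdsWithin_eq hx] at hloc
      have h1 := Ma_hess_le_of_localMax ha.1 hc hφ hloc
      rw [hess_const_add] at h1
      have h2 := le_Ma_hess_add_sqn ha.1 (contDiff_const (c := (0 : ℝ))) D (0 : En n) x
      rw [Ma_hess_const] at h2
      have := (hfK x hx).2
      linarith
    · intro x hx
      have h3 := (abs_le.1 (hCg x hx)).1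
      have h4 := hxR x (frontier_subset_closure hx)
      linarith
  set S : En n → Set ℝ := fun x => {b | ∃ w, SubF a Ω f g w ∧ b = w x} with hS
  have hSb : ∀ x ∈ closure Ω, BddAbove (S x) := by
    intro x hx
    refine ⟨B, ?_⟩
    rintro b ⟨w, hw, rfl⟩
    exact hup w hw x hx
  set W0 : En n → ℝ := fun x => sSup (S x) with hW0
  have hne : ∀ x, (S x).Nonempty := fun x => ⟨_, _, hw0, rfl⟩
  have hwW0 : ∀ w, SubF a Ω f g w → ∀ x ∈ closure Ω, w x ≤ W0 x := fun w hw x hx =>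
    le_csSup (hSb x hx) ⟨w, hw, rfl⟩
  have hW0le : ∀ x (b : ℝ), (∀ w, SubF a Ω f g w → w x ≤ b) → W0 x ≤ b := by
    intro x b hb
    refine csSup_le (hne x) ?_
    rintro c ⟨w, hw, rfl⟩
    exact hb w hw
  have hW0b : ∀ x ∈ closure Ω, |W0 x| ≤ B := by
    intro x hx
    rw [abs_le]
    refine ⟨?_, hW0le x B fun w hw => hup w hw x hx⟩
    have h1 := hwW0 _ hw0 x hx
    have h5 : 0 ≤ D * ‖x - 0‖ ^ 2 := by positivity
    linarith
  obtain ⟨W, hWusc, hW0W, hWB, hWenv⟩ := exists_env hW0b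
  have hwW : ∀ w, SubF a Ω f g w → ∀ x ∈ closure Ω, w x ≤ W x := fun w hw x hx =>
    (hwW0 w hw x hx).trans (hW0W x hx)
  refine ⟨W, ⟨hWusc, ?_, ?_⟩, hwW, B, fun x hx => abs_le.2 ⟨?_, hWB x hx⟩⟩
  · -- subsolution
    intro x₀ hx₀ φ hφ hloc
    by_contra hcon
    push Not at hcon
    set δ := (f x₀ - Ma a (hess φ x₀)) / (4 * A) with hδ
    have hδ0 : 0 < δ := div_pos (by linarith) (by positivity)
    have hδA : 4 * δ * A = f x₀ - Ma a (hess φ x₀) := by rw [hδ]; field_simp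
    have hgap : ∀ᶠ z in nhds x₀, Ma a (hess φ z) + 2 * δ * A < f z := by
      have h1 := (Ma_hess_continuous ha.1 hφ).continuousAt (x := x₀)
      have h2 := hf.continuousAt (hΩo.mem_nhds hx₀)
      have hpos : 0 < δ * A := by positivity
      exact (h1.add continuousAt_const).eventually_lt h2 (by simp only [Pi.add_apply]; linarith)
    have hloc' : ∀ᶠ z in nhds x₀, W z - φ z ≤ W x₀ - φ x₀ := by
      have := hloc
      rwa [IsLocalMaxOn, IsMaxFilter, hΩo.nhdsWithin_eq hx₀] at this
    obtain ⟨r', hr', hball⟩ := Metric.eventually_nhds_iff_ball.1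
      ((hgap.and hloc').and (hΩo.mem_nhds hx₀))
    set r := r' / 2 with hr
    have hr0 : 0 < r := by positivity
    have hcb : ∀ z ∈ closedBall x₀ r, (Ma a (hess φ z) + 2 * δ * A < f z ∧
        W z - φ z ≤ W x₀ - φ x₀) ∧ z ∈ Ω := fun z hz =>
      hball z (by rw [mem_closedBall] at hz; rw [mem_ball]; linarith)
    have hHc : ContDiff ℝ 2 fun z => (W x₀ - φ x₀ - δ * r ^ 2) + (φ z + δ * ‖z - x₀‖ ^ 2) :=
      contDiff_const.add (hφ.add (contDiff_sqn δ x₀))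
    have hle : ∀ w, SubF a Ω f g w → ∀ z ∈ closure Ω ∩ closedBall x₀ r,
        w z ≤ (W x₀ - φ x₀ - δ * r ^ 2) + (φ z + δ * ‖z - x₀‖ ^ 2) := by
      intro w hw
      refine sub_le_strict hΩb hw.1 hw.2.1 hHc (by
        rintro z ⟨hz, hzb⟩
        rw [hess_const_add]
        have h1 := Ma_hess_add_sqn_le ha.1 hφ δ x₀ z
        have h2 := (hcb z (ball_subset_closedBall hzb)).1.1
        linarith) (by
        rintro z ⟨hz, hzb⟩ hor
        rcases hor with h1 | h1
        · exact absurd (hcb z hzb).2 h1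
        · rw [dist_eq_norm] at h1
          rw [h1]
          have h2 := (hcb z hzb).1.2
          have h3 := hwW w hw z hz
          linarith)
    have := hWenv x₀ (subset_closure hx₀) _ hHc.continuous.continuousAt (by
      filter_upwards [self_mem_nhdsWithin, mem_nhdsWithin_of_mem_nhds (closedBall_mem_nhds x₀ hr0)]
        with z z1 z2
      exact hW0le z _ fun w hw => hle w hw z ⟨z1, z2⟩)
    rw [sub_self, norm_zero, zero_pow two_ne_zero] at this
    have h6 : 0 < δ * r ^ 2 := by positivity
    linarith
  · -- boundary values
    intro y hy
    by_contra hcon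
    push Not at hcon
    have hyc := frontier_subset_closure hy
    obtain ⟨γ, hγ, hbar⟩ := barrier ha hcone hy (L := W y - g y) (by linarith) (|Kf| + 1)
    set ε := (W y - g y - γ) / 2 with hε
    have hε0 : 0 < ε := by rw [hε]; linarith
    obtain ⟨r₂, hr₂, hgr⟩ := exists_nhd_ball ((hg y hy).eventually (gt_mem_nhds (show g y < g y + ε by linarith)))
    obtain ⟨r₃, hr₃, hWr⟩ := exists_nhd_ball (hWusc y hyc (W y + ε) (by simp only; linarith))
    obtain ⟨r, hr, hrle, T, hT, hTy, hbar⟩ := hbar (min r₂ r₃) (lt_min hr₂ hr₃)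
    have hr2 : r ≤ r₂ := hrle.trans (min_le_left _ _)
    have hr3 : r ≤ r₃ := hrle.trans (min_le_right _ _)
    have hcb : ∀ z ∈ closedBall y (3 * r / 4), z ∈ ball y r := by
      intro z hz
      rw [mem_closedBall] at hz
      rw [mem_ball]
      linarith
    have hHc : ContDiff ℝ 2 fun z => (g y + ε) + T z := contDiff_const.add hT
    have hle : ∀ w, SubF a Ω f g w → ∀ z ∈ closure Ω ∩ closedBall y (3 * r / 4),
        w z ≤ (g y + ε) + T z := by
      intro w hw
      refine sub_le_strict hΩb hw.1 hw.2.1 hHc (by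
        rintro z ⟨hz, hzb⟩
        rw [hess_const_add]
        have h1 := (hbar z ⟨subset_closure hz, hcb z (ball_subset_closedBall hzb)⟩).2.2.1
        have h2 := (hfK z hz).1
        linarith) (by
        rintro z ⟨hz, hzb⟩ hor
        have hz' := hcb z hzb
        have hb := hbar z ⟨hz, hz'⟩
        rcases hor with h1 | h1
        · have hzf := hfront z hz h1
          have h2 := hw.2.2 z hzf
          have h3 : g z < g y + ε := hgr z ⟨hzf, ball_subset_ball hr2 hz'⟩
          have h4 := hb.1
          linarith
        · have h2 := hb.2.1 (by linarith)
          have h3 : W z < W y + ε := hWr z ⟨hz, ball_subset_ball hr3 hz'⟩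
          have h4 := hwW w hw z hz
          linarith)
    have := hWenv y hyc _ hHc.continuous.continuousAt (by
      filter_upwards [self_mem_nhdsWithin,
        mem_nhdsWithin_of_mem_nhds (closedBall_mem_nhds y (show 0 < 3 * r / 4 by linarith))]
        with z z1 z2
      exact hW0le z _ fun w hw => hle w hw z ⟨z1, z2⟩)
    linarith
  · exact (abs_le.1 (hW0b x hx)).1.trans (hW0W x hx)

set_option maxHeartbeats 1000000 in
theorem perron_super {n : ℕ} [NeZero n] {a : Fin n → ℝ} (ha : ClassA a)
    {Ω : Set (En n)} (hΩo : IsOpen Ω) (hcone : ExtCone Ω)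
    {g : En n → ℝ} (hg : ContinuousOn g (frontier Ω))
    {f : En n → ℝ} (hf : ContinuousOn f Ω) {Kf : ℝ} (hfb : ∀ x ∈ Ω, |f x| ≤ Kf)
    {W : En n → ℝ} (hW : SubF a Ω f g W)
    (hmax : ∀ w, SubF a Ω f g w → ∀ x ∈ closure Ω, w x ≤ W x)
    {C : ℝ} (hC : ∀ x ∈ closure Ω, |W x| ≤ C) :
    ∃ V : En n → ℝ, UpperSemicontinuousOn V (closure Ω) ∧ (∀ x ∈ closure Ω, - W x ≤ V x) ∧
      IsViscSupersol a Ω f (fun x => - V x) ∧ ∀ x ∈ frontier Ω, V x ≤ - g x := by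
  set A := ∑ i, a i with hA
  have hA0 : 0 < A := sum_pos_of_classA ha
  obtain ⟨V, hVusc, hWV, -, hVenv⟩ := exists_env (K := closure Ω) (u := fun x => - W x) (C := C)
    (fun x hx => by rw [abs_neg]; exact hC x hx)
  refine ⟨V, hVusc, hWV, ?_, ?_⟩
  · intro x₀ hx₀ φ hφ hloc
    by_contra hcon
    push Not at hcon
    set δ := (Ma a (hess φ x₀) - f x₀) / (4 * A) with hδ
    have hδ0 : 0 < δ := div_pos (by linarith) (by positivity)
    have hδA : 4 * δ * A = Ma a (hess φ x₀) - f x₀ := by rw [hδ]; field_simp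
    have hgap : ∀ᶠ z in nhds x₀, f z < Ma a (hess φ z) + 2 * (-δ) * A := by
      have h1 := (Ma_hess_continuous ha.1 hφ).continuousAt (x := x₀)
      have h2 := hf.continuousAt (hΩo.mem_nhds hx₀)
      have hpos : 0 < δ * A := by positivity
      exact h2.eventually_lt (h1.add continuousAt_const) (by linarith)
    have hloc' : ∀ᶠ z in nhds x₀, - V x₀ - φ x₀ ≤ - V z - φ z := by
      have := hloc
      rwa [IsLocalMinOn, IsMinFilter, hΩo.nhdsWithin_eq hx₀] at this
    obtain ⟨r, hr, hball⟩ := Metric.eventually_nhds_iff_ball.1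
      ((hgap.and hloc').and (hΩo.mem_nhds hx₀))
    have hψ : ContDiff ℝ 2 fun z =>
        (- V x₀ - φ x₀ + δ * r ^ 2 / 8) + (φ z + (-δ) * ‖z - x₀‖ ^ 2) :=
      contDiff_const.add (hφ.add (contDiff_sqn (-δ) x₀))
    have hp := pasting ha.1 hΩo hW hmax hψ hr (y := x₀) (by
      rintro z ⟨hz, hzb⟩
      rw [hess_const_add]
      have h1 := le_Ma_hess_add_sqn ha.1 hφ (-δ) x₀ z
      have h2 := (hball z hzb).1.1
      linarith) (by
      rintro z ⟨hz, hzb⟩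
      rw [hΩo.frontier_eq] at hz
      exact absurd (hball z hzb).2 hz.2) (by
      rintro z ⟨hz, hzb⟩ hd
      have h1 := (hball z hzb).1.2
      have h2 := hWV z hz
      rw [dist_eq_norm] at hd
      have h3 : δ * (r / 2) ^ 2 ≤ δ * ‖z - x₀‖ ^ 2 := by gcongr
      have h4 : 0 < δ * r ^ 2 := by positivity
      linarith)
    have := hVenv x₀ (subset_closure hx₀) _ hψ.continuous.neg.continuousAt (by
      filter_upwards [self_mem_nhdsWithin, mem_nhdsWithin_of_mem_nhds (ball_mem_nhds x₀ hr)]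
        with z z1 z2
      have := hp z ⟨z1, z2⟩
      simp only [Pi.neg_apply]
      linarith)
    simp only [Pi.neg_apply] at this
    rw [sub_self, norm_zero, zero_pow two_ne_zero] at this
    have h6 : 0 < δ * r ^ 2 := by positivity
    linarith
  · intro y hy
    by_contra hcon
    push Not at hcon
    have hyc := frontier_subset_closure hy
    obtain ⟨γ, hγ, hbar⟩ := barrier ha hcone hy (L := V y + g y) (by linarith) (|Kf| + 1)
    set ε := (V y + g y - γ) / 2 with hε
    have hε0 : 0 < ε := by rw [hε]; linarith
    obtain ⟨r₂, hr₂, hgr⟩ := exists_nhd_ball ((hg y hy).eventually (lt_mem_nhds (a := g y - ε) (by linarith)))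
    obtain ⟨r₃, hr₃, hVr⟩ := exists_nhd_ball (hVusc y hyc (V y + ε) (by simp only; linarith))
    obtain ⟨r, hr, hrle, T, hT, hTy, hbar⟩ := hbar (min r₂ r₃) (lt_min hr₂ hr₃)
    have hr2 : r ≤ r₂ := hrle.trans (min_le_left _ _)
    have hr3 : r ≤ r₃ := hrle.trans (min_le_right _ _)
    have hψ : ContDiff ℝ 2 fun z => (g y - ε) + - T z := contDiff_const.add hT.neg
    have hp := pasting ha.1 hΩo hW hmax hψ hr (y := y) (by
      rintro z ⟨hz, hzb⟩
      rw [hess_const_add]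
      have h1 := (hbar z ⟨subset_closure hz, hzb⟩).2.2.2
      have h2 := (abs_le.1 (hfb z hz)).2
      have h3 := le_abs_self Kf
      linarith) (by
      rintro z ⟨hz, hzb⟩
      have h1 := (hbar z ⟨frontier_subset_closure hz, hzb⟩).1
      have h2 : g y - ε < g z := hgr z ⟨hz, ball_subset_ball hr2 hzb⟩
      linarith) (by
      rintro z ⟨hz, hzb⟩ hd
      have h1 := (hbar z ⟨hz, hzb⟩).2.1 hd
      have h2 := hWV z hz
      have h3 : V z < V y + ε := hVr z ⟨hz, ball_subset_ball hr3 hzb⟩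
      linarith)
    have := hVenv y hyc _ hψ.continuous.neg.continuousAt (by
      filter_upwards [self_mem_nhdsWithin, mem_nhdsWithin_of_mem_nhds (ball_mem_nhds y hr)]
        with z z1 z2
      have := hp z ⟨z1, z2⟩
      simp only [Pi.neg_apply]
      linarith)
    simp only [Pi.neg_apply] at this
    linarith

/-- **Existence and uniqueness for the Dirichlet problem (Theorem 3.4).** Let `Ω ⊆ ℝⁿ` be
bounded open with a uniform exterior cone condition, `g` continuous on `∂Ω`, `f`
continuous and bounded in `Ω`, and `M_a ∈ 𝒜`. Then the Dirichlet problem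
`M_a(D²u) = f` in `Ω`, `u = g` on `∂Ω`, has a unique viscosity solution `u ∈ C(Ω̄)`. -/
theorem dirichlet_existence_uniqueness (n : ℕ) [NeZero n] (a : Fin n → ℝ) (ha : ClassA a)
    (Ω : Set (En n)) (hΩo : IsOpen Ω) (hΩb : Bornology.IsBounded Ω) (hcone : ExtCone Ω)
    (g : En n → ℝ) (hg : ContinuousOn g (frontier Ω))
    (f : En n → ℝ) (hf : ContinuousOn f Ω) (hfb : ∃ K, ∀ x ∈ Ω, |f x| ≤ K) :
    ∃ u : En n → ℝ,
      (ContinuousOn u (closure Ω) ∧ IsViscSubsol a Ω f u ∧ IsViscSupersol a Ω f u ∧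
        Set.EqOn u g (frontier Ω)) ∧
      ∀ v : En n → ℝ,
        (ContinuousOn v (closure Ω) ∧ IsViscSubsol a Ω f v ∧ IsViscSupersol a Ω f v ∧
          Set.EqOn v g (frontier Ω)) →
        Set.EqOn v u (closure Ω) := by
  obtain ⟨Kf, hfb⟩ := hfb
  obtain ⟨W, hW, hmax, C, hC⟩ := perron ha hΩo hΩb hcone hg hf hfb
  obtain ⟨V, hVusc, hWV, hVsup, hVg⟩ := perron_super ha hΩo hcone hg hf hfb hW hmax hC
  have hcomp := comparison ha hΩo hΩb hf hW.1 hVusc hW.2.1 hVsup (fun x hx => by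
    linarith [hVg x hx, hW.2.2 x hx])
  have heq : ∀ x ∈ closure Ω, W x = - V x := fun x hx => by
    linarith [hcomp x hx, hWV x hx]
  have hcont : ContinuousOn W (closure Ω) := by
    rw [continuousOn_iff_lower_upperSemicontinuousOn]
    refine ⟨?_, hW.1⟩
    intro x hx b hb
    have hb' : b < W x := hb
    have h1 := hVusc x hx (-b) (by simp only; linarith [heq x hx])
    filter_upwards [h1, self_mem_nhdsWithin] with z z1 z2
    have := heq z z2
    linarith
  have hsuper : IsViscSupersol a Ω f W := by
    intro x hx φ hφ hloc
    refine hVsup x hx φ hφ ?_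
    filter_upwards [hloc, self_mem_nhdsWithin] with z z1 z2
    rw [heq z (subset_closure z2), heq x (subset_closure hx)] at z1
    exact z1
  have hbdW : Set.EqOn W g (frontier Ω) := fun x hx => by
    have h1 := hVg x hx
    have h2 := hW.2.2 x hx
    have h3 := heq x (frontier_subset_closure hx)
    linarith
  have huniq : ∀ u v : En n → ℝ, ContinuousOn u (closure Ω) → ContinuousOn v (closure Ω) →
      IsViscSubsol a Ω f u → IsViscSupersol a Ω f v → Set.EqOn u g (frontier Ω) →
      Set.EqOn v g (frontier Ω) → ∀ x ∈ closure Ω, u x ≤ v x := by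
    intro u v hu hv hus hvs hug hvg x hx
    have := comparison ha hΩo hΩb hf hu.upperSemicontinuousOn hv.neg.upperSemicontinuousOn hus
      (by simpa using hvs) (fun x hx => by
        rw [hug hx, Pi.neg_apply, hvg hx]
        linarith) x hx
    simp only [Pi.neg_apply] at this
    linarith
  refine ⟨W, ⟨hcont, hW.2.1, hsuper, hbdW⟩, ?_⟩
  rintro v ⟨hv, hvs, hvS, hvg⟩ x hx
  exact le_antisymm (huniq v W hv hcont hvs hsuper hvg hbdW x hx)
    (huniq W v hcont hv hW.2.1 hvS hbdW hvg x hx)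
end

section
/- Unilateral ABP estimates for viscosity solutions: let Ω ⊂ ℝⁿ be a bounded open set of diameter d and f continuous and bounded in Ω. There exists a constant C_n > 0 depending only on n such that: (i) if M_a is of class 𝒜_1 and u is an upper semicontinuous viscosity subsolution of M_a(D²u) = f in Ω, then sup_Ω u⁺ ≤ sup_{∂Ω} u⁺ + (C_n/a_1) d ‖f‖_{L^n(Ω)}; (ii) if M_a is of class 𝒜_n and u is a lower semicontinuous viscosity supersolution of M_a(D²u) = f in Ω, then sup_Ω u⁻ ≤ sup_{∂Ω} u⁻ + (C_n/a_n) d ‖f‖_{L^n(Ω)}. -/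
open Set Metric MeasureTheory Filter

/-- Quadratic test functions. -/
noncomputable def quadTest {n : ℕ} (w e y : En n) (k δ : ℝ) : En n → ℝ :=
  fun x => inner ℝ w x + δ * ‖x - y‖ ^ 2 - k * (inner ℝ e (x - y)) ^ 2

lemma quadTest_contDiff {n : ℕ} (w e y : En n) (k δ : ℝ) :
    ContDiff ℝ 2 (quadTest w e y k δ) := by
  unfold quadTest
  have h1 : ContDiff ℝ 2 (fun x : En n => inner ℝ w x) := contDiff_const.inner ℝ contDiff_id
  have h2 : ContDiff ℝ 2 (fun x : En n => x - y) := contDiff_id.sub contDiff_const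
  have h3 : ContDiff ℝ 2 (fun x : En n => inner ℝ e (x - y)) := contDiff_const.inner ℝ h2
  exact (h1.add (contDiff_const.mul (h2.norm_sq ℝ))).sub (contDiff_const.mul (h3.pow 2))

lemma quadTest_neg {n : ℕ} (w e y : En n) (k δ : ℝ) :
    (fun x => -(quadTest w e y k δ x)) = quadTest (-w) e y (-k) (-δ) := by
  funext x
  simp only [quadTest, inner_neg_left]
  ring

lemma quadTest_fderiv {n : ℕ} (w e y : En n) (k δ : ℝ) :
    fderiv ℝ (quadTest w e y k δ) = fun x =>
      innerSL ℝ w + (2 * δ) • innerSL ℝ (x - y) - (2 * k * inner ℝ e (x - y)) • innerSL ℝ e := by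
  funext x
  apply HasFDerivAt.fderiv
  have h0 : HasFDerivAt (fun x : En n => x - y) (ContinuousLinearMap.id ℝ (En n)) x :=
    (hasFDerivAt_id x).sub_const y
  have h1 : HasFDerivAt (fun x : En n => inner ℝ w x) (innerSL ℝ w) x := (innerSL ℝ w).hasFDerivAt
  have h2 : HasFDerivAt (fun x : En n => inner ℝ e (x - y)) (innerSL ℝ e) x :=
    ((hasFDerivAt_const e x).inner ℝ h0).congr_fderiv (by ext v; simp)
  have h3 := h0.norm_sq
  have h4 := ((h1.add (h3.const_mul δ)).sub ((h2.pow 2).const_mul k))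
  unfold quadTest
  refine h4.congr_fderiv ?_
  ext v
  simp
  ring

lemma hess_quadTest {n : ℕ} (w e y : En n) (k δ : ℝ) (x : En n) :
    hess (quadTest w e y k δ) x =
      (2 * δ) • (1 : Matrix (Fin n) (Fin n) ℝ) - (2 * k) • Matrix.vecMulVec (e : Fin n → ℝ) e := by
  ext i j
  rw [hess, iteratedFDeriv_two_apply]
  set v : En n := EuclideanSpace.single i 1 with hv
  set z : En n := EuclideanSpace.single j 1 with hz
  have hd : DifferentiableAt ℝ (fderiv ℝ (quadTest w e y k δ)) x :=
    ((quadTest_contDiff w e y k δ).fderiv_right (m := 1) (by norm_num)).differentiable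
      (by norm_num) x
  have hc := (hd.hasFDerivAt.clm_apply (hasFDerivAt_const z x)).fderiv
  have hc2 : fderiv ℝ (fderiv ℝ (quadTest w e y k δ)) x v z =
      fderiv ℝ (fun x => fderiv ℝ (quadTest w e y k δ) x z) x v := by
    rw [hc]; simp
  have h0 : HasFDerivAt (fun x : En n => x - y) (ContinuousLinearMap.id ℝ (En n)) x :=
    (hasFDerivAt_id x).sub_const y
  have h2 : ∀ b : En n, HasFDerivAt (fun x : En n => inner ℝ b (x - y)) (innerSL ℝ b) x :=
    fun b => ((hasFDerivAt_const b x).inner ℝ h0).congr_fderiv (by ext v; simp)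
  have h4 : HasFDerivAt (fun x => fderiv ℝ (quadTest w e y k δ) x z)
      ((2 * δ) • innerSL ℝ z - (2 * k * inner ℝ e z) • innerSL ℝ e) x := by
    rw [quadTest_fderiv]
    have h5 := (((h2 z).const_mul (2 * δ)).const_add (inner ℝ w z)).sub
      ((h2 e).const_mul (2 * k * inner ℝ e z))
    refine h5.congr_of_eventuallyEq (Eventually.of_forall fun x' => ?_)
    simp only [add_apply, sub_apply, smul_apply, Pi.sub_apply,
      innerSL_apply_apply, smul_eq_mul, real_inner_comm z]
    ring
  change fderiv ℝ (fderiv ℝ (quadTest w e y k δ)) x v z = _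
  rw [hc2, h4.fderiv]
  simp [Matrix.vecMulVec_apply, Matrix.one_apply, hv, hz,
    EuclideanSpace.inner_single_right, mul_assoc, eq_comm]
  exact Or.inl (mul_comm _ _)

lemma eig_quad {n : ℕ} (e : En n) (he : ‖e‖ = 1) (k δ : ℝ) (X : Matrix (Fin n) (Fin n) ℝ)
    (hX : X = (2 * δ) • (1 : Matrix (Fin n) (Fin n) ℝ)
      - (2 * k) • Matrix.vecMulVec (e : Fin n → ℝ) e) :
    ∃ hH : X.IsHermitian, (∀ i, hH.eigenvalues i = 2 * δ ∨ hH.eigenvalues i = 2 * δ - 2 * k) ∧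
      ∃ i, hH.eigenvalues i = 2 * δ - 2 * k := by
  have hH : X.IsHermitian := by
    rw [hX]
    ext i j
    simp [Matrix.vecMulVec_apply, Matrix.one_apply, mul_comm, eq_comm]
  have hee : (e : Fin n → ℝ) ⬝ᵥ (e : Fin n → ℝ) = 1 := by
    have : inner ℝ e e = (1 : ℝ) := by rw [real_inner_self_eq_norm_sq, he]; norm_num
    rw [EuclideanSpace.inner_eq_star_dotProduct] at this
    simpa using this
  have hmul : ∀ v : Fin n → ℝ, X.mulVec v = (2 * δ) • v
      - (2 * k * ((e : Fin n → ℝ) ⬝ᵥ v)) • (e : Fin n → ℝ) := by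
    intro v
    rw [hX, Matrix.sub_mulVec, Matrix.smul_mulVec, Matrix.smul_mulVec, Matrix.one_mulVec,
      Matrix.vecMulVec_mulVec]
    ext i
    simp
    ring
  refine ⟨hH, ?_, ?_⟩
  · intro i
    have h1 := hH.mulVec_eigenvectorBasis i
    rw [hmul] at h1
    set v : Fin n → ℝ := (hH.eigenvectorBasis i : Fin n → ℝ) with hv
    have hv0 : v ≠ 0 := by
      intro h0
      have := hH.eigenvectorBasis.orthonormal.ne_zero i
      apply this
      ext j
      exact congrFun h0 j
    by_cases h : (e : Fin n → ℝ) ⬝ᵥ v = 0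
    · left
      rw [h] at h1
      simp only [mul_zero, zero_smul, sub_zero] at h1
      exact (smul_left_injective ℝ hv0 h1).symm
    · right
      have h2 := congrArg (fun z => (e : Fin n → ℝ) ⬝ᵥ z) h1
      simp only [dotProduct_sub, dotProduct_smul, hee, smul_eq_mul] at h2
      have h3 : (2 * δ - 2 * k) * ((e : Fin n → ℝ) ⬝ᵥ v)
        = hH.eigenvalues i * ((e : Fin n → ℝ) ⬝ᵥ v) := by linarith
      exact (mul_right_cancel₀ h h3).symm
  · have : (2 * δ - 2 * k) ∈ spectrum ℝ X := by
      rw [← Matrix.spectrum_toLin', ← Module.End.hasEigenvalue_iff_mem_spectrum]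
      refine Module.End.hasEigenvalue_of_hasEigenvector (x := (e : Fin n → ℝ)) ⟨?_, ?_⟩
      · rw [Module.End.mem_eigenspace_iff, Matrix.toLin'_apply, hmul, hee]
        ext i
        simp
        ring
      · intro h0
        rw [h0] at hee
        simp at hee
    rw [hH.spectrum_real_eq_range_eigenvalues] at this
    obtain ⟨i, hi⟩ := this
    exact ⟨i, hi⟩

lemma Ma_quad_le {n : ℕ} [NeZero n] (a : Fin n → ℝ) (ha : ∀ i, 0 ≤ a i) (w e y x : En n)
    (he : ‖e‖ = 1) (k δ : ℝ) (hk : 0 ≤ k) :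
    Ma a (hess (quadTest w e y k δ) x) ≤ - (2 * k * a 0) + 2 * δ * ∑ i, a i := by
  obtain ⟨hH, h1, i₀, h2⟩ := eig_quad e he k δ _ (hess_quadTest w e y k δ x)
  have hs : ∀ i, sortedEig (hess (quadTest w e y k δ) x) i ≤
      2 * δ - (if i = 0 then 2 * k else 0) := by
    intro i
    rw [sortedEig, dif_pos hH]
    split_ifs with hi
    · have hm := Tuple.monotone_sort hH.eigenvalues
      have := hm (show (0 : Fin n) ≤ (Tuple.sort hH.eigenvalues).symm i₀ from Fin.zero_le _)
      simp only [Function.comp_apply, Equiv.apply_symm_apply, h2] at this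
      rw [hi]; exact this
    · rcases h1 (Tuple.sort hH.eigenvalues i) with h | h <;> rw [h] <;> linarith
  calc Ma a (hess (quadTest w e y k δ) x)
      ≤ ∑ i, a i * (2 * δ - (if i = 0 then 2 * k else 0)) :=
        Finset.sum_le_sum fun i _ => mul_le_mul_of_nonneg_left (hs i) (ha i)
    _ = _ := by
        simp only [mul_sub, Finset.sum_sub_distrib, ← Finset.sum_mul, mul_ite, mul_zero,
          Finset.sum_ite_eq', Finset.mem_univ, if_true]
        ring

lemma Ma_quad_ge {n : ℕ} [NeZero n] (a : Fin n → ℝ) (ha : ∀ i, 0 ≤ a i) (w e y x : En n)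
    (he : ‖e‖ = 1) (k δ : ℝ) (hk : 0 ≤ k) :
    2 * k * a (lastIdx n) - 2 * δ * ∑ i, a i ≤ Ma a (hess (quadTest w e y (-k) (-δ)) x) := by
  obtain ⟨hH, h1, i₀, h2⟩ := eig_quad e he (-k) (-δ) _ (hess_quadTest w e y (-k) (-δ) x)
  have hs : ∀ i, (if i = lastIdx n then 2 * k else 0) - 2 * δ ≤
      sortedEig (hess (quadTest w e y (-k) (-δ)) x) i := by
    intro i
    rw [sortedEig, dif_pos hH]
    split_ifs with hi
    · have hm := Tuple.monotone_sort hH.eigenvalues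
      have := hm (show (Tuple.sort hH.eigenvalues).symm i₀ ≤ lastIdx n from by
        rw [Fin.le_def]; simp only [lastIdx]; omega)
      simp only [Function.comp_apply, Equiv.apply_symm_apply, h2] at this
      rw [hi]; linarith
    · rcases h1 (Tuple.sort hH.eigenvalues i) with h | h <;> rw [h] <;> linarith
  calc _ = ∑ i, a i * ((if i = lastIdx n then 2 * k else 0) - 2 * δ) := by
        simp only [mul_sub, Finset.sum_sub_distrib, ← Finset.sum_mul, mul_ite, mul_zero,
          Finset.sum_ite_eq', Finset.mem_univ, if_true]
        ring
    _ ≤ _ := Finset.sum_le_sum fun i _ => mul_le_mul_of_nonneg_left (hs i) (ha i)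

/-- Abstract consequence of the viscosity inequalities used in the proof. -/
def TestProp {n : ℕ} (α S : ℝ) (Ω : Set (En n)) (f u : En n → ℝ) : Prop :=
  ∀ x ∈ Ω, ∀ (w e y : En n) (k δ : ℝ), ‖e‖ = 1 → 0 ≤ k → 0 ≤ δ →
    IsLocalMaxOn (fun z => u z - quadTest w e y k δ z) Ω x → 2 * k * α ≤ |f x| + 2 * δ * S

lemma TestProp_sub {n : ℕ} [NeZero n] {a : Fin n → ℝ} (ha : ClassA1 a) {Ω : Set (En n)}
    {f u : En n → ℝ} (h : IsViscSubsol a Ω f u) : TestProp (a 0) (∑ i, a i) Ω f u := by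
  intro x hx w e y k δ he hk hδ hm
  have h1 := h x hx _ (quadTest_contDiff w e y k δ) hm
  have h2 := Ma_quad_le a ha.1 w e y x he k δ hk
  linarith [neg_abs_le (f x)]

lemma TestProp_super {n : ℕ} [NeZero n] {a : Fin n → ℝ} (ha : ClassAn a) {Ω : Set (En n)}
    {f u : En n → ℝ} (h : IsViscSupersol a Ω f u) :
    TestProp (a (lastIdx n)) (∑ i, a i) Ω f (fun x => -(u x)) := by
  intro x hx w e y k δ he hk hδ hm
  have h1 := h x hx _ (quadTest_contDiff (-w) e y (-k) (-δ)) (by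
    have := hm.neg
    rw [← quadTest_neg]
    have he : (fun x => u x - (fun x => -quadTest w e y k δ x) x)
        = fun x => -((fun x => -u x) x - quadTest w e y k δ x) := by
      funext x; ring
    rw [he]; exact this)
  have h2 := Ma_quad_ge a ha.1 (-w) e y x he k δ hk
  linarith [le_abs_self (f x)]

lemma slope_close {n : ℕ} {α S : ℝ} {Ω : Set (En n)} {f u : En n → ℝ}
    (hu : UpperSemicontinuousOn u (closure Ω)) (hT : TestProp α S Ω f u)
    {y y' p p' : En n} (hy' : y' ∈ closure Ω)
    (hp : ∀ z ∈ closure Ω, u z ≤ u y + inner ℝ p (z - y))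
    (hp' : ∀ z ∈ closure Ω, u z ≤ u y' + inner ℝ p' (z - y'))
    {R F k δ ρ : ℝ} (hR : 0 < R) (hball : closedBall y R ⊆ Ω)
    (hF : ∀ x ∈ closedBall y R, |f x| ≤ F) (hk : 0 ≤ k) (hδ : 0 < δ) (hρ : 0 < ρ)
    (hkF : F + 2 * δ * S < 2 * k * α) (hρR : 8 * k * ρ ^ 2 < δ * R ^ 2)
    (hyy : ‖y' - y‖ ≤ ρ) : ‖p' - p‖ ≤ 8 * k * ρ := by
  by_contra hcon
  push Not at hcon
  set q := p' - p with hq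
  have hq0 : 0 < ‖q‖ := lt_of_le_of_lt (by positivity) hcon
  set e : En n := ‖q‖⁻¹ • q with he
  have hen : ‖e‖ = 1 := by
    rw [he, norm_smul, norm_inv, norm_norm, inv_mul_cancel₀ hq0.ne']
  have hqe : q = ‖q‖ • e := by
    rw [he, smul_smul, mul_inv_cancel₀ hq0.ne', one_smul]
  set φ := quadTest (p + (2 * k * ρ) • e) e y k δ with hφ
  have hφv : ∀ x, φ x - φ y = inner ℝ p (x - y) + 2 * k * ρ * inner ℝ e (x - y)
      + δ * ‖x - y‖ ^ 2 - k * (inner ℝ e (x - y)) ^ 2 := by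
    intro x
    simp only [hφ, quadTest, inner_add_left, inner_smul_left, inner_sub_right, sub_self, norm_zero]
    simp
    ring
  have hcont : Continuous φ := (quadTest_contDiff _ _ _ _ _).continuous
  have htc : Continuous fun x : En n => inner ℝ e (x - y) :=
    continuous_const.inner (continuous_id.sub continuous_const)
  set Z : Set (En n) := closedBall y R ∩ {x | -(2 * ρ) ≤ inner ℝ e (x - y)}
    ∩ {x | inner ℝ e (x - y) ≤ ρ} with hZ
  have hZc : IsCompact Z :=
    ((isCompact_closedBall y R).inter_right (isClosed_le continuous_const htc)).inter_right
      (isClosed_le htc continuous_const)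
  have hyZ : y ∈ Z := by
    refine ⟨⟨mem_closedBall_self hR.le, ?_⟩, ?_⟩ <;> simp [hρ.le]
  have hZΩ : Z ⊆ Ω := fun x hx => hball hx.1.1
  have husc : UpperSemicontinuousOn (fun x => u x - φ x) Z := by
    have h1 : UpperSemicontinuousOn u Z := hu.mono (hZΩ.trans subset_closure)
    have h2 : UpperSemicontinuousOn (fun x => -φ x) Z :=
      hcont.neg.upperSemicontinuous.upperSemicontinuousOn Z
    simpa [sub_eq_add_neg] using h1.add h2
  obtain ⟨x, hxZ, hxmax⟩ := husc.exists_isMaxOn ⟨y, hyZ⟩ hZc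
  have hxy : u y - φ y ≤ u x - φ x := hxmax hyZ
  have hxΩ : x ∈ closure Ω := subset_closure (hZΩ hxZ)
  have hux := hp x hxΩ
  have hv := hφv x
  set t : ℝ := inner ℝ e (x - y) with ht
  have ht1 : -(2 * ρ) ≤ t := hxZ.1.2
  have ht2 : t ≤ ρ := hxZ.2
  have hkey : 2 * k * ρ * t + δ * ‖x - y‖ ^ 2 - k * t ^ 2 ≤ 0 := by linarith
  have hqu : 0 ≤ k * ((t + 2 * ρ) * (4 * ρ - t)) :=
    mul_nonneg hk (mul_nonneg (by linarith) (by linarith))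
  have hn2 : 0 ≤ δ * ‖x - y‖ ^ 2 := by positivity
  -- strictness on the sphere
  have hs1 : ‖x - y‖ < R := by
    by_contra h
    push Not at h
    have : δ * R ^ 2 ≤ δ * ‖x - y‖ ^ 2 := by gcongr
    nlinarith
  have hF0 : 0 ≤ F := (abs_nonneg _).trans (hF y (mem_closedBall_self hR.le))
  -- strictness on the right face
  have hs2 : t < ρ := by
    rcases ht2.lt_or_eq with h | h
    · exact h
    exfalso
    have h3 : ‖x - y‖ ≠ 0 := by
      intro h0
      have : x - y = 0 := norm_eq_zero.1 h0
      rw [this, inner_zero_right] at ht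
      linarith
    have : 0 < δ * ‖x - y‖ ^ 2 := by positivity
    have : 0 ≤ k * ρ ^ 2 := by positivity
    rw [h] at hkey
    nlinarith
  -- strictness on the left face
  have hs3 : -(2 * ρ) < t := by
    rcases ht1.lt_or_eq with h | h
    · exact h
    exfalso
    have h1 := hp' x hxΩ
    have h2 := hp y' hy'
    have h3 : inner ℝ p' (x - y') = inner ℝ p (x - y') + ‖q‖ * inner ℝ e (x - y') := by
      have : p' = p + ‖q‖ • e := by rw [← hqe, hq]; abel
      conv_lhs => rw [this]
      simp [inner_add_left, inner_smul_left]
    have h4 : inner ℝ e (x - y') = t - inner ℝ e (y' - y) := by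
      rw [ht, ← inner_sub_right]; congr 1; abel
    have h5 : |inner ℝ e (y' - y)| ≤ ρ := by
      have := abs_real_inner_le_norm e (y' - y)
      rw [hen, one_mul] at this
      exact this.trans hyy
    have h6 : inner ℝ p (y' - y) + inner ℝ p (x - y') = inner ℝ p (x - y) := by
      rw [← inner_add_right]; congr 1; abel
    have h7 : inner ℝ e (x - y') ≤ -ρ := by
      rw [h4, ← h]; linarith [neg_abs_le (inner ℝ e (y' - y))]
    have h8 : ‖q‖ * inner ℝ e (x - y') ≤ ‖q‖ * (-ρ) := by gcongr
    have h9 : 8 * k * ρ * ρ < ‖q‖ * ρ := by gcongr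
    rw [← h] at hv
    nlinarith
  have hloc : IsLocalMaxOn (fun z => u z - φ z) Ω x := by
    have hopen : IsOpen (ball y R ∩ {x | -(2 * ρ) < inner ℝ e (x - y)}
        ∩ {x | inner ℝ e (x - y) < ρ}) :=
      (isOpen_ball.inter (isOpen_lt continuous_const htc)).inter (isOpen_lt htc continuous_const)
    have hmem : x ∈ ball y R ∩ {x | -(2 * ρ) < inner ℝ e (x - y)}
        ∩ {x | inner ℝ e (x - y) < ρ} :=
      ⟨⟨by rwa [mem_ball, dist_eq_norm], hs3⟩, hs2⟩
    have : IsLocalMax (fun z => u z - φ z) x := by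
      filter_upwards [hopen.mem_nhds hmem] with z hz
      have hz1 : -(2 * ρ) < inner ℝ e (z - y) := hz.1.2
      have hz2 : inner ℝ e (z - y) < ρ := hz.2
      have hzZ : z ∈ Z := ⟨⟨ball_subset_closedBall hz.1.1, hz1.le⟩, hz2.le⟩
      exact hxmax hzZ
    exact this.on Ω
  have := hT x (hZΩ hxZ) _ e y k δ hen hk hδ.le hloc
  have := hF x hxZ.1.1
  linarith

lemma vol_bound {n : ℕ} {α S : ℝ} (hα : 0 < α) (hS : 0 ≤ S) {Ω : Set (En n)}
    (hΩ : IsOpen Ω) (hΩb : Bornology.IsBounded Ω) {f u : En n → ℝ}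
    (hf : ContinuousOn f Ω) {B : ℝ} (hB : ∀ x ∈ Ω, |f x| ≤ B)
    (hu : UpperSemicontinuousOn u (closure Ω)) (hT : TestProp α S Ω f u)
    {s₀ : ℝ} (hs₀ : ∀ y ∈ frontier Ω, u y ≤ s₀) {x₀ : En n} (hx₀ : x₀ ∈ Ω)
    {m : ℝ} (hm : 0 ≤ m) (hmd : m * Metric.diam Ω < u x₀ - s₀) {ε : ℝ} (hε : 0 < ε) :
    volume (closedBall (0 : En n) m) ≤
      ∫⁻ x in Ω, ENNReal.ofReal ((40 / α * (|f x| + 4 * ε)) ^ n) := by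
  have hcl : IsCompact (closure Ω) := hΩb.isCompact_closure
  have hB0 : 0 ≤ B := (abs_nonneg _).trans (hB x₀ hx₀)
  set η := u x₀ - m * Metric.diam Ω with hη
  set K : Set (En n) := closure Ω ∩ u ⁻¹' Ici η with hK
  have hKc : IsCompact K := hu.isCompact_inter_preimage_Ici hcl η
  have hKΩ : K ⊆ Ω := by
    rintro x ⟨hx, hx2⟩
    by_contra hxn
    have : x ∈ frontier Ω := by
      rw [frontier, hΩ.interior_eq]; exact ⟨hx, hxn⟩
    have h1 := hs₀ x this
    have h2 : η ≤ u x := hx2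
    linarith
  -- contact points
  have hcontact : ∀ p ∈ closedBall (0 : En n) m, ∃ y ∈ K,
      ∀ z ∈ closure Ω, u z ≤ u y + inner ℝ p (z - y) := by
    intro p hp
    have husc : UpperSemicontinuousOn (fun x => u x - inner ℝ p x) (closure Ω) := by
      have h2 : UpperSemicontinuousOn (fun x : En n => -(inner ℝ p x : ℝ)) (closure Ω) :=
        (continuous_const.inner continuous_id).neg.upperSemicontinuous.upperSemicontinuousOn _
      simpa [sub_eq_add_neg] using hu.add h2
    obtain ⟨y, hy, hymax⟩ := husc.exists_isMaxOn ⟨x₀, subset_closure hx₀⟩ hcl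
    have hc : ∀ z ∈ closure Ω, u z ≤ u y + inner ℝ p (z - y) := by
      intro z hz
      have : u z - inner ℝ p z ≤ u y - inner ℝ p y := hymax hz
      rw [inner_sub_right]; linarith
    refine ⟨y, ⟨hy, ?_⟩, hc⟩
    have h1 := hc x₀ (subset_closure hx₀)
    have h2 : inner ℝ p (x₀ - y) ≤ m * Metric.diam Ω := by
      refine (real_inner_le_norm _ _).trans ?_
      have h3 : ‖x₀ - y‖ ≤ Metric.diam Ω := by
        rw [← dist_eq_norm, ← Metric.diam_closure]
        exact Metric.dist_le_diam_of_mem hcl.isBounded (subset_closure hx₀) hy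
      have h4 : ‖p‖ ≤ m := by simpa using hp
      gcongr
    change η ≤ u y
    linarith
  choose! Y hYK hYc using hcontact
  -- uniform radius
  obtain ⟨R₁, hR₁, hR₁Ω⟩ := hKc.exists_cthickening_subset_open hΩ hKΩ
  have hunif := hKc.uniformContinuousAt_of_continuousAt f
    (fun b hb => hf.continuousAt (hΩ.mem_nhds (hKΩ hb))) (Metric.dist_mem_uniformity hε)
  obtain ⟨R₂, hR₂, hR₂f⟩ := Metric.mem_uniformity_dist.1 hunif
  set R := min (R₁ / 2) (R₂ / 3) with hRdef
  have hR : 0 < R := by positivity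
  have hRΩ : ∀ b ∈ K, closedBall b (2 * R) ⊆ Ω := by
    intro b hb
    refine Subset.trans ?_ hR₁Ω
    refine Subset.trans ?_ (closedBall_subset_cthickening hb R₁)
    apply closedBall_subset_closedBall
    linarith [min_le_left (R₁ / 2) (R₂ / 3)]
  have hRf : ∀ b ∈ K, ∀ x ∈ closedBall b (2 * R), |f b - f x| ≤ ε := by
    intro b hb x hx
    have h1 : dist b x < R₂ := by
      rw [dist_comm]
      rw [mem_closedBall] at hx
      linarith [min_le_right (R₁ / 2) (R₂ / 3)]
    have := hR₂f h1 hb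
    exact le_of_lt this
  set δ := ε / (2 * (S + 1)) with hδdef
  have hδ : 0 < δ := by positivity
  have hδS : 2 * δ * S ≤ ε := by
    have : 2 * δ * (S + 1) = ε := by rw [hδdef]; field_simp
    nlinarith
  set kmax := (B + 3 * ε) / (2 * α) with hkmax
  have hkmax0 : 0 < kmax := by positivity
  obtain ⟨r, hr, hrR, hrk⟩ : ∃ r : ℝ, 0 < r ∧ 5 * r ≤ R ∧ 8 * kmax * (10 * r) ^ 2 < δ * R ^ 2 := by
    have hc : Tendsto (fun r : ℝ => 8 * kmax * (10 * r) ^ 2) (nhdsWithin 0 (Ioi 0)) (nhds 0) := by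
      have : Continuous (fun r : ℝ => 8 * kmax * (10 * r) ^ 2) := by fun_prop
      have := this.tendsto 0
      simp only [mul_zero, ne_eq, OfNat.ofNat_ne_zero, not_false_eq_true, zero_pow] at this
      exact this.mono_left nhdsWithin_le_nhds
    have h1 := hc.eventually_lt_const (show 0 < δ * R ^ 2 by positivity)
    have h2 : ∀ᶠ r in nhdsWithin (0 : ℝ) (Ioi 0), r < R / 5 :=
      (eventually_lt_nhds (show (0 : ℝ) < R / 5 by positivity)).filter_mono nhdsWithin_le_nhds
    obtain ⟨r, h1, h2, h3⟩ := (h1.and (h2.and self_mem_nhdsWithin)).exists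
    exact ⟨r, h3, by linarith, h1⟩
  obtain ⟨V, hVK, hVd, hVc⟩ := Vitali.exists_disjoint_subfamily_covering_enlargement_closedBall
    K (fun x => x) (fun _ => r) r (fun _ _ => le_rfl) 5 (by norm_num)
  have hVcount : V.Countable := by
    refine hVd.countable_of_nonempty_interior fun i _ => ?_
    exact ⟨i, ball_subset_interior_closedBall (mem_ball_self hr)⟩
  -- each piece
  have hpiece : ∀ b ∈ V, volume (closedBall (0 : En n) m ∩ Y ⁻¹' closedBall b (5 * r)) ≤
      ∫⁻ x in closedBall b r, ENNReal.ofReal ((40 / α * (|f x| + 4 * ε)) ^ n) := by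
    intro b hbV
    have hb := hVK hbV
    rcases (closedBall (0 : En n) m ∩ Y ⁻¹' closedBall b (5 * r)).eq_empty_or_nonempty with h0 | h0
    · rw [h0]; simp
    obtain ⟨p, hp, hpY⟩ := h0
    set k := (|f b| + 3 * ε) / (2 * α) with hk
    have hk0 : 0 ≤ k := by positivity
    have hkle : k ≤ kmax := by
      rw [hk, hkmax]
      gcongr
      exact hB b (hKΩ hb)
    have hsub : closedBall (0 : En n) m ∩ Y ⁻¹' closedBall b (5 * r) ⊆
        closedBall p ((80 * k) * r) := by
      rintro p' ⟨hp', hpY'⟩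
      have hsubb : closedBall (Y p) R ⊆ closedBall b (2 * R) := by
        apply closedBall_subset_closedBall'
        have : dist (Y p) b ≤ 5 * r := hpY
        linarith
      rw [mem_closedBall, dist_eq_norm]
      have := slope_close hu hT (hYK p' hp').1 (hYc p hp) (hYc p' hp')
        (R := R) (F := |f b| + ε) (k := k) (δ := δ) (ρ := 10 * r) hR
        (hsubb.trans (hRΩ b hb))
        (fun x hx => by
          have h1 := hRf b hb x (hsubb hx)
          have h2 := abs_sub_abs_le_abs_sub (f x) (f b)
          rw [abs_sub_comm] at h2
          linarith) hk0 hδ (by positivity)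
        (by
          have : 2 * k * α = |f b| + 3 * ε := by rw [hk]; field_simp
          linarith)
        (lt_of_le_of_lt (by gcongr) hrk)
        (by
          have h1 : dist (Y p) b ≤ 5 * r := hpY
          have h2 : dist (Y p') b ≤ 5 * r := hpY'
          rw [← dist_eq_norm]
          linarith [dist_triangle_right (Y p') (Y p) b])
      linarith
    calc volume (closedBall (0 : En n) m ∩ Y ⁻¹' closedBall b (5 * r))
        ≤ volume (closedBall p ((80 * k) * r)) := measure_mono hsub
      _ = ENNReal.ofReal ((80 * k) ^ n) * volume (closedBall b r) := by
          rw [Measure.addHaar_closedBall_mul volume p (by positivity) hr.le,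
            Measure.addHaar_closedBall_center volume b r]
          simp
      _ = ∫⁻ x in closedBall b r, ENNReal.ofReal ((80 * k) ^ n) := by
          rw [setLIntegral_const]
      _ ≤ _ := by
          refine setLIntegral_mono' measurableSet_closedBall fun x hx => ?_
          apply ENNReal.ofReal_le_ofReal
          apply pow_le_pow_left₀ (by positivity)
          have h1 : |f b - f x| ≤ ε :=
            hRf b hb x (closedBall_subset_closedBall (by linarith) hx)
          have h2 := abs_sub_abs_le_abs_sub (f b) (f x)
          have h3 : 80 * k = 40 / α * (|f b| + 3 * ε) := by rw [hk]; field_simp; norm_num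
          rw [h3]
          gcongr ?_ * ?_
          linarith
  calc volume (closedBall (0 : En n) m)
      ≤ volume (⋃ b ∈ V, closedBall (0 : En n) m ∩ Y ⁻¹' closedBall b (5 * r)) := by
        apply measure_mono
        intro p hp
        obtain ⟨b, hb, hbs⟩ := hVc (Y p) (hYK p hp)
        simp only [mem_iUnion]
        exact ⟨b, hb, hp, hbs (mem_closedBall_self hr.le)⟩
    _ ≤ ∑' b : V, volume (closedBall (0 : En n) m ∩ Y ⁻¹' closedBall (b : En n) (5 * r)) :=
        measure_biUnion_le _ hVcount _
    _ ≤ ∑' b : V, ∫⁻ x in closedBall (b : En n) r,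
          ENNReal.ofReal ((40 / α * (|f x| + 4 * ε)) ^ n) :=
        ENNReal.tsum_le_tsum fun b => hpiece b b.2
    _ = ∫⁻ x in ⋃ b ∈ V, closedBall (b : En n) r,
          ENNReal.ofReal ((40 / α * (|f x| + 4 * ε)) ^ n) :=
        (lintegral_biUnion hVcount (fun _ _ => measurableSet_closedBall) hVd _).symm
    _ ≤ _ := by
        apply lintegral_mono_set
        refine iUnion₂_subset fun b hb => ?_
        exact Subset.trans (closedBall_subset_closedBall (by linarith)) (hRΩ b (hVK hb))

lemma slope_bound {n : ℕ} [NeZero n] {α S : ℝ} (hα : 0 < α) (hS : 0 ≤ S) {Ω : Set (En n)}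
    (hΩ : IsOpen Ω) (hΩb : Bornology.IsBounded Ω) {f u : En n → ℝ}
    (hf : ContinuousOn f Ω) {B : ℝ} (hB : ∀ x ∈ Ω, |f x| ≤ B)
    (hu : UpperSemicontinuousOn u (closure Ω)) (hT : TestProp α S Ω f u)
    {s₀ : ℝ} (hs₀ : ∀ y ∈ frontier Ω, u y ≤ s₀) {x₀ : En n} (hx₀ : x₀ ∈ Ω)
    {m : ℝ} (hm : 0 ≤ m) (hmd : m * Metric.diam Ω < u x₀ - s₀) :
    volume.real (closedBall (0 : En n) 1) * m ^ n ≤ (40 / α) ^ n * ∫ x in Ω, |f x| ^ (n : ℝ) := by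
  have hfin : volume Ω < ⊤ := hΩb.measure_lt_top
  have hB0 : 0 ≤ B := (abs_nonneg _).trans (hB x₀ hx₀)
  have : IsFiniteMeasure (volume.restrict Ω) := ⟨by simpa using hfin⟩
  have hfm : AEStronglyMeasurable f (volume.restrict Ω) :=
    hf.aestronglyMeasurable hΩ.measurableSet
  have hmeas : ∀ ε : ℝ, AEStronglyMeasurable (fun x => (40 / α * (|f x| + 4 * ε)) ^ n)
      (volume.restrict Ω) := fun ε =>
    (((hfm.norm.add aestronglyMeasurable_const).const_mul (40 / α)).pow n)
  have hbd : ∀ ε ∈ Icc (0 : ℝ) 1, ∀ᵐ x ∂(volume.restrict Ω),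
      ‖(40 / α * (|f x| + 4 * ε)) ^ n‖ ≤ (40 / α * (B + 4)) ^ n := by
    intro ε hε
    filter_upwards [ae_restrict_mem hΩ.measurableSet] with x hx
    have h0 : 0 ≤ ε := hε.1
    have h1 := hε.2
    have h2 := hB x hx
    rw [Real.norm_of_nonneg (by positivity)]
    gcongr
    linarith
  have hev : ∀ ε : ℝ, 0 < ε → ε ≤ 1 → volume.real (closedBall (0 : En n) 1) * m ^ n ≤
      ∫ x in Ω, (40 / α * (|f x| + 4 * ε)) ^ n := by
    intro ε hε hε1
    have h := vol_bound hα hS hΩ hΩb hf hB hu hT hs₀ hx₀ hm hmd hε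
    have hint : Integrable (fun x => (40 / α * (|f x| + 4 * ε)) ^ n) (volume.restrict Ω) :=
      Integrable.of_bound (hmeas ε) _ (hbd ε ⟨hε.le, hε1⟩)
    rw [← ofReal_integral_eq_lintegral_ofReal hint
      (Eventually.of_forall fun x => by positivity)] at h
    have h2 := ENNReal.toReal_mono ENNReal.ofReal_ne_top h
    rw [ENNReal.toReal_ofReal (integral_nonneg fun x => by positivity),
      Measure.addHaar_closedBall' volume (0 : En n) hm] at h2
    rw [ENNReal.toReal_mul, ENNReal.toReal_ofReal (by positivity)] at h2
    rw [mul_comm]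
    simpa [Measure.real] using h2
  have hlim : Tendsto (fun ε : ℝ => ∫ x in Ω, (40 / α * (|f x| + 4 * ε)) ^ n)
      (nhdsWithin 0 (Ioi 0)) (nhds (∫ x in Ω, (40 / α * (|f x| + 4 * 0)) ^ n)) := by
    refine tendsto_integral_filter_of_dominated_convergence (fun _ => (40 / α * (B + 4)) ^ n)
      (Eventually.of_forall hmeas) ?_ (integrable_const _) ?_
    · filter_upwards [Ioc_mem_nhdsGT (show (0 : ℝ) < 1 by norm_num)] with ε hε
      exact hbd ε ⟨hε.1.le, hε.2⟩
    · refine Eventually.of_forall fun x => ?_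
      have : Continuous fun ε : ℝ => (40 / α * (|f x| + 4 * ε)) ^ n := by fun_prop
      exact (this.tendsto 0).mono_left nhdsWithin_le_nhds
  have hge := ge_of_tendsto hlim (by
    filter_upwards [Ioc_mem_nhdsGT (show (0 : ℝ) < 1 by norm_num)] with ε hε
    exact hev ε hε.1 hε.2)
  refine hge.trans (le_of_eq ?_)
  rw [← integral_const_mul]
  congr 1
  funext x
  rw [mul_zero, add_zero, mul_pow, Real.rpow_natCast]

lemma abp_core {n : ℕ} [NeZero n] {α S : ℝ} (hα : 0 < α) (hS : 0 ≤ S) {Ω : Set (En n)}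
    (hΩ : IsOpen Ω) (hΩb : Bornology.IsBounded Ω) {f u : En n → ℝ}
    (hf : ContinuousOn f Ω) (hB : ∃ B, ∀ x ∈ Ω, |f x| ≤ B)
    (hu : UpperSemicontinuousOn u (closure Ω)) (hT : TestProp α S Ω f u)
    (x₀ : En n) (hx₀ : x₀ ∈ Ω) :
    max (u x₀) 0 ≤ sSup ((fun y => max (u y) 0) '' frontier Ω) +
      (40 * (volume.real (closedBall (0 : En n) 1))⁻¹ ^ (1 / (n : ℝ)) / α) * Metric.diam Ω
        * lpNormOn (n : ℝ) Ω f := by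
  obtain ⟨B, hB⟩ := hB
  set ω := volume.real (closedBall (0 : En n) 1) with hω
  have hω0 : 0 < ω := by
    rw [hω, Measure.real]
    exact ENNReal.toReal_pos (measure_closedBall_pos volume _ one_pos).ne'
      (measure_closedBall_lt_top).ne
  set s₀ := sSup ((fun y => max (u y) 0) '' frontier Ω) with hs₀
  have hs₀0 : 0 ≤ s₀ := Real.sSup_nonneg (by rintro _ ⟨y, _, rfl⟩; exact le_max_right _ _)
  have hI0 : 0 ≤ ∫ x in Ω, |f x| ^ (n : ℝ) := integral_nonneg fun x => by positivity
  set N := lpNormOn (n : ℝ) Ω f with hN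
  have hN0 : 0 ≤ N := Real.rpow_nonneg hI0 _
  set T := 40 * ω⁻¹ ^ (1 / (n : ℝ)) / α * N with hTdef
  have hT0 : 0 ≤ T := by positivity
  have hn : n ≠ 0 := NeZero.ne n
  have hTn : ω * T ^ n = (40 / α) ^ n * ∫ x in Ω, |f x| ^ (n : ℝ) := by
    have h1 : (ω⁻¹ ^ (1 / (n : ℝ))) ^ n = ω⁻¹ := by
      rw [one_div]; exact Real.rpow_inv_natCast_pow (by positivity) hn
    have h2 : N ^ n = ∫ x in Ω, |f x| ^ (n : ℝ) := by
      rw [hN, lpNormOn, one_div]; exact Real.rpow_inv_natCast_pow hI0 hn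
    rw [hTdef, mul_pow, h2, div_pow, mul_pow, h1, div_pow]
    field_simp
  have hbdd : BddAbove ((fun y => max (u y) 0) '' frontier Ω) := by
    have hfc : IsCompact (frontier Ω) :=
      hΩb.isCompact_closure.of_isClosed_subset isClosed_frontier frontier_subset_closure
    obtain ⟨b, hb⟩ := (hu.mono frontier_subset_closure).bddAbove_of_isCompact hfc
    refine ⟨max b 0, ?_⟩
    rintro _ ⟨y, hy, rfl⟩
    exact max_le_max (hb ⟨y, hy, rfl⟩) le_rfl
  have hfr : ∀ y ∈ frontier Ω, u y ≤ s₀ := fun y hy =>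
    (le_max_left _ _).trans (le_csSup hbdd ⟨y, hy, rfl⟩)
  have hd0 : 0 ≤ Metric.diam Ω := Metric.diam_nonneg
  have hrw : (40 * ω⁻¹ ^ (1 / (n : ℝ)) / α) * Metric.diam Ω * N = T * Metric.diam Ω := by
    rw [hTdef]; ring
  rw [hrw]
  refine max_le ?_ (by positivity)
  by_contra hcon
  push Not at hcon
  have hlt : T * Metric.diam Ω < u x₀ - s₀ := by linarith
  obtain ⟨m, hmT, hmd⟩ : ∃ m, T < m ∧ m * Metric.diam Ω < u x₀ - s₀ := by
    have hc : Continuous fun m : ℝ => m * Metric.diam Ω := by fun_prop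
    have h1 : ∀ᶠ m in nhdsWithin T (Ioi T), m * Metric.diam Ω < u x₀ - s₀ :=
      ((hc.tendsto T).eventually_lt_const hlt).filter_mono nhdsWithin_le_nhds
    obtain ⟨m, h1, h2⟩ := (h1.and self_mem_nhdsWithin).exists
    exact ⟨m, h2, h1⟩
  have h := slope_bound hα hS hΩ hΩb hf hB hu hT hfr hx₀ (hT0.trans hmT.le) hmd
  rw [← hω, ← hTn] at h
  have : T ^ n < m ^ n := pow_lt_pow_left₀ hmT hT0 hn
  nlinarith

/-- **Unilateral ABP estimates for viscosity solutions (Theorem 4.2).** There is `C_n > 0`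
depending only on `n` such that, for `Ω ⊆ ℝⁿ` bounded open of diameter `d` and `f`
continuous and bounded: (i) if `M_a ∈ 𝒜₁` and `u` is an usc viscosity subsolution of
`M_a(D²u) = f` in `Ω`, then `sup_Ω u⁺ ≤ sup_{∂Ω} u⁺ + (C_n/a₁) d ‖f‖_{L^n(Ω)}`;
(ii) if `M_a ∈ 𝒜ₙ` and `u` is a lsc viscosity supersolution, then
`sup_Ω u⁻ ≤ sup_{∂Ω} u⁻ + (C_n/aₙ) d ‖f‖_{L^n(Ω)}`. -/
theorem abp_viscosity (n : ℕ) [NeZero n] :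
    ∃ C : ℝ, 0 < C ∧
      ∀ (a : Fin n → ℝ) (Ω : Set (En n)), IsOpen Ω → Bornology.IsBounded Ω →
      ∀ f u : En n → ℝ,
        ContinuousOn f Ω → (∃ K, ∀ x ∈ Ω, |f x| ≤ K) →
        ((ClassA1 a → UpperSemicontinuousOn u (closure Ω) → IsViscSubsol a Ω f u →
          ∀ x ∈ Ω,
            max (u x) 0 ≤ sSup ((fun y => max (u y) 0) '' frontier Ω) +
              (C / a 0) * Metric.diam Ω * lpNormOn (n : ℝ) Ω f) ∧
        (ClassAn a → LowerSemicontinuousOn u (closure Ω) → IsViscSupersol a Ω f u →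
          ∀ x ∈ Ω,
            max (-(u x)) 0 ≤ sSup ((fun y => max (-(u y)) 0) '' frontier Ω) +
              (C / a (lastIdx n)) * Metric.diam Ω * lpNormOn (n : ℝ) Ω f)) := by
  have hω0 : 0 < volume.real (closedBall (0 : En n) 1) := by
    rw [Measure.real]
    exact ENNReal.toReal_pos (measure_closedBall_pos volume _ one_pos).ne'
      (measure_closedBall_lt_top).ne
  refine ⟨40 * (volume.real (closedBall (0 : En n) 1))⁻¹ ^ (1 / (n : ℝ)), by positivity, ?_⟩
  intro a Ω hΩ hΩb f u hf hB
  refine ⟨fun ha hu hv x hx => ?_, fun ha hu hv x hx => ?_⟩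
  · exact abp_core ha.2 (Finset.sum_nonneg fun i _ => ha.1 i) hΩ hΩb hf hB hu
      (TestProp_sub ha hv) x hx
  · exact abp_core (u := fun x => -(u x)) ha.2 (Finset.sum_nonneg fun i _ => ha.1 i) hΩ hΩb hf hB
      (fun y hy c hc => by
        have h1 := hu y hy (-c) (by simp only at hc; linarith)
        filter_upwards [h1] with z hz
        linarith)
      (TestProp_super ha hv) x hx
end

section
/- Hopf boundary point lemma: let B ⊂ ℝⁿ be an open ball and x₀ ∈ ∂B, with ν the outer unit normal to B at x₀. (i) If M_a is of class 𝒜_1, u is upper semicontinuous on B̄ and a viscosity subsolution of M_a(D²u) = 0 in B, u(x₀) > u(x) for all x ∈ B, and the outer normal derivative ∂u/∂ν(x₀) = lim_{t→0⁺} (u(x₀) − u(x₀ − tν))/t exists, then ∂u/∂ν(x₀) > 0. (ii) If M_a is of class 𝒜_n, u is lower semicontinuous on B̄ and a viscosity supersolution of M_a(D²u) = 0 in B, u(x₀) < u(x) for all x ∈ B, and the outer normal derivative at x₀ exists, then ∂u/∂ν(x₀) < 0. -/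
open Set Metric MeasureTheory Filter

open scoped InnerProductSpace

/-- the quadratic barrier -/
noncomputable def barQ {n : ℕ} (e x₀ : En n) (L m : ℝ) (x : En n) : ℝ :=
  ⟪e, x - x₀⟫_ℝ + L * ⟪e, x - x₀⟫_ℝ ^ 2 - m * ‖x - x₀‖ ^ 2

lemma barQ_contDiff {n : ℕ} (e x₀ : En n) (L m : ℝ) : ContDiff ℝ 2 (barQ e x₀ L m) := by
  unfold barQ
  have h1 : ContDiff ℝ 2 (fun x : En n => ⟪e, x - x₀⟫_ℝ) :=
    contDiff_const.inner ℝ (contDiff_id.sub contDiff_const)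
  have h2 : ContDiff ℝ 2 (fun x : En n => ‖x - x₀‖ ^ 2) :=
    (contDiff_id.sub contDiff_const).norm_sq ℝ
  exact (h1.add (contDiff_const.mul (h1.pow 2))).sub (contDiff_const.mul h2)

lemma barQ_fderiv {n : ℕ} (e x₀ : En n) (L m k : ℝ) (x : En n) :
    fderiv ℝ (fun x => k * barQ e x₀ L m x) x =
      (k * (1 + 2 * L * ⟪e, x - x₀⟫_ℝ)) • innerSL ℝ e - (2 * k * m) • innerSL ℝ (x - x₀) := by
  have hs : HasFDerivAt (fun x : En n => x - x₀) (ContinuousLinearMap.id ℝ (En n)) x :=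
    (hasFDerivAt_id x).sub_const x₀
  have h1 : HasFDerivAt (fun x : En n => ⟪e, x - x₀⟫_ℝ) (innerSL ℝ e) x := by
    have := (innerSL ℝ e).hasFDerivAt.comp x hs
    exact this
  have h2 := hs.norm_sq
  have h3 := ((h1.add ((h1.pow 2).const_mul L)).sub (h2.const_mul m)).const_mul k
  refine HasFDerivAt.fderiv (h3.congr_fderiv ?_)
  ext v
  simp
  ring

/-- the Hessian of the barrier -/
noncomputable def barMat {n : ℕ} (e : En n) (L m k : ℝ) : Matrix (Fin n) (Fin n) ℝ :=
  Matrix.of fun i j => 2 * k * (L * (e i * e j) - m * (if i = j then 1 else 0))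

lemma barMat_apply {n : ℕ} (e : En n) (L m k : ℝ) (i j : Fin n) : barMat e L m k i j =
    2 * k * (L * (e i * e j) - m * (if i = j then 1 else 0)) := rfl

lemma barQ_hess {n : ℕ} (e x₀ : En n) (L m k : ℝ) (x : En n) :
    hess (fun x => k * barQ e x₀ L m x) x =
      barMat e L m k := by
  ext i j
  rw [barMat_apply]
  unfold hess
  rw [iteratedFDeriv_two_apply]
  have h0 : fderiv ℝ (fun x => k * barQ e x₀ L m x) = fun x =>
      (k * (1 + 2 * L * ⟪e, x - x₀⟫_ℝ)) • innerSL ℝ e - (2 * k * m) • innerSL ℝ (x - x₀) := by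
    ext1 x
    exact barQ_fderiv e x₀ L m k x
  have hs : HasFDerivAt (fun x : En n => x - x₀) (ContinuousLinearMap.id ℝ (En n)) x :=
    (hasFDerivAt_id x).sub_const x₀
  have h1 : HasFDerivAt (fun x : En n => ⟪e, x - x₀⟫_ℝ) (innerSL ℝ e) x := by
    have := (innerSL ℝ e).hasFDerivAt.comp x hs
    exact this
  have h4 : HasFDerivAt (fun x : En n => innerSL ℝ (x - x₀)) (innerSL ℝ : En n →L[ℝ] En n →L[ℝ] ℝ) x := by
    have := (innerSL ℝ : En n →L[ℝ] En n →L[ℝ] ℝ).hasFDerivAt.comp x hs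
    exact this
  have h5 := ((((h1.const_mul (2 * L)).const_add 1).const_mul k).smul_const (innerSL ℝ e)).sub
    (h4.const_smul (2 * k * m))
  have h6 := h5.fderiv
  rw [h0]
  change (fderiv ℝ ((fun y => (k * (1 + 2 * L * ⟪e, y - x₀⟫_ℝ)) • (innerSL ℝ) e) - (2 * k * m) • fun x => (innerSL ℝ) (x - x₀)) x) _ _ = _
  rw [h6]
  simp [EuclideanSpace.inner_single_right, EuclideanSpace.inner_single_left, Pi.single_apply]
  have h7 : (innerSL ℝ (EuclideanSpace.single i (1 : ℝ))) (EuclideanSpace.single j (1 : ℝ))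
      = if i = j then (1 : ℝ) else 0 := by
    change ⟪(EuclideanSpace.single i (1 : ℝ) : En n), EuclideanSpace.single j (1 : ℝ)⟫_ℝ = _
    rw [EuclideanSpace.inner_single_left]
    simp [Pi.single_apply]
  have h8 : ∀ t : ℝ, (if i = j then (1 : ℝ) else 0) = t → 
      k * (2 * L * e i) * e j - 2 * k * m * t
        = 2 * k * (L * (e i * e j) - m * (if i = j then 1 else 0)) := by
    rintro t rfl
    ring
  refine Eq.trans ?_ ((h8 _ h7.symm).trans ?_)
  · rfl
  · split_ifs <;> simp

lemma bar_herm {n : ℕ} (e : En n) (L m k : ℝ) :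
    Matrix.IsHermitian (barMat e L m k) := by
  ext i j
  simp only [Matrix.conjTranspose_apply, star_trivial, barMat_apply, mul_comm (e i), eq_comm]

lemma bar_mulVec {n : ℕ} (e : En n) (L m k : ℝ) (v : En n) :
    Matrix.mulVec (barMat e L m k) v = fun i => 2 * k * (L * ⟪e, v⟫_ℝ * e i - m * v i) := by
  ext i
  simp only [Matrix.mulVec, dotProduct, PiLp.inner_apply, barMat_apply]
  have : ∀ j, 2 * k * (L * (e i * e j) - m * (if i = j then 1 else 0)) * v j
      = 2 * k * L * e i * (⟪e j, v j⟫_ℝ) - 2 * k * m * (if i = j then v j else 0) := by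
    intro j
    simp only [RCLike.inner_apply, conj_trivial]
    split_ifs <;> ring
  simp only [this]
  rw [Finset.sum_sub_distrib, ← Finset.mul_sum, ← Finset.mul_sum]
  simp
  ring

lemma bar_sorted {n : ℕ} (e : En n) (he : ‖e‖ = 1) (L m k : ℝ) :
    (∃ j, sortedEig (barMat e L m k)
       j = 2 * k * (L - m)) ∧
    (∀ i, ∃ c, 0 ≤ c ∧ sortedEig (barMat e L m k)
       i = 2 * k * (L * c - m)) ∧
    Monotone (sortedEig (barMat e L m k)) := by
  have hX := bar_herm e L m k
  unfold sortedEig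
  rw [dif_pos hX]
  refine ⟨?_, ?_, ?_⟩
  · have hmem : 2 * k * (L - m) ∈ spectrum ℝ ((barMat e L m k)) := by
      rw [← Matrix.spectrum_toLin']
      apply Module.End.HasEigenvalue.mem_spectrum
      refine Module.End.hasEigenvalue_of_hasEigenvector (x := (e : Fin n → ℝ)) ⟨?_, ?_⟩
      · rw [Module.End.mem_eigenspace_iff, Matrix.toLin'_apply, bar_mulVec]
        ext i
        simp [he]
        ring
      · intro h
        have : e = 0 := by
          ext i
          exact congrFun h i
        simp [this] at he
    rw [hX.spectrum_real_eq_range_eigenvalues] at hmem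
    obtain ⟨j, hj⟩ := hmem
    refine ⟨(Tuple.sort hX.eigenvalues).symm j, ?_⟩
    simpa using hj
  · intro i
    set j := Tuple.sort hX.eigenvalues i
    have h := hX.mulVec_eigenvectorBasis j
    set v := hX.eigenvectorBasis j
    have hv : ‖v‖ = 1 := hX.eigenvectorBasis.orthonormal.1 j
    refine ⟨⟪e, v⟫_ℝ ^ 2, sq_nonneg _, ?_⟩
    rw [bar_mulVec] at h
    have hsum : ∑ i, v i * (2 * k * (L * ⟪e, v⟫_ℝ * e i - m * v i)) = ∑ i, v i * (hX.eigenvalues j * v i) := by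
      refine Finset.sum_congr rfl fun i _ => ?_
      have := congrFun h i
      simp only [Pi.smul_apply, smul_eq_mul] at this
      rw [this]
    have h1 : ∑ i, v i * v i = 1 := by
      have := real_inner_self_eq_norm_sq v
      rw [hv, PiLp.inner_apply] at this
      simpa [sq] using this
    have h2 : ∑ i, e i * v i = ⟪e, v⟫_ℝ := by
      rw [PiLp.inner_apply]
      refine Finset.sum_congr rfl fun i _ => ?_
      simp [mul_comm]
    have h3 : ∑ i, v i * (hX.eigenvalues j * v i) = hX.eigenvalues j := by
      have h5 : ∑ i, v i * (hX.eigenvalues j * v i) = hX.eigenvalues j * ∑ i, v i * v i := by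
        rw [Finset.mul_sum]
        exact Finset.sum_congr rfl fun i _ => by ring
      rw [h5, h1, mul_one]
    have h4 : ∑ i, v i * (2 * k * (L * ⟪e, v⟫_ℝ * e i - m * v i))
        = 2 * k * L * ⟪e, v⟫_ℝ * (∑ i, e i * v i) - 2 * k * m * ∑ i, v i * v i := by
      rw [Finset.mul_sum, Finset.mul_sum, ← Finset.sum_sub_distrib]
      refine Finset.sum_congr rfl fun i _ => by ring
    rw [← h3, ← hsum, h4, h1, h2]
    ring
  · exact Tuple.monotone_sort hX.eigenvalues

lemma Ma_neg {n : ℕ} [NeZero n] (a : Fin n → ℝ) (ha : ClassA1 a) (e x₀ : En n) (he : ‖e‖ = 1)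
    (L m ε : ℝ) (hL : 0 ≤ L) (hm : m * ∑ i, a i < L * a 0) (hε : 0 < ε) (x : En n) :
    Ma a (hess (fun x => (-ε) * barQ e x₀ L m x) x) < 0 := by
  rw [barQ_hess]
  obtain ⟨⟨j, hj⟩, h2, h3⟩ := bar_sorted e he L m (-ε)
  unfold Ma
  have hle : ∀ i, a i * sortedEig (barMat e L m (-ε)) i
      ≤ a i * (2 * ε * m) - (if i = 0 then a 0 * (2 * ε * L) else 0) := by
    intro i
    split_ifs with h
    · subst h
      have := (h3 (Fin.zero_le j)).trans_eq hj
      have := mul_le_mul_of_nonneg_left this (ha.1 0)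
      linarith
    · obtain ⟨c, hc, h⟩ := h2 i
      rw [h, sub_zero]
      refine mul_le_mul_of_nonneg_left ?_ (ha.1 i)
      have : 0 ≤ ε * (L * c) := by positivity
      linarith
  refine (Finset.sum_le_sum fun i _ => hle i).trans_lt ?_
  rw [Finset.sum_sub_distrib, ← Finset.sum_mul]
  simp
  nlinarith

lemma Ma_pos {n : ℕ} [NeZero n] (a : Fin n → ℝ) (ha : ClassAn a) (e x₀ : En n) (he : ‖e‖ = 1)
    (L m ε : ℝ) (hL : 0 ≤ L) (hm : m * ∑ i, a i < L * a (lastIdx n)) (hε : 0 < ε) (x : En n) :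
    0 < Ma a (hess (fun x => ε * barQ e x₀ L m x) x) := by
  rw [barQ_hess]
  obtain ⟨⟨j, hj⟩, h2, h3⟩ := bar_sorted e he L m ε
  unfold Ma
  have hle : ∀ i, (if i = lastIdx n then a (lastIdx n) * (2 * ε * L) else 0) - a i * (2 * ε * m) ≤
      a i * sortedEig (barMat e L m ε) i := by
    intro i
    split_ifs with h
    · subst h
      have hl : j ≤ lastIdx n := by
        rw [Fin.le_def]
        have := j.2
        simp only [lastIdx]
        omega
      have := hj.symm.trans_le (h3 hl)
      have := mul_le_mul_of_nonneg_left this (ha.1 (lastIdx n))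
      linarith
    · obtain ⟨c, hc, h⟩ := h2 i
      rw [h, zero_sub, ← mul_neg]
      refine mul_le_mul_of_nonneg_left ?_ (ha.1 i)
      have : 0 ≤ ε * (L * c) := by positivity
      linarith
  refine lt_of_lt_of_le ?_ (Finset.sum_le_sum fun i _ => hle i)
  rw [Finset.sum_sub_distrib, ← Finset.sum_mul]
  simp
  nlinarith

lemma hopf_core {n : ℕ} (c : En n) (r : ℝ) (hr : 0 < r) (x₀ : En n)
    (e : En n) (he : ‖e‖ = 1) (hx₀ : x₀ - c = (-r) • e) (L : ℝ) (hL : r⁻¹ ≤ L)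
    (v : En n → ℝ) (hv : UpperSemicontinuousOn v (closedBall c r))
    (hlt : ∀ x ∈ ball c r, v x < v x₀)
    (hno : ∀ ε > 0, ∀ x ∈ ball c r,
      ¬ IsLocalMaxOn (fun x => v x - (-ε) * barQ e x₀ L r⁻¹ x) (ball c r) x)
    (D : ℝ) (hD : Filter.Tendsto (fun t : ℝ => (v x₀ - v (x₀ + t • e)) / t)
            (nhdsWithin 0 (Set.Ioi (0 : ℝ))) (nhds D)) : 0 < D := by
  set m := r⁻¹ with hmdef
  have hm : 0 < m := inv_pos.2 hr
  have hmr : m * r = 1 := inv_mul_cancel₀ hr.ne'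
  have hL0 : 0 < L := hm.trans_le hL
  set δ := r / (2 * (1 + r * L)) with hδ
  have hδ0 : 0 < δ := by positivity
  have hδ1 : δ * (1 + r * L) = r / 2 := by
    rw [hδ]; field_simp
  set s : En n → ℝ := fun x => ⟪e, x - x₀⟫_ℝ with hs
  have hsc : Continuous s := by fun_prop
  set q : En n → ℝ := barQ e x₀ L m with hq
  have hqc : Continuous q := (barQ_contDiff e x₀ L m).continuous
  have hqe : ∀ x, q x = s x + L * s x ^ 2 - m * ‖x - x₀‖ ^ 2 := fun x => rfl
  set G : Set (En n) := {x | 0 ≤ s x ∧ s x ≤ δ ∧ 0 ≤ q x} with hG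
  have hGclosed : IsClosed G :=
    (isClosed_le continuous_const hsc).inter
      ((isClosed_le hsc continuous_const).inter (isClosed_le continuous_const hqc))
  have hball : ∀ x, x ∈ G → 0 < s x → x ∈ ball c r := by
    rintro x ⟨h1, h2, h3⟩ h4
    rw [mem_ball, dist_eq_norm]
    have : x - c = (x - x₀) - r • e := by
      have : x - c = (x - x₀) + (x₀ - c) := by abel
      rw [this, hx₀]; simp [sub_eq_add_neg]
    have h5 : ‖x - c‖ ^ 2 = ‖x - x₀‖ ^ 2 - 2 * r * s x + r ^ 2 := by
      rw [this, norm_sub_sq_real, real_inner_smul_right, norm_smul, he, real_inner_comm]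
      simp only [hs, Real.norm_eq_abs, mul_one, sq_abs]
      ring
    refine lt_of_pow_lt_pow_left₀ 2 hr.le ?_
    rw [h5]
    have h6 : ‖x - x₀‖ ^ 2 ≤ r * (s x + L * s x ^ 2) := by
      rw [hqe] at h3
      have : r * (m * ‖x - x₀‖ ^ 2) ≤ r * (s x + L * s x ^ 2) :=
        mul_le_mul_of_nonneg_left (by linarith) hr.le
      rwa [← mul_assoc, mul_comm r m, hmr, one_mul] at this
    have h7 : r * L * s x < r := by
      have : r * L * s x ≤ r * L * δ := mul_le_mul_of_nonneg_left h2 (by positivity)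
      nlinarith
    nlinarith
  have hx0 : ∀ x, x ∈ G → s x = 0 → x = x₀ := by
    rintro x ⟨h1, h2, h3⟩ h4
    rw [hqe, h4] at h3
    have : ‖x - x₀‖ ^ 2 ≤ 0 := by
      by_contra hcon
      push Not at hcon
      nlinarith [mul_pos hm hcon]
    have : ‖x - x₀‖ = 0 := by
      have h := le_antisymm this (sq_nonneg _)
      exact pow_eq_zero_iff (two_ne_zero) |>.1 h
    exact sub_eq_zero.1 (norm_eq_zero.1 this)
  have hx0c : x₀ ∈ closedBall c r := by
    rw [mem_closedBall, dist_eq_norm, hx₀, norm_smul, he]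
    simp [abs_of_pos hr]
  have hGsub : G ⊆ closedBall c r := by
    intro x hx
    rcases hx.1.eq_or_lt with h | h
    · rw [hx0 x hx h.symm]; exact hx0c
    · exact ball_subset_closedBall (hball x hx h)
  have hGcomp : IsCompact G := (isCompact_closedBall c r).of_isClosed_subset hGclosed hGsub
  have hvG : UpperSemicontinuousOn v G := hv.mono hGsub
  obtain ⟨M, hM, hMv⟩ : ∃ M < v x₀, ∀ x ∈ G, s x = δ → v x ≤ M := by
    have hF : IsCompact (G ∩ {x | s x = δ}) :=
      hGcomp.inter_right (isClosed_eq hsc continuous_const)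
    rcases (G ∩ {x | s x = δ}).eq_empty_or_nonempty with h | h
    · refine ⟨v x₀ - 1, by linarith, fun x hx hx' => ?_⟩
      have : x ∈ G ∩ {x | s x = δ} := ⟨hx, hx'⟩
      rw [h] at this
      exact this.elim
    · obtain ⟨p, hp, hp'⟩ := UpperSemicontinuousOn.exists_isMaxOn h hF (hvG.mono inter_subset_left)
      refine ⟨v p, hlt p (hball p hp.1 ?_), fun x hx hx' => hp' ⟨hx, hx'⟩⟩
      have : s p = δ := hp.2
      linarith
  set ε := (v x₀ - M) / (δ + L * δ ^ 2) with hε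
  have hden : 0 < δ + L * δ ^ 2 := by positivity
  have hε0 : 0 < ε := div_pos (by linarith) hden
  have hεd : ε * (δ + L * δ ^ 2) = v x₀ - M := div_mul_cancel₀ _ hden.ne'
  have hs0 : s x₀ = 0 := by simp [hs]
  have hq0 : q x₀ = 0 := by simp [hqe, hs0]
  have hx0G : x₀ ∈ G := ⟨hs0.ge, by rw [hs0]; exact hδ0.le, hq0.ge⟩
  have hkey : ∀ x ∈ G, v x + ε * q x ≤ v x₀ := by
    have hw : UpperSemicontinuousOn (fun x => v x + ε * q x) G :=
      hvG.add ((continuous_const.mul hqc).upperSemicontinuous.upperSemicontinuousOn G)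
    obtain ⟨p, hp, hpm⟩ := UpperSemicontinuousOn.exists_isMaxOn ⟨x₀, hx0G⟩ hGcomp hw
    by_contra hcon
    push Not at hcon
    obtain ⟨y, hy, hy'⟩ := hcon
    have hwp : v x₀ < v p + ε * q p := hy'.trans_le (hpm hy)
    have hsp : 0 < s p := by
      refine hp.1.lt_of_ne fun h => ?_
      rw [hx0 p hp h.symm, hq0] at hwp
      linarith
    have hpB := hball p hp hsp
    have hqp : 0 < q p := by
      refine hp.2.2.lt_of_ne fun h => ?_
      rw [← h] at hwp
      have := hlt p hpB
      linarith
    have hsd : s p < δ := by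
      refine hp.2.1.lt_of_ne fun h => ?_
      have h1 := hMv p hp h
      have h2 : q p ≤ δ + L * δ ^ 2 := by
        rw [hqe, h]
        have : 0 ≤ m * ‖p - x₀‖ ^ 2 := by positivity
        linarith
      have := mul_le_mul_of_nonneg_left h2 hε0.le
      linarith
    apply hno ε hε0 p hpB
    have hnear : ∀ᶠ x in nhds p, x ∈ G := by
      filter_upwards [hsc.continuousAt.eventually (lt_mem_nhds hsp),
        hsc.continuousAt.eventually (gt_mem_nhds hsd),
        hqc.continuousAt.eventually (lt_mem_nhds hqp)] with x h1 h2 h3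
      exact ⟨h1.le, h2.le, h3.le⟩
    refine Filter.Eventually.filter_mono nhdsWithin_le_nhds ?_
    filter_upwards [hnear] with x hx
    have : v x + ε * q x ≤ v p + ε * q p := hpm hx
    simp only [neg_mul, sub_neg_eq_add]
    exact this
  refine hε0.trans_le (ge_of_tendsto hD ?_)
  filter_upwards [Ioc_mem_nhdsGT hδ0] with t ht
  have hst : s (x₀ + t • e) = t := by
    simp [hs, real_inner_smul_right, he]
  have hqt : t ≤ q (x₀ + t • e) := by
    rw [hqe, hst]
    have : ‖x₀ + t • e - x₀‖ ^ 2 = t ^ 2 := by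
      simp [norm_smul, he]
    rw [this]
    nlinarith [sq_nonneg t]
  have := hkey (x₀ + t • e) ⟨hst.ge.trans' ht.1.le, hst.le.trans ht.2, ht.1.le.trans hqt⟩
  rw [le_div_iff₀ ht.1]
  nlinarith [mul_le_mul_of_nonneg_left hqt hε0.le]

/-- **Hopf boundary point lemma (Lemma 6.1).** Let `B = ball c r` and `x₀ ∈ ∂B`, with
`ν = (x₀ - c)/r` the outer unit normal at `x₀`. (i) If `M_a ∈ 𝒜₁`, `u` is usc on `B̄`, a
viscosity subsolution of `M_a(D²u) = 0` in `B` with `u(x₀) > u(x)` for all `x ∈ B`, and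
the outer normal derivative `D = lim_{t→0⁺} (u(x₀) − u(x₀ − tν))/t` exists, then `D > 0`.
(ii) Dually, for `M_a ∈ 𝒜ₙ` and a supersolution with a strict minimum at `x₀`, `D < 0`. -/
theorem hopf_boundary_point (n : ℕ) [NeZero n] (a : Fin n → ℝ)
    (c : En n) (r : ℝ) (hr : 0 < r) (x₀ : En n) (hx₀ : dist x₀ c = r)
    (ν : En n) (hν : ν = r⁻¹ • (x₀ - c)) :
    (ClassA1 a →
      ∀ u : En n → ℝ, UpperSemicontinuousOn u (closedBall c r) →
        IsViscSubsol a (ball c r) (fun _ => 0) u →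
        (∀ x ∈ ball c r, u x < u x₀) →
        ∀ D : ℝ,
          Filter.Tendsto (fun t => (u x₀ - u (x₀ - t • ν)) / t)
            (nhdsWithin 0 (Set.Ioi (0 : ℝ))) (nhds D) →
          0 < D) ∧
    (ClassAn a →
      ∀ u : En n → ℝ, LowerSemicontinuousOn u (closedBall c r) →
        IsViscSupersol a (ball c r) (fun _ => 0) u →
        (∀ x ∈ ball c r, u x₀ < u x) →
        ∀ D : ℝ,
          Filter.Tendsto (fun t => (u x₀ - u (x₀ - t • ν)) / t)
            (nhdsWithin 0 (Set.Ioi (0 : ℝ))) (nhds D) →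
          D < 0) := by
  have hn : ‖x₀ - c‖ = r := by rw [← dist_eq_norm, hx₀]
  have he : ‖-ν‖ = 1 := by
    rw [norm_neg, hν, norm_smul, hn, norm_inv, Real.norm_eq_abs, abs_of_pos hr,
      inv_mul_cancel₀ hr.ne']
  have hxc : x₀ - c = (-r) • (-ν) := by
    rw [neg_smul_neg, hν, smul_smul, mul_inv_cancel₀ hr.ne', one_smul]
  have hri : 0 < r⁻¹ := inv_pos.2 hr
  constructor
  · intro ha u hu hsub hlt D hD
    set L := max r⁻¹ ((r⁻¹ * ∑ i, a i + 1) / a 0) with hLdef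
    have hL : r⁻¹ ≤ L := le_max_left _ _
    have hm : r⁻¹ * ∑ i, a i < L * a 0 := by
      have := (div_le_iff₀ ha.2).1 (le_max_right r⁻¹ ((r⁻¹ * ∑ i, a i + 1) / a 0))
      linarith
    refine hopf_core c r hr x₀ (-ν) he hxc L hL u hu hlt ?_ D ?_
    · intro ε hε x hx hmax
      have h1 := hsub x hx _ (contDiff_const.mul (barQ_contDiff (-ν) x₀ L r⁻¹)) hmax
      exact absurd (Ma_neg a ha (-ν) x₀ he L r⁻¹ ε (hri.le.trans hL) hm hε x) (not_lt.2 h1)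
    · simpa [sub_eq_add_neg] using hD
  · intro ha u hu hsup hlt D hD
    set L := max r⁻¹ ((r⁻¹ * ∑ i, a i + 1) / a (lastIdx n)) with hLdef
    have hL : r⁻¹ ≤ L := le_max_left _ _
    have hm : r⁻¹ * ∑ i, a i < L * a (lastIdx n) := by
      have := (div_le_iff₀ ha.2).1 (le_max_right r⁻¹ ((r⁻¹ * ∑ i, a i + 1) / a (lastIdx n)))
      linarith
    have hu' : UpperSemicontinuousOn (fun x => - u x) (closedBall c r) := by
      intro x hx y hy
      have := hu x hx (-y) (by linarith)
      filter_upwards [this] with z hz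
      linarith
    have := hopf_core c r hr x₀ (-ν) he hxc L hL (fun x => - u x) hu'
      (fun x hx => neg_lt_neg (hlt x hx)) ?_ (-D) ?_
    · linarith
    · intro ε hε x hx hmax
      have hmin : IsLocalMinOn (fun x => u x - ε * barQ (-ν) x₀ L r⁻¹ x) (ball c r) x := by
        filter_upwards [hmax] with y hy
        linarith
      have h1 := hsup x hx _ (contDiff_const.mul (barQ_contDiff (-ν) x₀ L r⁻¹)) hmin
      exact absurd (Ma_pos a ha (-ν) x₀ he L r⁻¹ ε (hri.le.trans hL) hm hε x) (not_lt.2 h1)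
    · refine hD.neg.congr fun t => ?_
      have : x₀ + t • (-ν) = x₀ - t • ν := by rw [smul_neg, sub_eq_add_neg]
      rw [this, ← neg_div]
      congr 1
      ring
end
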